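/- The set of pairs (t,x) ∈ ℚ × ℚ satisfying x⁶ − p(t)x⁴ + q(t)x² + r(t) = 0 is exactly {(−5, 20), (−5, −20)}. -/

import Mathlib

/-- The ring `R[θ]/(θ³ - 2)`, elements `a + bθ + cθ²`. -/
@[ext] structure Cub (R : Type) where
  a : R
  b : R
  c : R

namespace Cub

section ring
variable {R : Type} [CommRing R]

instance : Zero (Cub R) := ⟨⟨0, 0, 0⟩⟩
instance : One (Cub R) := ⟨⟨1, 0, 0⟩⟩
instance : Add (Cub R) := ⟨fun x y => ⟨x.a + y.a, x.b + y.b, x.c + y.c⟩⟩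
instance : Neg (Cub R) := ⟨fun x => ⟨-x.a, -x.b, -x.c⟩⟩
instance : Sub (Cub R) := ⟨fun x y => ⟨x.a - y.a, x.b - y.b, x.c - y.c⟩⟩
instance : Mul (Cub R) := ⟨fun x y =>
  ⟨x.a * y.a + 2 * (x.b * y.c + x.c * y.b), x.a * y.b + x.b * y.a + 2 * (x.c * y.c),
    x.a * y.c + x.b * y.b + x.c * y.a⟩⟩
instance : NatCast (Cub R) := ⟨fun n => ⟨n, 0, 0⟩⟩
instance : IntCast (Cub R) := ⟨fun n => ⟨n, 0, 0⟩⟩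

@[simp] lemma zero_a : (0 : Cub R).a = 0 := rfl
@[simp] lemma zero_b : (0 : Cub R).b = 0 := rfl
@[simp] lemma zero_c : (0 : Cub R).c = 0 := rfl
@[simp] lemma one_a : (1 : Cub R).a = 1 := rfl
@[simp] lemma one_b : (1 : Cub R).b = 0 := rfl
@[simp] lemma one_c : (1 : Cub R).c = 0 := rfl
@[simp] lemma add_a (x y : Cub R) : (x + y).a = x.a + y.a := rfl
@[simp] lemma add_b (x y : Cub R) : (x + y).b = x.b + y.b := rfl
@[simp] lemma add_c (x y : Cub R) : (x + y).c = x.c + y.c := rfl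
@[simp] lemma neg_a (x : Cub R) : (-x).a = -x.a := rfl
@[simp] lemma neg_b (x : Cub R) : (-x).b = -x.b := rfl
@[simp] lemma neg_c (x : Cub R) : (-x).c = -x.c := rfl
@[simp] lemma sub_a (x y : Cub R) : (x - y).a = x.a - y.a := rfl
@[simp] lemma sub_b (x y : Cub R) : (x - y).b = x.b - y.b := rfl
@[simp] lemma sub_c (x y : Cub R) : (x - y).c = x.c - y.c := rfl
@[simp] lemma mul_a (x y : Cub R) : (x * y).a = x.a * y.a + 2 * (x.b * y.c + x.c * y.b) := rfl
@[simp] lemma mul_b (x y : Cub R) : (x * y).b = x.a * y.b + x.b * y.a + 2 * (x.c * y.c) := rfl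
@[simp] lemma mul_c (x y : Cub R) : (x * y).c = x.a * y.c + x.b * y.b + x.c * y.a := rfl
@[simp] lemma natCast_a (n : ℕ) : (n : Cub R).a = n := rfl
@[simp] lemma natCast_b (n : ℕ) : (n : Cub R).b = 0 := rfl
@[simp] lemma natCast_c (n : ℕ) : (n : Cub R).c = 0 := rfl
@[simp] lemma intCast_a (n : ℤ) : (n : Cub R).a = n := rfl
@[simp] lemma intCast_b (n : ℤ) : (n : Cub R).b = 0 := rfl
@[simp] lemma intCast_c (n : ℤ) : (n : Cub R).c = 0 := rfl

instance : CommRing (Cub R) where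
  add_assoc x y z := by ext <;> simp <;> ring
  zero_add x := by ext <;> simp
  add_zero x := by ext <;> simp
  add_comm x y := by ext <;> simp <;> ring
  left_distrib x y z := by ext <;> simp <;> ring
  right_distrib x y z := by ext <;> simp <;> ring
  zero_mul x := by ext <;> simp
  mul_zero x := by ext <;> simp
  mul_assoc x y z := by ext <;> simp <;> ring
  one_mul x := by ext <;> simp
  mul_one x := by ext <;> simp
  neg_add_cancel x := by ext <;> simp
  mul_comm x y := by ext <;> simp <;> ring
  sub_eq_add_neg x y := by ext <;> simp <;> ring
  nsmul := nsmulRec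
  zsmul := zsmulRec
  natCast_zero := by ext <;> simp
  natCast_succ n := by ext <;> simp
  intCast_ofNat n := by ext <;> simp
  intCast_negSucc n := by ext <;> simp <;> ring

@[simp] lemma ofNat_a (n : ℕ) [n.AtLeastTwo] : (ofNat(n) : Cub R).a = OfNat.ofNat n := rfl
@[simp] lemma ofNat_b (n : ℕ) [n.AtLeastTwo] : (ofNat(n) : Cub R).b = 0 := rfl
@[simp] lemma ofNat_c (n : ℕ) [n.AtLeastTwo] : (ofNat(n) : Cub R).c = 0 := rfl

/-- The norm form. -/
def N (x : Cub R) : R := x.a ^ 3 + 2 * x.b ^ 3 + 4 * x.c ^ 3 - 6 * x.a * x.b * x.c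

/-- The cofactor: `x * adj x = N x`. -/
def adj (x : Cub R) : Cub R :=
  ⟨x.a ^ 2 - 2 * x.b * x.c, 2 * x.c ^ 2 - x.a * x.b, x.b ^ 2 - x.a * x.c⟩

lemma N_mul (x y : Cub R) : N (x * y) = N x * N y := by simp [N]; ring
lemma N_one : N (1 : Cub R) = 1 := by simp [N]
lemma N_neg (x : Cub R) : N (-x) = - N x := by simp [N]; ring
lemma N_pow (x : Cub R) (n : ℕ) : N (x ^ n) = N x ^ n := by
  induction n with
  | zero => simp [N_one]
  | succ k ih => rw [pow_succ, pow_succ, N_mul, ih]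

/-- Constants. -/
def C (r : R) : Cub R := ⟨r, 0, 0⟩
lemma mul_adj (x : Cub R) : x * adj x = C (N x) := by
  ext <;> simp [N, adj, C] <;> ring

/-- The cube root of two. -/
def th : Cub R := ⟨0, 1, 0⟩
@[simp] lemma th_a : (th : Cub R).a = 0 := rfl
@[simp] lemma th_b : (th : Cub R).b = 1 := rfl
@[simp] lemma th_c : (th : Cub R).c = 0 := rfl
lemma th3 : (th : Cub R) ^ 3 = 2 := by ext <;> simp [pow_succ]

/-- base change -/
def map {S : Type} [CommRing S] (f : R →+* S) : Cub R →+* Cub S where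
  toFun x := ⟨f x.a, f x.b, f x.c⟩
  map_one' := by ext <;> simp
  map_mul' x y := by ext <;> simp [map_ofNat]
  map_zero' := by ext <;> simp
  map_add' x y := by ext <;> simp

@[simp] lemma map_a {S : Type} [CommRing S] (f : R →+* S) (x : Cub R) : (map f x).a = f x.a := rfl
@[simp] lemma map_b {S : Type} [CommRing S] (f : R →+* S) (x : Cub R) : (map f x).b = f x.b := rfl
@[simp] lemma map_c {S : Type} [CommRing S] (f : R →+* S) (x : Cub R) : (map f x).c = f x.c := rfl
@[simp] lemma map_th {S : Type} [CommRing S] (f : R →+* S) : map f th = th := by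
  ext <;> simp

end ring

lemma N_int_eq_zero : ∀ (n : ℕ) (x : Cub ℤ), x.a.natAbs + x.b.natAbs + x.c.natAbs ≤ n → N x = 0 →
    x = 0 := by
  intro n
  induction n using Nat.strong_induction_on with
  | _ n ih =>
    intro x hx h
    obtain ⟨a, b, c⟩ := x
    simp only [N] at h hx
    have ha : Even a := by
      have : Even (a ^ 3) := ⟨-(b ^ 3 + 2 * c ^ 3 - 3 * a * b * c), by linarith⟩
      exact (Int.even_pow.1 this).1
    obtain ⟨a', rfl⟩ := ha
    have hb : Even b := by
      have : Even (b ^ 3) := ⟨-(2 * a' ^ 3 + c ^ 3 - 3 * a' * b * c), by linarith⟩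
      exact (Int.even_pow.1 this).1
    obtain ⟨b', rfl⟩ := hb
    have hc : Even c := by
      have : Even (c ^ 3) := ⟨-(a' ^ 3 + 2 * b' ^ 3 - 3 * a' * b' * c), by linarith⟩
      exact (Int.even_pow.1 this).1
    obtain ⟨c', rfl⟩ := hc
    by_cases h0 : a' = 0 ∧ b' = 0 ∧ c' = 0
    · obtain ⟨rfl, rfl, rfl⟩ := h0
      rfl
    · have := ih (a'.natAbs + b'.natAbs + c'.natAbs) (by omega) ⟨a', b', c'⟩ le_rfl
        (by simp only [N]; linarith)
      simp only [Cub.ext_iff, zero_a, zero_b, zero_c] at this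
      exact absurd this h0

lemma N_int_ne {x : Cub ℤ} (h : x ≠ 0) : N x ≠ 0 := fun h0 => h (N_int_eq_zero _ x le_rfl h0)

lemma exists_int (x : Cub ℚ) : ∃ (m : ℤ) (z : Cub ℤ), m ≠ 0 ∧
    x * (m : Cub ℚ) = map (Int.castRingHom ℚ) z := by
  refine ⟨x.a.den * x.b.den * x.c.den, ⟨x.a.num * x.b.den * x.c.den, x.b.num * x.a.den * x.c.den,
    x.c.num * x.a.den * x.b.den⟩, by simp, ?_⟩
  have ha := Rat.mul_den_eq_num x.a
  have hb := Rat.mul_den_eq_num x.b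
  have hc := Rat.mul_den_eq_num x.c
  ext
  · simp only [mul_a, intCast_a, intCast_b, intCast_c, map_a, Int.coe_castRingHom]
    push_cast
    linear_combination (x.b.den * x.c.den : ℚ) * ha
  · simp only [mul_b, intCast_a, intCast_b, intCast_c, map_b, Int.coe_castRingHom]
    push_cast
    linear_combination (x.a.den * x.c.den : ℚ) * hb
  · simp only [mul_c, intCast_a, intCast_b, intCast_c, map_c, Int.coe_castRingHom]
    push_cast
    linear_combination (x.a.den * x.b.den : ℚ) * hc

lemma N_map_int (z : Cub ℤ) : N (map (Int.castRingHom ℚ) z) = ((N z : ℤ) : ℚ) := by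
  simp [N]

lemma N_rat_ne {x : Cub ℚ} (h : x ≠ 0) : N x ≠ 0 := by
  obtain ⟨m, z, hm, hz⟩ := exists_int x
  intro h0
  have h1 : N (map (Int.castRingHom ℚ) z) = 0 := by rw [← hz, N_mul, h0, zero_mul]
  rw [N_map_int] at h1
  have h2 : z = 0 := by
    by_contra h3
    exact N_int_ne h3 (by exact_mod_cast h1)
  rw [h2] at hz
  apply h
  have hm' : (m : ℚ) ≠ 0 := by exact_mod_cast hm
  simp only [Cub.ext_iff] at hz ⊢
  simp_all

instance : IsDomain (Cub ℤ) := by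
  haveI : Nontrivial (Cub ℤ) := ⟨0, 1, fun h => by simpa using congrArg Cub.a h⟩
  haveI : NoZeroDivisors (Cub ℤ) := ⟨by
    intro x y h
    by_contra! hc
    have h1 := N_mul x y
    rw [h] at h1
    have : N (0 : Cub ℤ) = 0 := by simp [N]
    rw [this] at h1
    exact mul_ne_zero (N_int_ne hc.1) (N_int_ne hc.2) h1.symm⟩
  exact NoZeroDivisors.to_isDomain _

noncomputable instance : Field (Cub ℚ) where
  inv x := C (N x)⁻¹ * adj x
  exists_pair_ne := ⟨0, 1, fun h => by simpa using congrArg Cub.a h⟩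
  mul_inv_cancel x hx := by
    have h := N_rat_ne hx
    rw [mul_left_comm, mul_adj]
    ext <;> simp [C, h]
  inv_zero := by ext <;> simp [adj, C]
  nnqsmul := _
  nnqsmul_def := fun _ _ => rfl
  qsmul := _
  qsmul_def := fun _ _ => rfl

instance : CharZero (Cub ℚ) := ⟨fun m n h => by
  have := congrArg Cub.a h
  simpa using this⟩

noncomputable instance : DecidableEq (Cub ℚ) := Classical.decEq _

/-- The embedding of `ℤ[θ]` in `ℚ(θ)`. -/
def io : Cub ℤ →+* Cub ℚ := map (Int.castRingHom ℚ)
@[simp] lemma io_a (x : Cub ℤ) : (io x).a = x.a := rfl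
@[simp] lemma io_b (x : Cub ℤ) : (io x).b = x.b := rfl
@[simp] lemma io_c (x : Cub ℤ) : (io x).c = x.c := rfl
lemma io_inj : Function.Injective io := by
  intro x y h
  simp only [Cub.ext_iff, io_a, io_b, io_c] at h ⊢
  exact_mod_cast h
@[simp] lemma io_th : io th = th := map_th _

@[simp] lemma ratCast_a (q : ℚ) : (q : Cub ℚ).a = q := by
  have h : (q : Cub ℚ) * (q.den : Cub ℚ) = (q.num : Cub ℚ) := by
    rw [← Rat.cast_natCast, ← Rat.cast_intCast, ← Rat.cast_mul, Rat.mul_den_eq_num]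
  have h1 := congrArg Cub.a h
  simp at h1
  have h2 := Rat.mul_den_eq_num q
  have h3 : (q.den : ℚ) ≠ 0 := by simp
  exact mul_right_cancel₀ h3 (h1.trans h2.symm)
@[simp] lemma ratCast_b (q : ℚ) : (q : Cub ℚ).b = 0 := by
  have h : (q : Cub ℚ) * (q.den : Cub ℚ) = (q.num : Cub ℚ) := by
    rw [← Rat.cast_natCast, ← Rat.cast_intCast, ← Rat.cast_mul, Rat.mul_den_eq_num]
  have h1 := congrArg Cub.b h
  simpa using h1
@[simp] lemma ratCast_c (q : ℚ) : (q : Cub ℚ).c = 0 := by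
  have h : (q : Cub ℚ) * (q.den : Cub ℚ) = (q.num : Cub ℚ) := by
    rw [← Rat.cast_natCast, ← Rat.cast_intCast, ← Rat.cast_mul, Rat.mul_den_eq_num]
  have h1 := congrArg Cub.c h
  simpa using h1

end Cub


namespace Cub

/-- Bounds of the norm form on a unit cell, as a decidable condition on integers. -/
def cellOk (x y z : ℤ) : Prop :=
  ∀ i ∈ [(0:ℤ), 1], ∀ j ∈ [(0:ℤ), 1], ∀ k ∈ [(0:ℤ), 1],
    (x + 1) ^ 3 + 2 * (y + 1) ^ 3 + 4 * (z + 1) ^ 3 - 6 * ((x + i) * (y + j) * (z + k)) < 216 ∧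
    -216 < x ^ 3 + 2 * y ^ 3 + 4 * z ^ 3 - 6 * ((x + i) * (y + j) * (z + k))

instance (x y z : ℤ) : Decidable (cellOk x y z) := by unfold cellOk; infer_instance

lemma cell_all : ∀ i < 6, ∀ j < 6, ∀ k < 6, ∃ p < 2, ∃ q < 2, ∃ r < 2,
    cellOk ((i : ℕ) - 6 * (p : ℕ)) ((j : ℕ) - 6 * (q : ℕ)) ((k : ℕ) - 6 * (r : ℕ)) := by
  decide +kernel

lemma cube_le {x y : ℚ} (h : x ≤ y) : x ^ 3 ≤ y ^ 3 := by
  nlinarith [mul_nonneg (sub_nonneg.2 h) (add_nonneg (sq_nonneg (x + y)) (add_nonneg (sq_nonneg x) (sq_nonneg y)))]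

lemma corner (L s a b c : ℚ) (ha : 0 ≤ a) (ha1 : a < 1) (hb : 0 ≤ b) (hb1 : b < 1) (hc : 0 ≤ c)
    (hc1 : c < 1) (x y z : ℚ)
    (h : ∀ i ∈ [(0:ℚ), 1], ∀ j ∈ [(0:ℚ), 1], ∀ k ∈ [(0:ℚ), 1],
      L < s * ((x + i) * (y + j) * (z + k))) : L < s * ((x + a) * (y + b) * (z + c)) := by
  simp only [List.mem_cons, List.not_mem_nil, or_false, forall_eq_or_imp, forall_eq] at h
  obtain ⟨⟨⟨h1, h2⟩, h3, h4⟩, ⟨h5, h6⟩, h7, h8⟩ := h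
  have a' : 0 < 1 - a := by linarith
  have b' : 0 < 1 - b := by linarith
  have c' : 0 < 1 - c := by linarith
  rw [← sub_pos] at *
  have e : s * ((x + a) * (y + b) * (z + c)) - L =
    (1 - a) * (1 - b) * (1 - c) * (s * ((x + 0) * (y + 0) * (z + 0)) - L) +
    (1 - a) * (1 - b) * c * (s * ((x + 0) * (y + 0) * (z + 1)) - L) +
    (1 - a) * b * (1 - c) * (s * ((x + 0) * (y + 1) * (z + 0)) - L) +
    (1 - a) * b * c * (s * ((x + 0) * (y + 1) * (z + 1)) - L) +
    a * (1 - b) * (1 - c) * (s * ((x + 1) * (y + 0) * (z + 0)) - L) +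
    a * (1 - b) * c * (s * ((x + 1) * (y + 0) * (z + 1)) - L) +
    a * b * (1 - c) * (s * ((x + 1) * (y + 1) * (z + 0)) - L) +
    a * b * c * (s * ((x + 1) * (y + 1) * (z + 1)) - L) := by ring
  rw [e]
  positivity

lemma cell_bound (x y z : ℤ) (h : cellOk x y z) (X : Cub ℚ) (h1 : (x : ℚ) ≤ X.a) (h1' : X.a < x + 1)
    (h2 : (y : ℚ) ≤ X.b) (h2' : X.b < y + 1) (h3 : (z : ℚ) ≤ X.c) (h3' : X.c < z + 1) :
    |N X| < 216 := by
  unfold cellOk at h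
  obtain ⟨a, b, c⟩ := X
  simp only at h1 h1' h2 h2' h3 h3'
  simp only [List.mem_cons, List.not_mem_nil, or_false, forall_eq_or_imp, forall_eq] at h
  qify at h
  obtain ⟨⟨⟨g1, g2⟩, g3, g4⟩, ⟨g5, g6⟩, g7, g8⟩ := h
  have key1 := corner (((x:ℚ) + 1) ^ 3 + 2 * ((y:ℚ) + 1) ^ 3 + 4 * ((z:ℚ) + 1) ^ 3 - 216) 6
    (a - x) (b - y) (c - z) (by linarith) (by linarith) (by linarith) (by linarith) (by linarith)
    (by linarith) x y z (by
      simp only [List.mem_cons, List.not_mem_nil, or_false, forall_eq_or_imp, forall_eq]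
      refine ⟨⟨⟨?_, ?_⟩, ?_, ?_⟩, ⟨?_, ?_⟩, ?_, ?_⟩ <;> linarith)
  have key2 := corner (-((x:ℚ) ^ 3 + 2 * (y:ℚ) ^ 3 + 4 * (z:ℚ) ^ 3 + 216)) (-6)
    (a - x) (b - y) (c - z) (by linarith) (by linarith) (by linarith) (by linarith) (by linarith)
    (by linarith) x y z (by
      simp only [List.mem_cons, List.not_mem_nil, or_false, forall_eq_or_imp, forall_eq]
      refine ⟨⟨⟨?_, ?_⟩, ?_, ?_⟩, ⟨?_, ?_⟩, ?_, ?_⟩ <;> linarith)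
  have hx := cube_le h1
  have hy := cube_le h2
  have hz := cube_le h3
  have hx' := cube_le h1'.le
  have hy' := cube_le h2'.le
  have hz' := cube_le h3'.le
  rw [show (x + (a - x)) * (y + (b - y)) * (z + (c - z)) = a * b * c by ring] at key1 key2
  rw [abs_lt]
  simp only [N]
  constructor <;> linarith

lemma floor6 (f : ℚ) : ∃ (i : ℕ), i < 6 ∧ (⌊f⌋ : ℚ) * 6 + i ≤ 6 * f ∧ 6 * f < (⌊f⌋ : ℚ) * 6 + i + 1 := by
  have h0 := Int.floor_le f
  have h1 := Int.lt_floor_add_one f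
  have h2 := Int.floor_le (6 * f - 6 * ⌊f⌋)
  have h3 := Int.lt_floor_add_one (6 * f - 6 * ⌊f⌋)
  have h4 : 0 ≤ ⌊6 * f - 6 * ⌊f⌋⌋ := Int.floor_nonneg.2 (by linarith)
  have h5 : ⌊6 * f - 6 * ⌊f⌋⌋ < 6 := Int.floor_lt.2 (by push_cast; linarith)
  obtain ⟨i, hi⟩ := Int.eq_ofNat_of_zero_le h4
  rw [hi] at h2 h3 h5
  push_cast at h2 h3
  refine ⟨i, by omega, by linarith, by linarith⟩

lemma exists_quot (X : Cub ℚ) : ∃ q : Cub ℤ, |N (X - io q)| < 1 := by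
  obtain ⟨i, hi, i1, i2⟩ := floor6 X.a
  obtain ⟨j, hj, j1, j2⟩ := floor6 X.b
  obtain ⟨k, hk, k1, k2⟩ := floor6 X.c
  obtain ⟨p, -, q, -, r, -, h⟩ := cell_all i hi j hj k hk
  refine ⟨⟨⌊X.a⌋ + p, ⌊X.b⌋ + q, ⌊X.c⌋ + r⟩, ?_⟩
  have := cell_bound _ _ _ h ((6 : Cub ℚ) * (X - io ⟨⌊X.a⌋ + p, ⌊X.b⌋ + q, ⌊X.c⌋ + r⟩))
    (by simp; linarith) (by simp; linarith) (by simp; linarith) (by simp; linarith)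
    (by simp; linarith) (by simp; linarith)
  rw [N_mul, abs_mul, show N (6 : Cub ℚ) = 216 by simp [N]; norm_num] at this
  rw [show |(216:ℚ)| = 216 by norm_num] at this
  linarith

lemma N_io (z : Cub ℤ) : N (io z) = ((N z : ℤ) : ℚ) := N_map_int z

lemma exists_div (x y : Cub ℤ) (hy : y ≠ 0) : ∃ q : Cub ℤ, (N (x - y * q)).natAbs < (N y).natAbs := by
  have hy' : io y ≠ 0 := fun h => hy (io_inj (by simpa using h))
  obtain ⟨q, hq⟩ := exists_quot (io x / io y)
  refine ⟨q, ?_⟩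
  have h1 : io (x - y * q) = io y * (io x / io y - io q) := by
    rw [map_sub, map_mul]; field_simp
  have h2 : ((N (x - y * q) : ℤ) : ℚ) = (N y : ℤ) * N (io x / io y - io q) := by
    rw [← N_io, h1, N_mul, N_io]
  have h3 : |((N (x - y * q) : ℤ) : ℚ)| < |((N y : ℤ) : ℚ)| := by
    rw [h2, abs_mul]
    have : 0 < |((N y : ℤ) : ℚ)| := abs_pos.2 (by exact_mod_cast N_int_ne hy)
    nlinarith
  have h4 : |N (x - y * q)| < |N y| := by exact_mod_cast h3
  rw [Int.abs_eq_natAbs, Int.abs_eq_natAbs] at h4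
  exact_mod_cast h4

open Classical in
noncomputable instance : EuclideanDomain (Cub ℤ) where
  toCommRing := inferInstance
  exists_pair_ne := ⟨0, 1, zero_ne_one⟩
  quotient x y := if hy : y = 0 then 0 else (exists_div x y hy).choose
  quotient_zero x := by simp
  remainder x y := x - y * (if hy : y = 0 then 0 else (exists_div x y hy).choose)
  quotient_mul_add_remainder_eq x y := by ring
  r x y := (N x).natAbs < (N y).natAbs
  r_wellFounded := (measure fun x : Cub ℤ => (N x).natAbs).wf
  remainder_lt x y hy := by
    simp only [hy, dite_false]
    exact (exists_div x y hy).choose_spec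
  mul_left_not_lt x y hy := by
    rw [N_mul, Int.natAbs_mul, not_lt]
    exact Nat.le_mul_of_pos_right _ (Int.natAbs_pos.2 (N_int_ne hy))

lemma isUnit_iff (x : Cub ℤ) : IsUnit x ↔ (N x).natAbs = 1 := by
  constructor
  · rintro h
    obtain ⟨y, hy⟩ := h.exists_right_inv
    have := congrArg N hy
    rw [N_mul, N_one] at this
    exact Int.natAbs_eq_iff.2 (by simpa using Int.isUnit_iff.1 (IsUnit.of_mul_eq_one _ this))
  · intro h
    have h1 := mul_adj x
    rcases Int.natAbs_eq_iff.1 h with h | h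
    · exact IsUnit.of_mul_eq_one (adj x) (by rw [h1, h]; rfl)
    · refine IsUnit.of_mul_eq_one (-adj x) (by rw [mul_neg, h1, h]; ext <;> simp [C])

lemma parity (p : Cub ℤ) (hp : Prime p) (m : Cub ℤ) (hm : ¬ p ∣ m) :
    ∀ (k : ℕ) (h n : Cub ℤ), (N h).natAbs ≤ k → h ≠ 0 → p * m * h ^ 2 = n ^ 2 → False := by
  intro k
  induction k with
  | zero =>
    intro h n hk h0 _
    have := N_int_ne h0
    omega
  | succ k ih =>
    intro h n hk h0 e
    obtain ⟨n', rfl⟩ : p ∣ n := hp.dvd_of_dvd_pow (n := 2) ⟨m * h ^ 2, by rw [← e]; ring⟩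
    have e1 : m * h ^ 2 = p * n' ^ 2 := mul_left_cancel₀ hp.ne_zero (by linear_combination e)
    obtain ⟨h', rfl⟩ : p ∣ h := by
      rcases hp.dvd_or_dvd (⟨_, e1⟩ : p ∣ m * h ^ 2) with h1 | h1
      · exact absurd h1 hm
      · exact hp.dvd_of_dvd_pow h1
    have e2 : p * m * h' ^ 2 = n' ^ 2 := mul_left_cancel₀ hp.ne_zero (by linear_combination e1)
    refine ih h' n' ?_ (right_ne_zero_of_mul h0) e2
    have h1 : (N p).natAbs ≠ 1 := fun h => hp.not_isUnit ((isUnit_iff p).2 h)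
    have h2 := N_int_ne hp.ne_zero
    have h3 := N_int_ne (right_ne_zero_of_mul h0)
    rw [N_mul, Int.natAbs_mul] at hk
    have : 2 ≤ (N p).natAbs := by omega
    have : 1 ≤ (N h').natAbs := by omega
    nlinarith

lemma exists_sqfree : ∀ (k : ℕ) (g : Cub ℤ), (N g).natAbs ≤ k → g ≠ 0 →
    ∃ S h, Squarefree S ∧ g = S * h ^ 2 := by
  intro k
  induction k with
  | zero =>
    intro g hk h0
    have := N_int_ne h0
    omega
  | succ k ih =>
    intro g hk h0
    by_cases hs : Squarefree g
    · exact ⟨g, 1, hs, by ring⟩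
    · unfold Squarefree at hs
      push Not at hs
      obtain ⟨x, ⟨g', rfl⟩, hx⟩ := hs
      have hx0 : x ≠ 0 := by rintro rfl; simp at h0
      have hg0 : g' ≠ 0 := right_ne_zero_of_mul h0
      obtain ⟨S, h, hS, e⟩ := ih g' (by
        rw [N_mul, N_mul, Int.natAbs_mul, Int.natAbs_mul] at hk
        have h1 : (N x).natAbs ≠ 1 := fun h => hx ((isUnit_iff x).2 h)
        have h2 := N_int_ne hx0
        have h3 := N_int_ne hg0
        have h4 : 2 ≤ (N x).natAbs := by omega
        have h5 : 1 ≤ (N g').natAbs := by omega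
        have h6 := Nat.mul_le_mul h4 h4
        nlinarith [Nat.mul_le_mul h6 (le_refl (N g').natAbs)]) hg0
      exact ⟨S, x * h, hS, by rw [e]; ring⟩

lemma sqfree_prime {S p : Cub ℤ} (hS : Squarefree S) (hp : Prime p) :
    ∃ j < 2, ∃ S', S = p ^ j * S' ∧ ¬ p ∣ S' ∧ Squarefree S' := by
  by_cases h : p ∣ S
  · obtain ⟨S', rfl⟩ := h
    refine ⟨1, by norm_num, S', by ring, ?_, hS.of_mul_right⟩
    rintro ⟨T, rfl⟩
    exact hp.not_isUnit (hS p ⟨T, by ring⟩)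
  · exact ⟨0, by norm_num, S, by ring, h, hS⟩

/-- The basic factorisation lemma. -/
lemma factor_sq (p1 p2 : Cub ℤ) (hp1 : Prime p1) (hp2 : Prime p2) (g f n : Cub ℤ) (hn : n ≠ 0)
    (e : g * f = n ^ 2)
    (H : ∀ p, Prime p → p ∣ g → p ∣ f → Associated p1 p ∨ Associated p2 p) :
    ∃ u h : Cub ℤ, ∃ j < 2, ∃ k < 2, IsUnit u ∧ g = u * (p1 ^ j * p2 ^ k) * h ^ 2 := by
  have hg0 : g ≠ 0 := by
    rintro rfl
    rw [zero_mul] at e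
    exact hn (by simpa using e.symm)
  obtain ⟨S, h, hS, rfl⟩ := exists_sqfree _ g le_rfl hg0
  have hh : h ≠ 0 := by rintro rfl; simp at hg0
  have hd : ∀ p, Prime p → p ∣ S → p ∣ f := by
    intro p hp hpS
    by_contra hpf
    obtain ⟨S', rfl⟩ := hpS
    refine parity p hp (S' * f) ?_ _ h n le_rfl hh (by rw [← e]; ring)
    intro h1
    rcases hp.dvd_or_dvd h1 with h1 | h1
    · obtain ⟨T, rfl⟩ := h1
      exact hp.not_isUnit (hS p ⟨T, by ring⟩)
    · exact hpf h1
  obtain ⟨j, hj, S1, rfl, hS1, hS1s⟩ := sqfree_prime hS hp1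
  obtain ⟨k, hk, S2, rfl, hS2, hS2s⟩ := sqfree_prime hS1s hp2
  refine ⟨S2, h, j, hj, k, hk, ?_, by ring⟩
  by_contra hu
  obtain ⟨p, hp, hpS⟩ := WfDvdMonoid.exists_irreducible_factor hu (by
    rintro rfl; simp at hg0)
  have hpp := hp.prime
  have h1 : p ∣ p1 ^ j * (p2 ^ k * S2) := (hpS.mul_left _).mul_left _
  rcases H p hpp (h1.mul_right _) (hd p hpp h1) with h2 | h2
  · exact hS1 ((h2.dvd.trans hpS).mul_left _)
  · exact hS2 (h2.dvd.trans hpS)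

end Cub


namespace Cub

/-- the real cube root of two -/
noncomputable def tt : ℝ := (2 : ℝ) ^ ((1 : ℝ) / 3)
lemma tt3 : tt ^ 3 = 2 := by
  rw [tt, ← Real.rpow_natCast, ← Real.rpow_mul (by norm_num)]; norm_num
lemma tt_pos : 0 < tt := Real.rpow_pos_of_pos (by norm_num) _
lemma tt_lo : 1.25 < tt := by
  by_contra! h
  have := pow_le_pow_left₀ tt_pos.le h 3
  rw [tt3] at this
  norm_num at this
lemma tt_hi : tt < 1.26 := by
  by_contra! h
  have := pow_le_pow_left₀ (by norm_num) h 3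
  rw [tt3] at this
  norm_num at this

/-- the real embedding -/
noncomputable def phi : Cub ℤ →+* ℝ where
  toFun x := x.a + x.b * tt + x.c * tt ^ 2
  map_one' := by simp
  map_zero' := by simp
  map_add' x y := by simp; ring
  map_mul' x y := by
    simp only [mul_a, mul_b, mul_c]
    push_cast
    linear_combination (-(x.b : ℝ) * y.c - x.c * y.b - x.c * y.c * tt) * tt3

lemma phi_apply (x : Cub ℤ) : phi x = x.a + x.b * tt + x.c * tt ^ 2 := rfl

/-- fundamental unit -/
def ep : Cub ℤ := ⟨-1, 1, 0⟩
/-- its inverse -/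
def ei : Cub ℤ := ⟨1, 1, 1⟩
lemma ep_ei : ep * ei = 1 := by ext <;> simp [ep, ei]

lemma phi_norm (x : Cub ℤ) : 2 * ((N x : ℤ) : ℝ) = phi x *
    ((x.a - x.b * tt) ^ 2 + (x.b * tt - x.c * tt ^ 2) ^ 2 + (x.a - x.c * tt ^ 2) ^ 2) := by
  rw [phi_apply]
  simp only [N]
  push_cast
  have h := tt3
  have h6 : tt ^ 6 = 4 := by rw [show tt ^ 6 = (tt ^ 3) ^ 2 by ring, h]; norm_num
  linear_combination (-2 * (x.b : ℝ) ^ 3 + 6 * x.a * x.b * x.c) * h - 2 * (x.c : ℝ) ^ 3 * h6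

lemma small_units : ∀ a ∈ List.range 6, ∀ b ∈ List.range 5, ∀ c ∈ List.range 4,
    a ^ 3 + 2 * b ^ 3 + 4 * c ^ 3 = 1 + 6 * a * b * c →
    (a = 1 ∧ b = 0 ∧ c = 0) ∨ (a = 1 ∧ b = 1 ∧ c = 1) ∨ (a = 5 ∧ b = 4 ∧ c = 3) := by
  decide +kernel

lemma units_bdd (x : Cub ℤ) (hN : N x = 1) (h1 : 1 ≤ phi x) (h2 : phi x < 15) : x = 1 ∨ x = ei ∨ x = ei ^ 2 := by
  have h := phi_norm x
  rw [hN] at h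
  have l := tt_lo
  have l' := tt_hi
  obtain ⟨a, b, c⟩ := x
  rw [phi_apply] at h h1 h2
  simp only at h h1 h2
  simp only [Int.cast_one] at h h1 h2
  set A : ℝ := (a : ℝ) with hA
  set B : ℝ := b * tt with hB
  set D : ℝ := c * tt ^ 2 with hD
  have q : (A - B) ^ 2 + (B - D) ^ 2 + (A - D) ^ 2 ≤ 2 := by
    nlinarith [sq_nonneg (A - B), sq_nonneg (B - D), sq_nonneg (A - D)]
  have bd : ∀ X Y Z : ℝ, (X - Y) ^ 2 + (Y - Z) ^ 2 + (X - Z) ^ 2 ≤ 2 → 1 ≤ X + Y + Z →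
      X + Y + Z < 15 → -(1/3) ≤ X ∧ X ≤ 17 / 3 := by
    intro X Y Z h1 h2 h3
    have : ((X - Y) + (X - Z)) ^ 2 ≤ 2 ^ 2 := by nlinarith [sq_nonneg (Y - Z), sq_nonneg ((X-Y) - (X-Z))]
    have := abs_le_of_sq_le_sq' this (by norm_num)
    constructor <;> linarith
  obtain ⟨a1, a2⟩ := bd A B D q h1 h2
  obtain ⟨b1, b2⟩ := bd B A D (by linarith) (by linarith) (by linarith)
  obtain ⟨c1, c2⟩ := bd D A B (by linarith) (by linarith) (by linarith)
  have a0 : 0 ≤ a := by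
    by_contra! h
    have : (a : ℝ) ≤ -1 := by exact_mod_cast Int.le_sub_one_of_lt h
    linarith
  have a6 : a < 6 := by
    have : (a : ℝ) < 6 := by linarith
    exact_mod_cast this
  have b0 : 0 ≤ b := by
    by_contra! h
    have : (b : ℝ) ≤ -1 := by exact_mod_cast Int.le_sub_one_of_lt h
    nlinarith
  have b5 : b < 5 := by
    have : (b : ℝ) < 5 := by
      by_contra! h
      nlinarith
    exact_mod_cast this
  have t2 : 1.5 < tt ^ 2 := by nlinarith
  have c0 : 0 ≤ c := by
    by_contra! h
    have : (c : ℝ) ≤ -1 := by exact_mod_cast Int.le_sub_one_of_lt h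
    nlinarith
  have c4 : c < 4 := by
    have : (c : ℝ) < 4 := by
      by_contra! h
      nlinarith
    exact_mod_cast this
  obtain ⟨a, rfl⟩ := Int.eq_ofNat_of_zero_le a0
  obtain ⟨b, rfl⟩ := Int.eq_ofNat_of_zero_le b0
  obtain ⟨c, rfl⟩ := Int.eq_ofNat_of_zero_le c0
  simp only [N] at hN
  have hN' : ((a ^ 3 + 2 * b ^ 3 + 4 * c ^ 3 : ℕ) : ℤ) = ((1 + 6 * a * b * c : ℕ) : ℤ) := by
    push_cast; linarith
  rcases small_units a (by simp; omega) b (by simp; omega) c (by simp; omega) (by exact_mod_cast hN') with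
    ⟨rfl, rfl, rfl⟩ | ⟨rfl, rfl, rfl⟩ | ⟨rfl, rfl, rfl⟩
  · left; rfl
  · right; left; rfl
  · right; right; rw [pow_two]; ext <;> simp [ei]

/-- squared fundamental unit -/
def eu : (Cub ℤ)ˣ := ⟨ei, ep, by rw [mul_comm]; exact ep_ei, ep_ei⟩

lemma units_pos (u : (Cub ℤ)ˣ) (hN : N (u : Cub ℤ) = 1) :
    ∃ i < 2, ∃ w : Cub ℤ, (u : Cub ℤ) = ep ^ i * w ^ 2 := by
  have hpos : 0 < phi u := by
    have h := phi_norm (u : Cub ℤ)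
    rw [hN] at h
    by_contra! h0
    have : phi u * (((u:Cub ℤ).a - (u:Cub ℤ).b * tt) ^ 2 + ((u:Cub ℤ).b * tt - (u:Cub ℤ).c * tt ^ 2) ^ 2
      + ((u:Cub ℤ).a - (u:Cub ℤ).c * tt ^ 2) ^ 2) ≤ 0 :=
      mul_nonpos_of_nonpos_of_nonneg h0 (by positivity)
    norm_num at h
    linarith
  have hy : phi ei = 1 + tt + tt ^ 2 := by rw [phi_apply]; simp [ei]
  have l := tt_lo
  have l' := tt_hi
  have hy1 : 1 < (phi ei) ^ 2 := by rw [hy]; nlinarith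
  have hyp : 0 < (phi ei) ^ 2 := by linarith
  have hy2 : (phi ei) ^ 2 < 15 := by
    have : 1 + tt + tt ^ 2 < 3.85 := by nlinarith
    rw [hy]
    have : 0 < 1 + tt + tt ^ 2 := by positivity
    nlinarith
  obtain ⟨n, hn1, hn2⟩ := exists_mem_Ico_zpow hpos hy1
  have hv : phi ((u * (eu ^ 2) ^ (-n) : (Cub ℤ)ˣ) : Cub ℤ) = phi u * (phi ei ^ 2) ^ (-n) := by
    have : ∀ w : (Cub ℤ)ˣ, phi (w : Cub ℤ) = ((Units.map (phi : Cub ℤ →* ℝ) w : ℝˣ) : ℝ) := fun w => rfl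
    rw [this, map_mul, map_zpow, map_pow, Units.val_mul, Units.val_zpow_eq_zpow_val, Units.val_pow_eq_pow_val]
    rfl
  have hz : 0 < (phi ei ^ 2) ^ n := zpow_pos hyp n
  rw [zpow_neg (phi ei ^ 2), ← div_eq_mul_inv (phi u)] at hv
  have b1 : 1 ≤ phi ((u * (eu ^ 2) ^ (-n) : (Cub ℤ)ˣ) : Cub ℤ) := by
    rw [hv, le_div_iff₀ hz]; linarith
  have b2 : phi ((u * (eu ^ 2) ^ (-n) : (Cub ℤ)ˣ) : Cub ℤ) < 15 := by
    rw [hv, div_lt_iff₀ hz]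
    rw [zpow_add_one₀ hyp.ne'] at hn2
    nlinarith
  have hNe : ∀ m : ℤ, N (((eu ^ 2) ^ m : (Cub ℤ)ˣ) : Cub ℤ) = 1 := by
    intro m
    have hh : N (((eu ^ m : (Cub ℤ)ˣ) : Cub ℤ)) ^ 2 = 1 := by
      have := (isUnit_iff _).1 (eu ^ m).isUnit
      rcases Int.natAbs_eq_iff.1 this with h | h <;> rw [h] <;> rfl
    rw [← hh, ← N_pow, ← Units.val_pow_eq_pow_val]
    congr 2
    rw [← zpow_natCast, ← zpow_natCast, zpow_comm]
  have hc := units_bdd _ (by rw [Units.val_mul, N_mul, hN, hNe, one_mul]) b1 b2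
  have hu : (u : Cub ℤ) = ((u * (eu ^ 2) ^ (-n) : (Cub ℤ)ˣ) : Cub ℤ) * (((eu ^ n : (Cub ℤ)ˣ)) : Cub ℤ) ^ 2 := by
    rw [← Units.val_pow_eq_pow_val, ← Units.val_mul]
    congr 1
    have : ((eu ^ n) ^ 2 : (Cub ℤ)ˣ) = (eu ^ 2) ^ n := by
      rw [← zpow_natCast, ← zpow_natCast, zpow_comm]
    rw [this, mul_assoc, ← zpow_add]
    simp
  rcases hc with h | h | h
  · exact ⟨0, by norm_num, _, by rw [hu, h]; ring⟩
  · refine ⟨1, by norm_num, ei * ((eu ^ n : (Cub ℤ)ˣ) : Cub ℤ), ?_⟩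
    rw [hu, h]
    linear_combination (-ei * (((eu ^ n : (Cub ℤ)ˣ)) : Cub ℤ) ^ 2) * ep_ei
  · refine ⟨0, by norm_num, ei * ((eu ^ n : (Cub ℤ)ˣ) : Cub ℤ), ?_⟩
    rw [hu, h]
    ring

lemma units_all (u : Cub ℤ) (hu : IsUnit u) :
    ∃ s : Cub ℤ, (s = 1 ∨ s = -1) ∧ ∃ i < 2, ∃ w : Cub ℤ, u = s * ep ^ i * w ^ 2 := by
  rcases Int.natAbs_eq_iff.1 ((isUnit_iff u).1 hu) with h | h
  · obtain ⟨v, rfl⟩ := hu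
    obtain ⟨i, hi, w, e⟩ := units_pos v h
    exact ⟨1, Or.inl rfl, i, hi, w, by rw [e]; ring⟩
  · obtain ⟨v, rfl⟩ := hu
    obtain ⟨i, hi, w, e⟩ := units_pos (-v) (by rw [Units.val_neg, N_neg, h]; rfl)
    refine ⟨-1, Or.inr rfl, i, hi, w, ?_⟩
    rw [Units.val_neg] at e
    linear_combination -e

/-- the prime of norm 5 -/
def pp : Cub ℤ := ⟨1, 0, 1⟩
/-- the prime of norm 25 -/
def rr : Cub ℤ := ⟨1, 2, -1⟩
/-- the prime of norm 3 -/
def ll : Cub ℤ := ⟨1, 1, 0⟩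
lemma pp_rr : pp * rr = 5 := by ext <;> simp [pp, rr] 
lemma N_pp : N pp = 5 := by simp [N, pp]
lemma N_rr : N rr = 25 := by simp [N, rr]
lemma N_ll : N ll = 3 := by simp [N, ll]

lemma prime_of_norm (x : Cub ℤ) (h : (N x).natAbs.Prime) : Prime x := by
  refine Irreducible.prime ⟨?_, ?_⟩
  · rw [isUnit_iff]; exact h.ne_one
  · intro y z e
    rw [isUnit_iff, isUnit_iff]
    rw [e, N_mul, Int.natAbs_mul] at h
    rcases (Nat.prime_mul_iff.1 h) with h | h
    · right; exact h.2
    · left; exact h.2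

lemma pp_prime : Prime pp := prime_of_norm _ (by rw [N_pp]; norm_num)
lemma ll_prime : Prime ll := prime_of_norm _ (by rw [N_ll]; norm_num)
lemma th_prime : Prime (th : Cub ℤ) := prime_of_norm _ (by
  rw [show N (th : Cub ℤ) = 2 by simp [N]]; norm_num)

lemma dvd_rr_iff (x : Cub ℤ) : rr ∣ x ↔ (5 ∣ x.a + x.c) ∧ 5 ∣ x.b + 2 * x.c := by
  constructor
  · rintro ⟨y, rfl⟩
    simp only [rr, mul_a, mul_b, mul_c]
    constructor <;> omega
  · rintro ⟨⟨u, hu⟩, ⟨v, hv⟩⟩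
    have : 5 * (pp * x) = 5 * (5 * ⟨u + 2 * v - x.c, v, u⟩ : Cub ℤ) := by
      ext <;> simp [pp] <;> omega
    have h5 : (5 : Cub ℤ) ≠ 0 := fun h => by simpa using congrArg Cub.a h
    have h1 := mul_left_cancel₀ h5 this
    rw [← pp_rr, mul_assoc] at h1
    exact ⟨_, mul_left_cancel₀ pp_prime.ne_zero h1⟩

/-- Norm form of the residue field mod `rr`. -/
def M (x : Cub ℤ) : ℤ := (x.a + x.c) ^ 2 + 2 * (x.a + x.c) * (x.b + 2 * x.c) - (x.b + 2 * x.c) ^ 2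
lemma M_mul (x y : Cub ℤ) : M (x * y) ≡ M x * M y [ZMOD 5] := by
  symm
  rw [Int.modEq_iff_dvd]
  obtain ⟨a, b, c⟩ := x
  obtain ⟨d, e, f⟩ := y
  simp only [M, mul_a, mul_b, mul_c]
  set P := (a + c) * (d + f) + (b + 2 * c) * (e + 2 * f)
  set Q := (a + c) * (e + 2 * f) + (b + 2 * c) * (d + f) + 2 * (b + 2 * c) * (e + 2 * f)
  set k := c * f
  set l := c * e + b * f + 2 * c * f
  exact ⟨-2*P*k+5*k^2 -2*P*l -2*k*Q +10*k*l +2*Q*l -5*l^2, by ring⟩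

lemma M_dvd (x : Cub ℤ) (h : (5 : ℤ) ∣ M x) : rr ∣ x := by
  rw [dvd_rr_iff]
  unfold M at h
  generalize x.a + x.c = p at *
  generalize x.b + 2 * x.c = q at *
  have key : ∀ p q : ZMod 5, p ^ 2 + 2 * p * q - q ^ 2 = 0 → p = 0 ∧ q = 0 := by decide
  have := key p q (by exact_mod_cast (ZMod.intCast_zmod_eq_zero_iff_dvd _ 5).2 h)
  exact ⟨(ZMod.intCast_zmod_eq_zero_iff_dvd _ 5).1 this.1, (ZMod.intCast_zmod_eq_zero_iff_dvd _ 5).1 this.2⟩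

lemma dvd_M (x : Cub ℤ) (h : rr ∣ x) : (5 : ℤ) ∣ M x := by
  obtain ⟨⟨u, hu⟩, v, hv⟩ := (dvd_rr_iff x).1 h
  unfold M
  rw [hu, hv]
  exact ⟨_, show _ = 5 * (5 * u ^ 2 + 10 * u * v - 5 * v ^ 2) by ring⟩

lemma rr_prime : Prime rr := by
  refine ⟨fun h => by simpa [rr] using congrArg Cub.a h, ?_, ?_⟩
  · rw [isUnit_iff, N_rr]; norm_num
  · intro x y h
    have h1 := dvd_M _ h
    have h2 : (5 : ℤ) ∣ M x * M y := (Int.ModEq.dvd_iff (M_mul x y)).1 h1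
    rcases Int.Prime.dvd_mul' (p := 5) (by norm_num) h2 with h | h
    · left; exact M_dvd _ h
    · right; exact M_dvd _ h

end Cub


namespace Cub

lemma three_eq : (3 : Cub ℤ) = ep * ll ^ 3 := by
  rw [pow_succ, pow_two]; ext <;> simp [ep, ll]

lemma th_dvd {x : Cub ℤ} (h : th ∣ x) : (2 : ℤ) ∣ x.a := by
  obtain ⟨y, rfl⟩ := h
  simp

lemma prime_dvd_three {p : Cub ℤ} (hp : Prime p) (h : p ∣ 3) : Associated ll p := by
  rw [three_eq] at h
  rcases hp.dvd_or_dvd h with h | h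
  · exact absurd (isUnit_of_dvd_unit h (IsUnit.of_mul_eq_one _ ep_ei)) hp.not_isUnit
  · exact (hp.associated_of_dvd ll_prime (hp.dvd_of_dvd_pow h)).symm

lemma prime_dvd_th {p x : Cub ℤ} (hp : Prime p) (h : p ∣ th) (hx : p ∣ x) : (2 : ℤ) ∣ x.a :=
  th_dvd ((hp.associated_of_dvd th_prime h).symm.dvd.trans hx)

lemma coprime_absurd {p : Cub ℤ} (hp : Prime p) {a b : ℤ} (hab : IsCoprime a b)
    (ha : p ∣ (a : Cub ℤ)) (hb : p ∣ (b : Cub ℤ)) : False := by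
  obtain ⟨u, v, h⟩ := hab
  have : (u : Cub ℤ) * a + v * b = 1 := by exact_mod_cast congrArg (Int.cast : ℤ → Cub ℤ) h
  exact hp.not_isUnit (isUnit_of_dvd_one (this ▸ dvd_add (ha.mul_left _) (hb.mul_left _)))

lemma N_unit_sq (g : ℤ) (hg : g ≠ 0) (X : Cub ℤ) (hX : N X = g ^ 2)
    (H : ∀ p, Prime p → p ∣ X → p ∣ adj X → Associated ll p) :
    ∃ i < 2, ∃ w : Cub ℤ, X = ep ^ i * w ^ 2 := by
  have e : X * adj X = (g : Cub ℤ) ^ 2 := by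
    rw [mul_adj, hX, pow_two]; ext <;> simp [C, pow_two]
  have hg' : (g : Cub ℤ) ≠ 0 := fun h => hg (by simpa using congrArg Cub.a h)
  obtain ⟨u, h, j, hj, k, hk, hu, e1⟩ := factor_sq ll ll ll_prime ll_prime X (adj X) g hg' e
    (fun p hp h1 h2 => Or.inl (H p hp h1 h2))
  obtain ⟨s, hs, i, hi, w, rfl⟩ := units_all u hu
  have hw : w ≠ 0 := by
    rintro rfl
    simp at e1
    rw [e1] at hX
    simp [N] at hX
    exact hg (by simpa using hX.symm)
  have hh : h ≠ 0 := by
    rintro rfl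
    simp at e1
    rw [e1] at hX
    simp [N] at hX
    exact hg (by simpa using hX.symm)
  have hNe : N ep = 1 := by simp [N, ep]
  have hN := hX
  rw [e1] at hN
  simp only [N_mul, N_pow, hNe, N_ll, one_pow, mul_one] at hN
  set n := N w * N h with hn
  have hn0 : n ≠ 0 := mul_ne_zero (N_int_ne hw) (N_int_ne hh)
  have hN' : N s * (3 ^ j * 3 ^ k) * n ^ 2 = g ^ 2 := by rw [← hN]; ring
  have hgp : 0 < g ^ 2 := by positivity
  have hnp : 0 < n ^ 2 := by positivity
  have hs1 : s = 1 := by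
    rcases hs with rfl | rfl
    · rfl
    · rw [N_neg, N_one] at hN'
      have : 0 < (3 ^ j * 3 ^ k : ℤ) * n ^ 2 := by positivity
      linarith
  subst hs1
  rw [N_one, one_mul] at hN'
  have no3 : 3 * n ^ 2 ≠ g ^ 2 := by
    intro h3
    obtain ⟨k, rfl⟩ := (Int.pow_dvd_pow_iff (n := 2) (by norm_num)).1 (⟨3, by linarith⟩ : n ^ 2 ∣ g ^ 2)
    have h4 : (3 : ℤ) = k ^ 2 := mul_right_cancel₀ hnp.ne' (by linarith)
    have : k ≤ 2 := by nlinarith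
    have : -2 ≤ k := by nlinarith
    interval_cases k <;> omega
  interval_cases j <;> interval_cases k
  · exact ⟨i, hi, w * h, by rw [e1]; ring⟩
  · exact absurd (by linarith) no3
  · exact absurd (by linarith) no3
  · exact ⟨i, hi, w * ll * h, by rw [e1]; ring⟩


lemma classI_prime (a b : ℤ) (hb : ¬ (2:ℤ) ∣ b) (hab : IsCoprime a b) (p : Cub ℤ) (hp : Prime p)
    (h1 : p ∣ (⟨b, -a, 0⟩ : Cub ℤ)) (h2 : p ∣ adj (⟨b, -a, 0⟩ : Cub ℤ)) : Associated ll p := by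
  have e1 : adj (⟨b, -a, 0⟩ : Cub ℤ) = (⟨b, -a, 0⟩ : Cub ℤ) * ⟨b, 2 * a, 0⟩ + 3 * ((th : Cub ℤ) * th * ((a : Cub ℤ) * (a : Cub ℤ))) := by
    ext <;> simp [adj] <;> ring
  have e2 : (b : Cub ℤ) = (⟨b, -a, 0⟩ : Cub ℤ) + (a : Cub ℤ) * th := by ext <;> simp
  have h3 : p ∣ 3 * ((th : Cub ℤ) * th * ((a : Cub ℤ) * (a : Cub ℤ))) := (dvd_add_right (h1.mul_right _)).1 (e1 ▸ h2)
  have ht : p ∣ th → False := fun h => hb (prime_dvd_th hp h h1)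
  have ha : p ∣ (a : Cub ℤ) → False := fun h =>
    coprime_absurd hp hab h (e2 ▸ dvd_add h1 (h.mul_right _))
  rcases hp.dvd_or_dvd h3 with h | h
  · exact prime_dvd_three hp h
  · exfalso
    rcases hp.dvd_or_dvd h with h | h
    · rcases hp.dvd_or_dvd h with h | h <;> exact ht h
    · rcases hp.dvd_or_dvd h with h | h <;> exact ha h

lemma classII_prime (a b : ℤ) (ha : ¬ (2:ℤ) ∣ a) (hab : IsCoprime a b) (p : Cub ℤ) (hp : Prime p)
    (h1 : p ∣ (⟨-a, 0, b⟩ : Cub ℤ)) (h2 : p ∣ adj (⟨-a, 0, b⟩ : Cub ℤ)) : Associated ll p := by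
  have e1 : adj (⟨-a, 0, b⟩ : Cub ℤ) = (⟨-a, 0, b⟩ : Cub ℤ) * ⟨-a, 0, -2 * b⟩ + 3 * ((2 : Cub ℤ) * th * ((b : Cub ℤ) * (b : Cub ℤ))) := by
    ext <;> simp [adj] <;> ring
  have e2 : (a : Cub ℤ) = -(⟨-a, 0, b⟩ : Cub ℤ) + (b : Cub ℤ) * th ^ 2 := by rw [pow_two]; ext <;> simp
  have h3 : p ∣ 3 * ((2 : Cub ℤ) * th * ((b : Cub ℤ) * (b : Cub ℤ))) := (dvd_add_right (h1.mul_right _)).1 (e1 ▸ h2)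
  have ht : p ∣ th → False := fun h => ha (by simpa using prime_dvd_th hp h h1)
  have h22 : p ∣ 2 → False := fun h => ht (by rw [← th3] at h; exact hp.dvd_of_dvd_pow h)
  have hb : p ∣ (b : Cub ℤ) → False := fun h =>
    coprime_absurd hp hab (e2 ▸ dvd_add (h1.neg_right) (h.mul_right _)) h
  rcases hp.dvd_or_dvd h3 with h | h
  · exact prime_dvd_three hp h
  · exfalso
    rcases hp.dvd_or_dvd h with h | h
    · rcases hp.dvd_or_dvd h with h | h
      · exact h22 h
      · exact ht h
    · rcases hp.dvd_or_dvd h with h | h <;> exact hb h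

lemma sq_split (p q n : ℤ) (hc : IsCoprime p q) (h : p * q = n ^ 2) :
    ∃ s : ℤ, (s = 1 ∨ s = -1) ∧ ∃ p1 q1, p = s * p1 ^ 2 ∧ q = s * q1 ^ 2 := by
  obtain ⟨p1, h1⟩ := Int.sq_of_isCoprime hc h
  obtain ⟨q1, h2⟩ := Int.sq_of_isCoprime hc.symm (by rw [mul_comm]; exact h)
  have key : ∀ a b : ℤ, a ^ 2 * (-b ^ 2) = n ^ 2 → a = 0 ∨ b = 0 := by
    intro a b e
    have : (a * b) ^ 2 = 0 := by nlinarith [sq_nonneg n, sq_nonneg (a * b)]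
    simpa using this
  rcases h1 with rfl | rfl <;> rcases h2 with rfl | rfl
  · exact ⟨1, Or.inl rfl, p1, q1, by ring, by ring⟩
  · rcases key p1 q1 h with rfl | rfl
    · exact ⟨-1, Or.inr rfl, 0, q1, by ring, by ring⟩
    · exact ⟨1, Or.inl rfl, p1, 0, by ring, by ring⟩
  · rcases key q1 p1 (by rw [← h]; ring) with rfl | rfl
    · exact ⟨-1, Or.inr rfl, p1, 0, by ring, by ring⟩
    · exact ⟨1, Or.inl rfl, 0, q1, by ring, by ring⟩
  · exact ⟨-1, Or.inr rfl, p1, q1, by ring, by ring⟩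

lemma coprime_of_prime {a b : ℤ} (h : ∀ p : ℤ, Prime p → p ∣ a → p ∣ b → False) : IsCoprime a b := by
  by_cases h0 : a = 0 ∧ b = 0
  · obtain ⟨rfl, rfl⟩ := h0
    exact absurd (h 2 Int.prime_two (dvd_zero _) (dvd_zero _)) id
  · refine isCoprime_of_prime_dvd (by tauto) (fun p hp h1 h2 => h p hp h1 h2)

lemma not_dvd_coprime {a b p : ℤ} (hab : IsCoprime a b) (hp : Prime p) (ha : p ∣ a) (hb : p ∣ b) :
    False := hp.not_isUnit (hab.isUnit_of_dvd' ha hb)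

lemma sq_coords (w : Cub ℤ) : w ^ 2 = ⟨w.a ^ 2 + 4 * w.b * w.c, 2 * w.a * w.b + 2 * w.c ^ 2,
    w.b ^ 2 + 2 * w.a * w.c⟩ := by
  rw [pow_two]; ext <;> simp <;> ring

lemma classI : ∀ (k : ℕ) (β γ a : ℤ), a.natAbs ≤ k → ¬ (2 : ℤ) ∣ β → IsCoprime a β →
    β ^ 6 - 2 * a ^ 3 = γ ^ 2 → a = 0 := by
  intro k
  induction k with
  | zero => intro β γ a hk _ _ _; omega
  | succ k ih =>
    intro β γ a hk hβ hab e
    have hodd : β % 2 = 1 := by omega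
    have hβ2 : β ^ 2 % 4 = 1 := by
      rcases (by omega : β % 4 = 1 ∨ β % 4 = 3) with h | h <;> simp [pow_two, Int.mul_emod, h]
    have hγ : γ ≠ 0 := by
      rintro rfl
      have : (2:ℤ) ∣ β ^ 6 := ⟨a ^ 3, by linarith⟩
      exact hβ (Int.prime_two.dvd_of_dvd_pow this)
    have hb2 : ¬ (2:ℤ) ∣ β ^ 2 := by omega
    have hab2 : IsCoprime a (β ^ 2) := hab.pow_right
    obtain ⟨i, hi, w, hw⟩ := N_unit_sq γ hγ ⟨β ^ 2, -a, 0⟩ (by rw [← e]; simp [N]; ring)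
      (classI_prime a (β ^ 2) hb2 hab2)
    obtain ⟨x, y, z⟩ := w
    rw [sq_coords] at hw
    simp only at hw
    interval_cases i
    · rw [pow_zero, one_mul, Cub.mk.injEq] at hw
      obtain ⟨h1, h2, h3⟩ := hw
      have hx : x % 2 = 1 := by
        by_contra hx
        obtain ⟨x', rfl⟩ : (2:ℤ) ∣ x := by omega
        have : (2:ℤ) ∣ β ^ 2 := ⟨2 * x' ^ 2 + 2 * y * z, by rw [h1]; ring⟩
        exact hb2 this
      obtain ⟨y', rfl⟩ : (2:ℤ) ∣ y := Int.prime_two.dvd_of_dvd_pow (n := 2) ⟨-x * z, by linarith⟩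
      obtain ⟨z', rfl⟩ : (2:ℤ) ∣ z := by
        have : (2:ℤ) ∣ x * z := ⟨-y' ^ 2, by linarith⟩
        rcases Int.prime_two.dvd_or_dvd this with h | h
        · omega
        · exact h
      have hc : IsCoprime x (-z') := coprime_of_prime (fun p hp p1 p2 => by
        rw [dvd_neg] at p2
        obtain ⟨x1, hx1⟩ := p1
        refine not_dvd_coprime hab2 hp ?_ ?_
        · exact ⟨-(2 * x1 * (2 * y')) - 2 * ((z' / p) * 4 * z'), by
            obtain ⟨z1, rfl⟩ := p2
            rw [Int.mul_ediv_cancel_left _ hp.ne_zero]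
            rw [hx1] at h2
            linear_combination -h2⟩
        · obtain ⟨z1, rfl⟩ := p2
          exact ⟨x1 * x + 16 * y' * z1, by rw [h1]; rw [hx1]; ring⟩)
      obtain ⟨s, hs, g, h, rfl, hz⟩ := sq_split x (-z') y' hc (by linarith)
      have hz' : z' = -(s * h ^ 2) := by linarith
      subst hz'
      have hss : s ^ 2 = 1 := by rcases hs with rfl | rfl <;> norm_num
      have hy : y' ^ 2 = (g * h) ^ 2 := by
        have : 4 * y' ^ 2 = 4 * (g * h) ^ 2 := by linear_combination -h3 + 4 * g ^ 2 * h ^ 2 * hss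
        linarith
      obtain ⟨h', hh, hy'⟩ : ∃ h', h' ^ 2 = h ^ 2 ∧ y' = s * g * h' := by
        rcases sq_eq_sq_iff_eq_or_eq_neg.1 hy with h5 | h5
        · exact ⟨s * h, by linear_combination h ^ 2 * hss, by linear_combination h5 - g * h * hss⟩
        · exact ⟨-(s * h), by linear_combination h ^ 2 * hss, by linear_combination h5 + g * h * hss⟩
      rw [← hh] at h1 h2 h3
      subst hy'
      clear hy hz hc hh h
      have hs4 : s ^ 4 = 1 := by rw [show s ^ 4 = (s ^ 2) ^ 2 by ring, hss]; rfl
      have eb : β ^ 2 = g * (g ^ 3 - 16 * h' ^ 3) := by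
        linear_combination h1 + (g ^ 4 - 16 * g * h' ^ 3) * hss
      have ea : a = -(4 * h' * (g ^ 3 + 2 * h' ^ 3)) := by
        linear_combination -h2 - (4 * g ^ 3 * h' + 8 * h' ^ 4) * hss
      have hg2 : g % 2 = 1 := by
        by_contra hx
        obtain ⟨x', rfl⟩ : (2:ℤ) ∣ g := by omega
        exact hb2 ⟨x' * ((2 * x') ^ 3 - 16 * h' ^ 3), by rw [eb]; ring⟩
      have hcg : IsCoprime (2 * h') g := coprime_of_prime (fun p hp p1 p2 =>
        not_dvd_coprime hab2 hp (by rw [ea]; obtain ⟨q, hq⟩ := p1; exact ⟨-(2 * q * (g ^ 3 + 2 * h' ^ 3)), by linear_combination (-2 * (g ^ 3 + 2 * h' ^ 3)) * hq⟩)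
          (by rw [eb]; exact p2.mul_right _))
      have hc2 : IsCoprime g (g ^ 3 - 16 * h' ^ 3) := coprime_of_prime (fun p hp p1 p2 =>
        not_dvd_coprime hcg hp (by
          have : p ∣ 2 * (2 * h') ^ 3 := by
            have := dvd_sub (dvd_pow p1 (n := 3) (by norm_num)) p2
            rwa [show g ^ 3 - (g ^ 3 - 16 * h' ^ 3) = 2 * (2 * h') ^ 3 by ring] at this
          rcases hp.dvd_or_dvd this with h | h
          · exact h.mul_right _
          · exact hp.dvd_of_dvd_pow h) p1)
      obtain ⟨t, ht, g1, k1, hg1, hk1⟩ := sq_split _ _ β hc2 eb.symm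
      have htt : t ^ 2 = 1 := by rcases ht with rfl | rfl <;> norm_num
      have hind := ih g1 k1 (t * (2 * h'))
      by_cases h0 : h' = 0
      · rw [ea, h0]; ring
      · exfalso
        have hsz : (t * (2 * h')).natAbs ≤ k := by
          have h6 : (t * (2 * h')).natAbs = (2 * h').natAbs := by
            rcases ht with rfl | rfl <;> simp
          have h7 : g ^ 3 + 2 * h' ^ 3 ≠ 0 := by
            intro h
            have : (2:ℤ) ∣ g := Int.prime_two.dvd_of_dvd_pow (n := 3) ⟨-h' ^ 3, by linarith⟩
            omega
          have h8 : a.natAbs = 2 * (2 * h').natAbs * (g ^ 3 + 2 * h' ^ 3).natAbs := by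
            rw [ea, Int.natAbs_neg, Int.natAbs_mul, Int.natAbs_mul, Int.natAbs_mul]
            rw [show (4:ℤ).natAbs = 4 from rfl, show (2:ℤ).natAbs = 2 from rfl]
            ring
          have h9 : 1 ≤ (g ^ 3 + 2 * h' ^ 3).natAbs := Nat.one_le_iff_ne_zero.2 (Int.natAbs_ne_zero.2 h7)
          have h10 : 1 ≤ (2 * h').natAbs := by omega
          rw [h6]
          nlinarith [Nat.mul_le_mul h9 h10]
        have hr := hind hsz (by
            rintro ⟨q, rfl⟩
            have : (2:ℤ) ∣ g := ⟨t * 2 * q ^ 2, by rw [hg1]; ring⟩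
            omega) (by
            have hu : IsUnit t := by rcases ht with rfl | rfl <;> simp
            refine (isCoprime_mul_unit_left_left hu _ _).2 ?_
            rw [hg1] at hcg
            exact (IsCoprime.of_mul_right_right hcg).of_isCoprime_of_dvd_right (Dvd.intro _ (pow_two g1).symm)) (by
            have ht3 : t ^ 4 = 1 := by rw [show t ^ 4 = (t ^ 2) ^ 2 by ring, htt]; rfl
            rw [hg1] at hk1
            linear_combination t * hk1 - g1 ^ 6 * ht3 + k1 ^ 2 * htt - 16 * h' ^ 3 * t * htt)
        rcases mul_eq_zero.1 hr with h | h
        · rw [h] at htt; norm_num at htt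
        · omega
    · exfalso
      rw [pow_one, ep, Cub.ext_iff] at hw
      simp only [mul_a, mul_b, mul_c] at hw
      obtain ⟨h1, h2, h3⟩ := hw
      obtain ⟨y', rfl⟩ : (2:ℤ) ∣ y := Int.prime_two.dvd_of_dvd_pow (n := 2) ⟨x * y + z ^ 2 - x * z, by
        linarith⟩
      have h4 : β ^ 2 + x ^ 2 = 4 * (-2 * y' * z + 2 * y' ^ 2 + x * z) := by linarith
      have h5 : x ^ 2 % 4 = 0 ∨ x ^ 2 % 4 = 1 := by
        rcases (by omega : x % 4 = 0 ∨ x % 4 = 1 ∨ x % 4 = 2 ∨ x % 4 = 3) with h | h | h | h <;>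
          simp [pow_two, Int.mul_emod, h]
      omega

lemma classII : ∀ (k : ℕ) (β γ a : ℤ), β.natAbs ≤ k → β ≠ 0 → ¬ (2 : ℤ) ∣ a → IsCoprime a β →
    4 * β ^ 6 - a ^ 3 = γ ^ 2 → False := by
  intro k
  induction k with
  | zero => intro β γ a hk _ _ _; omega
  | succ k ih =>
    intro β γ a hk hβ ha hab e
    have hγ : γ ≠ 0 := by
      rintro rfl
      have : (2:ℤ) ∣ a ^ 3 := ⟨2 * β ^ 6, by linarith⟩
      exact ha (Int.prime_two.dvd_of_dvd_pow this)
    have hab2 : IsCoprime a (β ^ 2) := hab.pow_right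
    obtain ⟨i, hi, w, hw⟩ := N_unit_sq γ hγ ⟨-a, 0, β ^ 2⟩ (by rw [← e]; simp [N]; ring)
      (classII_prime a (β ^ 2) ha hab2)
    obtain ⟨x, y, z⟩ := w
    rw [sq_coords] at hw
    simp only at hw
    interval_cases i
    · rw [pow_zero, one_mul, Cub.mk.injEq] at hw
      obtain ⟨h1, h2, h3⟩ := hw
      have hc : IsCoprime x (-y) := coprime_of_prime (fun p hp p1 p2 => by
        rw [dvd_neg] at p2
        have hz : p ∣ z := hp.dvd_of_dvd_pow (n := 2) (by
          rw [show z ^ 2 = -(x * y) by linarith, dvd_neg]; exact p1.mul_right _)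
        refine not_dvd_coprime hab2 hp ?_ ?_
        · rw [show a = -(x * x + 4 * (y * z)) by linarith, dvd_neg]
          exact dvd_add (p1.mul_right _) ((p2.mul_right _).mul_left _)
        · rw [show β ^ 2 = y * y + 2 * (x * z) by linarith]
          exact dvd_add (p2.mul_right _) ((p1.mul_right _).mul_left _))
      obtain ⟨s, hs, g, h, rfl, hz⟩ := sq_split x (-y) z hc (by linarith)
      have hz' : y = -(s * h ^ 2) := by linarith
      subst hz'
      have hss : s ^ 2 = 1 := by rcases hs with rfl | rfl <;> norm_num
      have hy : z ^ 2 = (g * h) ^ 2 := by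
        have : 2 * z ^ 2 = 2 * (g * h) ^ 2 := by linear_combination -h2 + 2 * g ^ 2 * h ^ 2 * hss
        linarith
      obtain ⟨h', hh, hy'⟩ : ∃ h', h' ^ 2 = h ^ 2 ∧ z = -s * g * h' := by
        rcases sq_eq_sq_iff_eq_or_eq_neg.1 hy with h5 | h5
        · exact ⟨-(s * h), by linear_combination h ^ 2 * hss, by linear_combination h5 - g * h * hss⟩
        · exact ⟨s * h, by linear_combination h ^ 2 * hss, by linear_combination h5 + g * h * hss⟩
      rw [← hh] at h1 h2 h3
      subst hy'
      clear hy hz hc hh h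
      have eb : h' * (h' ^ 3 - 2 * g ^ 3) = β ^ 2 := by
        linear_combination -h3 - (h' ^ 4 - 2 * g ^ 3 * h') * hss
      have ea : a = -(g ^ 4 + 4 * g * h' ^ 3) := by
        linear_combination -h1 - (g ^ 4 + 4 * g * h' ^ 3) * hss
      have hg2 : ¬ (2:ℤ) ∣ g := by
        rintro ⟨x', rfl⟩
        exact ha ⟨-(x' * ((2 * x') ^ 3 + 4 * h' ^ 3)), by rw [ea]; ring⟩
      have hcg : IsCoprime g h' := coprime_of_prime (fun p hp p1 p2 =>
        not_dvd_coprime hab2 hp (by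
          rw [show a = g * (-(g ^ 3 + 4 * h' ^ 3)) by rw [ea]; ring]; exact p1.mul_right _)
          (by rw [← eb]; exact p2.mul_right _))
      have h0 : h' ≠ 0 := by
        rintro rfl
        apply hβ
        have : β ^ 2 = 0 := by rw [← eb]; ring
        simpa using this
      by_cases hev : (2:ℤ) ∣ h'
      · obtain ⟨h, rfl⟩ := hev
        obtain ⟨b1, rfl⟩ : (2:ℤ) ∣ β := Int.prime_two.dvd_of_dvd_pow (n := 2)
          ⟨h * ((2 * h) ^ 3 - 2 * g ^ 3), by rw [← eb]; ring⟩
        have eb1 : h * (4 * h ^ 3 - g ^ 3) = b1 ^ 2 := by linarith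
        have hcg' : IsCoprime g h := hcg.of_isCoprime_of_dvd_right ⟨2, by ring⟩
        have hc2 : IsCoprime h (4 * h ^ 3 - g ^ 3) := coprime_of_prime (fun p hp p1 p2 =>
          not_dvd_coprime hcg' hp (by
            have h1 : p ∣ 4 * h ^ 3 := (dvd_pow p1 (by norm_num)).mul_left _
            have h2 : p ∣ g ^ 3 := by simpa using dvd_sub h1 p2
            exact hp.dvd_of_dvd_pow h2) p1)
        obtain ⟨t, ht, g1, k1, hg1, hk1⟩ := sq_split _ _ b1 hc2 eb1
        have htt : t ^ 2 = 1 := by rcases ht with rfl | rfl <;> norm_num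
        have hu : IsUnit t := by rcases ht with rfl | rfl <;> simp
        have hg10 : g1 ≠ 0 := by rintro rfl; simp at hg1; simp [hg1] at h0
        refine ih g1 k1 (t * g) ?_ hg10 ?_ ?_ ?_
        · have h5 : b1 ^ 2 = (g1 * k1) ^ 2 := by
            rw [← eb1, hk1]
            nth_rewrite 1 [hg1]
            linear_combination (g1 * k1) ^ 2 * htt
          have h6 : b1.natAbs = g1.natAbs * k1.natAbs := by
            rw [← Int.natAbs_mul]; exact Int.natAbs_eq_iff_sq_eq.2 h5
          have h7 : 1 ≤ k1.natAbs := by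
            by_contra h8
            have : b1.natAbs = 0 := by rw [h6]; simp; omega
            omega
          have h8 : (2 * b1).natAbs = 2 * b1.natAbs := by omega
          rw [h8, h6] at hk
          have : 1 ≤ g1.natAbs := by omega
          nlinarith
        · rcases ht with rfl | rfl
          · simpa using hg2
          · simpa using hg2
        · refine (isCoprime_mul_unit_left_left hu _ _).2 ?_
          rw [hg1] at hcg'
          exact (IsCoprime.of_mul_right_right hcg').of_isCoprime_of_dvd_right
            (Dvd.intro _ (pow_two g1).symm)
        · have ht3 : t ^ 4 = 1 := by rw [show t ^ 4 = (t ^ 2) ^ 2 by ring, htt]; rfl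
          rw [hg1] at hk1
          linear_combination t * hk1 - 4 * g1 ^ 6 * ht3 + k1 ^ 2 * htt - g ^ 3 * t * htt
      · have hc2 : IsCoprime h' (h' ^ 3 - 2 * g ^ 3) := coprime_of_prime (fun p hp p1 p2 => by
          have h1 : p ∣ h' ^ 3 := dvd_pow p1 (by norm_num)
          have h2 : p ∣ 2 * g ^ 3 := by simpa using dvd_sub h1 p2
          rcases hp.dvd_or_dvd h2 with h3 | h3
          · exact hev ((hp.associated_of_dvd Int.prime_two h3).symm.dvd.trans p1)
          · exact not_dvd_coprime hcg hp (hp.dvd_of_dvd_pow h3) p1)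
        obtain ⟨t, ht, g1, k1, hg1, hk1⟩ := sq_split _ _ β hc2 eb
        have htt : t ^ 2 = 1 := by rcases ht with rfl | rfl <;> norm_num
        have hu : IsUnit t := by rcases ht with rfl | rfl <;> simp
        have := classI _ g1 k1 (t * g) le_rfl (by
            rintro ⟨q, rfl⟩
            exact hev ⟨t * 2 * q ^ 2, by rw [hg1]; ring⟩) (by
            refine (isCoprime_mul_unit_left_left hu _ _).2 ?_
            rw [hg1] at hcg
            exact (IsCoprime.of_mul_right_right hcg).of_isCoprime_of_dvd_right
              (Dvd.intro _ (pow_two g1).symm)) (by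
            have ht3 : t ^ 4 = 1 := by rw [show t ^ 4 = (t ^ 2) ^ 2 by ring, htt]; rfl
            rw [hg1] at hk1
            linear_combination t * hk1 - g1 ^ 6 * ht3 + k1 ^ 2 * htt - 2 * g ^ 3 * t * htt)
        rcases mul_eq_zero.1 this with h | h
        · rw [h] at htt; norm_num at htt
        · rw [h] at hg2; simp at hg2
    · rw [pow_one, ep, Cub.ext_iff] at hw
      simp only [mul_a, mul_b, mul_c] at hw
      obtain ⟨h1, h2, h3⟩ := hw
      obtain ⟨x', rfl⟩ : (2:ℤ) ∣ x := Int.prime_two.dvd_of_dvd_pow (n := 2) ⟨x * y + z ^ 2 - 2 * y * z, by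
        linarith⟩
      exact ha ⟨2 * x' ^ 2 + 2 * y * z - (y ^ 2 + 4 * x' * z), by linarith⟩

lemma d5_reduce (a β γ e : ℤ) (ha : ¬ (2 : ℤ) ∣ a) (hab : IsCoprime a β)
    (h1 : 4 * β ^ 6 - a ^ 3 = 5 * γ ^ 2) (h2 : a ^ 2 + 4 * β ^ 4 = 5 * e ^ 2) :
    β % 2 = 1 ∧ a % 8 = 7 ∧ ∃ w : Cub ℤ, (⟨-a, 0, β ^ 2⟩ : Cub ℤ) = pp * w ^ 2 := by
  have hγ : γ ≠ 0 := by
    rintro rfl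
    have : (2:ℤ) ∣ a ^ 3 := ⟨2 * β ^ 6, by linarith⟩
    exact ha (Int.prime_two.dvd_of_dvd_pow this)
  have m8 : β % 2 = 1 ∧ a % 8 = 7 := by
    have key : ∀ a b g e : ZMod 8, 4 * b ^ 6 - a ^ 3 = 5 * g ^ 2 → a ^ 2 + 4 * b ^ 4 = 5 * e ^ 2 →
      4 * a ≠ 0 → 4 * b ≠ 0 ∧ a = 7 := by decide +kernel
    have := key a β γ e (by exact_mod_cast congrArg (Int.cast : ℤ → ZMod 8) h1)
      (by exact_mod_cast congrArg (Int.cast : ℤ → ZMod 8) h2) (by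
        intro h
        have : ((4 * a : ℤ) : ZMod 8) = 0 := by exact_mod_cast h
        have := (ZMod.intCast_zmod_eq_zero_iff_dvd _ 8).1 this
        omega)
    constructor
    · by_contra h
      apply this.1
      have h8 : ((4 * β : ℤ) : ZMod 8) = 0 := (ZMod.intCast_zmod_eq_zero_iff_dvd _ 8).2 (by omega)
      exact_mod_cast h8
    · have h8 : ((a : ℤ) : ZMod 8) = ((7 : ℤ) : ZMod 8) := by exact_mod_cast this.2
      have := (ZMod.intCast_eq_intCast_iff _ _ 8).1 h8
      exact this
  have m5 : (5:ℤ) ∣ a + β ^ 2 := by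
    have key : ∀ a b : ZMod 5, 4 * b ^ 6 - a ^ 3 = 0 → a ^ 2 + 4 * b ^ 4 = 0 → a + b ^ 2 = 0 := by
      decide +kernel
    have h5 : (5 : ZMod 5) = 0 := rfl
    have := key a β (by
        have := congrArg (Int.cast : ℤ → ZMod 5) h1
        push_cast at this
        rw [this, h5, zero_mul]) (by
        have := congrArg (Int.cast : ℤ → ZMod 5) h2
        push_cast at this
        rw [this, h5, zero_mul])
    exact (ZMod.intCast_zmod_eq_zero_iff_dvd _ 5).1 (by exact_mod_cast this)
  refine ⟨m8.1, m8.2, ?_⟩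
  obtain ⟨q, hq⟩ := m5
  have hab2 : IsCoprime a (β ^ 2) := hab.pow_right
  set X' : Cub ℤ := ⟨β ^ 2 - q, -2 * q, q⟩ with hX'
  have hX : (⟨-a, 0, β ^ 2⟩ : Cub ℤ) = pp * X' := by
    ext <;> simp [pp, X'] <;> linarith
  have hadj : adj (⟨-a, 0, β ^ 2⟩ : Cub ℤ) = adj pp * adj X' := by
    rw [hX]; ext <;> simp [adj, pp] <;> ring
  have hN : N X' = γ ^ 2 := by
    have h3 : N (⟨-a, 0, β ^ 2⟩ : Cub ℤ) = 5 * γ ^ 2 := by rw [← h1]; simp [N]; ring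
    rw [hX, N_mul, N_pp] at h3
    linarith
  obtain ⟨i, hi, w, hw⟩ := N_unit_sq γ hγ X' hN (fun p hp p1 p2 =>
    classII_prime a (β ^ 2) ha hab2 p hp (hX ▸ p1.mul_left _) (hadj ▸ p2.mul_left _))
  rw [hw] at hX
  interval_cases i
  · exact ⟨w, by rw [hX]; ring⟩
  · exfalso
    obtain ⟨x, y, z⟩ := w
    rw [sq_coords, pow_one, ep, pp, Cub.ext_iff] at hX
    simp only [mul_a, mul_b, mul_c] at hX
    obtain ⟨h1, h2, h3⟩ := hX
    obtain ⟨x', rfl⟩ : (2:ℤ) ∣ x := Int.prime_two.dvd_of_dvd_pow (n := 2)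
      ⟨y ^ 2 + 2 * x * z - 2 * y * z - x * y - z ^ 2, by linarith⟩
    exact ha ⟨-2 * x' ^ 2 - 2 * y * z - (y ^ 2 + 4 * x' * z) + (4 * x' * y + 2 * z ^ 2), by linarith⟩

end Cub


namespace Cub

lemma sq_split_pos (b W k d : ℤ) (hd : d = 1 ∨ (d = 5 ∧ ¬ (5:ℤ) ∣ b)) (hb : 0 < b) (hc : IsCoprime b W)
    (h : b * W = d * k ^ 2) : ∃ β γ : ℤ, b = β ^ 2 ∧ W = d * γ ^ 2 := by
  have main : ∀ W k : ℤ, IsCoprime b W → b * W = k ^ 2 → ∃ β γ : ℤ, b = β ^ 2 ∧ W = γ ^ 2 := by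
    intro W k hc h
    obtain ⟨s, hs, p, q, h1, h2⟩ := sq_split b W k hc h
    rcases hs with rfl | rfl
    · exact ⟨p, q, by linarith, by linarith⟩
    · nlinarith [sq_nonneg p]
  rcases hd with rfl | ⟨rfl, h5⟩
  · obtain ⟨β, γ, h1, h2⟩ := main W k hc (by linarith)
    exact ⟨β, γ, h1, by linarith⟩
  · have p5 : Prime (5:ℤ) := by norm_num
    obtain ⟨W', rfl⟩ : (5:ℤ) ∣ W := by
      rcases p5.dvd_or_dvd (⟨_, h⟩ : (5:ℤ) ∣ b * W) with h | h
      · exact absurd h h5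
      · exact h
    obtain ⟨β, γ, h1, h2⟩ := main W' k (IsCoprime.of_mul_right_right hc) (by linarith)
    exact ⟨β, γ, h1, by rw [h2]⟩

lemma nat_parity (p : ℕ) (hp : p.Prime) (m : ℕ) (hm : ¬ p ∣ m) :
    ∀ (k h n : ℕ), h ≤ k → h ≠ 0 → p * m * h ^ 2 = n ^ 2 → False := by
  intro k
  induction k with
  | zero => intro h n hk h0 _; omega
  | succ k ih =>
    intro h n hk h0 e
    obtain ⟨n', rfl⟩ : p ∣ n := hp.dvd_of_dvd_pow (n := 2) ⟨m * h ^ 2, by rw [← e]; ring⟩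
    have e1 : m * h ^ 2 = p * n' ^ 2 := Nat.eq_of_mul_eq_mul_left hp.pos (by linarith)
    obtain ⟨h', rfl⟩ : p ∣ h := by
      rcases (Nat.Prime.dvd_mul hp).1 (⟨_, e1⟩ : p ∣ m * h ^ 2) with h1 | h1
      · exact absurd h1 hm
      · exact hp.dvd_of_dvd_pow h1
    have e2 : p * m * h' ^ 2 = n' ^ 2 := Nat.eq_of_mul_eq_mul_left hp.pos (by linarith)
    have h0' : h' ≠ 0 := right_ne_zero_of_mul h0
    refine ih h' n' ?_ h0' e2
    have := hp.two_le
    have : 1 ≤ h' := by omega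
    nlinarith

lemma sq_five (F G n : ℕ) (hn : n ≠ 0) (e : F * G = n ^ 2)
    (H : ∀ p : ℕ, p.Prime → p ∣ F → p ∣ G → p = 5) :
    ∃ d h k : ℕ, (d = 1 ∨ d = 5) ∧ F = d * h ^ 2 ∧ G = d * k ^ 2 := by
  obtain ⟨S, h, hF, hS⟩ := Nat.sq_mul_squarefree F
  have hF0 : F ≠ 0 := by rintro rfl; simp at e; exact hn (by simpa using e.symm)
  have hh : h ≠ 0 := by rintro rfl; simp at hF; exact hF0 hF.symm
  have hd : ∀ p : ℕ, p.Prime → p ∣ S → p = 5 := by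
    intro p hp hpS
    refine H p hp (hF ▸ hpS.mul_left _) ?_
    by_contra hpG
    obtain ⟨S', rfl⟩ := hpS
    refine nat_parity p hp (S' * G) ?_ _ h n le_rfl hh (by rw [← e, ← hF]; ring)
    intro h1
    rcases (Nat.Prime.dvd_mul hp).1 h1 with h1 | h1
    · obtain ⟨T, rfl⟩ := h1
      have := hS p ⟨T, by ring⟩
      exact hp.not_isUnit this
    · exact hpG h1
  have hS1 : S = 1 ∨ S = 5 := by
    have h1 := Nat.prod_primeFactors_of_squarefree hS
    have h2 : S.primeFactors ⊆ {5} := by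
      intro p hp
      have := Nat.mem_primeFactors.1 hp
      simp [hd p this.1 this.2.1]
    rcases Finset.subset_singleton_iff.1 h2 with h3 | h3
    · left; rw [← h1, h3]; rfl
    · right; rw [← h1, h3]; rfl
  have e1 : h ^ 2 * (S * G) = n ^ 2 := by rw [← e, ← hF]; ring
  obtain ⟨m, rfl⟩ : h ∣ n := (Nat.pow_dvd_pow_iff (by norm_num)).1 ⟨_, e1.symm⟩
  have e2 : S * G = m ^ 2 := Nat.eq_of_mul_eq_mul_left (by positivity : 0 < h ^ 2) (by linarith)
  rcases hS1 with rfl | rfl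
  · exact ⟨1, h, m, Or.inl rfl, by linarith, by linarith⟩
  · obtain ⟨k, rfl⟩ : 5 ∣ m := Nat.Prime.dvd_of_dvd_pow (n := 2) (by norm_num) ⟨G, e2.symm⟩
    exact ⟨5, h, k, Or.inr rfl, by linarith, by linarith⟩

lemma sq_five_int (F G n : ℤ) (hF : 0 < F) (hn : n ≠ 0) (e : F * G = n ^ 2)
    (H : ∀ p : ℤ, Prime p → p ∣ F → p ∣ G → p ∣ 5) :
    ∃ d h k : ℤ, (d = 1 ∨ d = 5) ∧ F = d * h ^ 2 ∧ G = d * k ^ 2 := by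
  have hG : 0 < G := by
    have : 0 < n ^ 2 := by positivity
    rw [← e] at this
    exact (mul_pos_iff_of_pos_left hF).1 this
  obtain ⟨F, rfl⟩ := Int.eq_ofNat_of_zero_le hF.le
  obtain ⟨G, rfl⟩ := Int.eq_ofNat_of_zero_le hG.le
  obtain ⟨d, h, k, hd, h1, h2⟩ := sq_five F G n.natAbs (by simpa using hn) (by
    zify; rw [e, sq_abs]) (by
    intro p hp h1 h2
    have := H p (Nat.prime_iff_prime_int.1 hp) (by exact_mod_cast h1) (by exact_mod_cast h2)
    have h5 : p ∣ 5 := by exact_mod_cast this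
    exact (Nat.prime_dvd_prime_iff_eq hp (by norm_num)).1 h5)
  refine ⟨d, h, k, by exact_mod_cast hd, by exact_mod_cast h1, by exact_mod_cast h2⟩

theorem tau_reduce (τ z : ℚ) (h : z ^ 2 = (τ ^ 2 + 1) * (1 - 2 * τ ^ 3)) : τ = 0 ∨
    ∃ (a β e : ℤ) (w : Cub ℤ), τ = a / (2 * β ^ 2) ∧ β % 2 = 1 ∧ a % 8 = 7 ∧
      a ^ 2 + 4 * β ^ 4 = 5 * e ^ 2 ∧ (⟨-a, 0, β ^ 2⟩ : Cub ℤ) = pp * w ^ 2 := by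
  obtain ⟨a, b, hb, hab, hτ⟩ : ∃ a b : ℤ, 0 < b ∧ IsCoprime a b ∧ τ = a / b :=
    ⟨τ.num, τ.den, by exact_mod_cast τ.den_pos, by
      rw [Int.isCoprime_iff_gcd_eq_one]; exact τ.reduced, (Rat.num_div_den τ).symm⟩
  have hb' : (b : ℚ) ≠ 0 := by exact_mod_cast hb.ne'
  have hq : (z * b ^ 3) ^ 2 = (((a ^ 2 + b ^ 2) * (b * (b ^ 3 - 2 * a ^ 3)) : ℤ) : ℚ) := by
    push_cast
    rw [mul_pow, h, hτ]
    field_simp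
  obtain ⟨n, hn⟩ : ∃ n : ℤ, z * b ^ 3 = n := by
    have hi : IsIntegral ℤ (z * b ^ 3) := by
      refine IsIntegral.of_pow (n := 2) (by norm_num) ?_
      rw [hq]
      exact isIntegral_algebraMap (R := ℤ) (A := ℚ) (x := (a ^ 2 + b ^ 2) * (b * (b ^ 3 - 2 * a ^ 3)))
    obtain ⟨n, hn⟩ := IsIntegrallyClosed.isIntegral_iff.1 hi
    exact ⟨n, hn.symm⟩
  rw [hn] at hq
  have e : (a ^ 2 + b ^ 2) * (b * (b ^ 3 - 2 * a ^ 3)) = n ^ 2 := by exact_mod_cast hq.symm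
  have hW : b ^ 3 - 2 * a ^ 3 ≠ 0 := by
    have := N_int_ne (x := ⟨b, -a, 0⟩) (fun h => hb.ne' (by simpa using congrArg Cub.a h))
    simpa [N] using fun h => this (by simp [N]; linarith)
  have hF : 0 < a ^ 2 + b ^ 2 := by positivity
  have hn0 : n ≠ 0 := by
    rintro rfl
    have := mul_ne_zero hF.ne' (mul_ne_zero hb.ne' hW)
    exact this (by rw [e]; norm_num)
  have npb : ∀ p : ℤ, Prime p → p ∣ a ^ 2 + b ^ 2 → ¬ p ∣ b := by
    intro p hp h1 h2
    have : p ∣ a ^ 2 := (dvd_add_left (dvd_pow h2 (by norm_num))).1 h1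
    exact not_dvd_coprime hab hp (hp.dvd_of_dvd_pow this) h2
  obtain ⟨d, f, k, hd, e1, e2⟩ := sq_five_int (a ^ 2 + b ^ 2) (b * (b ^ 3 - 2 * a ^ 3)) n hF hn0 e (by
    intro p hp h1 h2
    have hpb := npb p hp h1
    rcases hp.dvd_or_dvd h2 with h2 | h2
    · exact absurd h2 hpb
    · have h3 : p ∣ b ^ 2 * (b + 2 * a) := by
        have := dvd_add h2 (h1.mul_left (2 * a))
        rwa [show b ^ 3 - 2 * a ^ 3 + 2 * a * (a ^ 2 + b ^ 2) = b ^ 2 * (b + 2 * a) by ring] at this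
      have h4 : p ∣ b + 2 * a := by
        rcases hp.dvd_or_dvd h3 with h | h
        · exact absurd (hp.dvd_of_dvd_pow h) hpb
        · exact h
      have h5 : p ∣ 5 * b ^ 2 := by
        have := dvd_sub (h1.mul_left 4) (h4.mul_left (2 * a - b))
        rwa [show 4 * (a ^ 2 + b ^ 2) - (2 * a - b) * (b + 2 * a) = 5 * b ^ 2 by ring] at this
      rcases hp.dvd_or_dvd h5 with h | h
      · exact h
      · exact absurd (hp.dvd_of_dvd_pow h) hpb)
  have hd5 : d = 1 ∨ (d = 5 ∧ ¬ (5:ℤ) ∣ b) := by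
    rcases hd with rfl | rfl
    · left; rfl
    · exact Or.inr ⟨rfl, npb 5 (by norm_num) ⟨_, e1⟩⟩
  by_cases hb2 : (2:ℤ) ∣ b
  · right
    obtain ⟨b', rfl⟩ := hb2
    have ha2 : ¬ (2:ℤ) ∣ a := fun h => not_dvd_coprime hab Int.prime_two h ⟨b', rfl⟩
    have hab' : IsCoprime a b' := IsCoprime.of_mul_right_right hab
    obtain ⟨k', rfl⟩ : (2:ℤ) ∣ k := by
      have : (2:ℤ) ∣ d * k ^ 2 := ⟨b' * (8 * b' ^ 3 - 2 * a ^ 3), by rw [← e2]; ring⟩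
      rcases Int.prime_two.dvd_or_dvd this with h | h
      · rcases hd with rfl | rfl <;> omega
      · exact Int.prime_two.dvd_of_dvd_pow h
    obtain ⟨β, γ, rfl, hγ⟩ := sq_split_pos b' (4 * b' ^ 3 - a ^ 3) k' d (by
        rcases hd5 with h | ⟨h, h'⟩
        · left; exact h
        · exact Or.inr ⟨h, fun h => h' (h.mul_left _)⟩) (by linarith)
        (coprime_of_prime (fun p hp p1 p2 => not_dvd_coprime hab' hp (by
            have h1 : p ∣ 4 * b' ^ 3 := (dvd_pow p1 (by norm_num)).mul_left _
            have h2 : p ∣ a ^ 3 := by simpa using dvd_sub h1 p2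
            exact hp.dvd_of_dvd_pow h2) p1)) (by linarith)
    have hc : IsCoprime a β := hab'.of_isCoprime_of_dvd_right (Dvd.intro _ (pow_two β).symm)
    have hγ' : 4 * β ^ 6 - a ^ 3 = d * γ ^ 2 := by rw [← hγ]; ring
    rcases hd with rfl | rfl
    · exact absurd (classII _ β γ a le_rfl (by rintro rfl; simp at hb) ha2 hc (by linarith)) id
    · have h2 : a ^ 2 + 4 * β ^ 4 = 5 * f ^ 2 := by rw [← e1]; ring
      obtain ⟨g1, g2, w, hw⟩ := d5_reduce a β γ f ha2 hc hγ' h2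
      exact ⟨a, β, f, w, by rw [hτ]; push_cast; ring, g1, g2, h2, hw⟩
  · left
    have hc : IsCoprime b (b ^ 3 - 2 * a ^ 3) := coprime_of_prime (fun p hp p1 p2 => by
      have h1 : p ∣ b ^ 3 := dvd_pow p1 (by norm_num)
      have h2 : p ∣ 2 * a ^ 3 := by simpa using dvd_sub h1 p2
      rcases hp.dvd_or_dvd h2 with h3 | h3
      · exact hb2 ((hp.associated_of_dvd Int.prime_two h3).symm.dvd.trans p1)
      · exact not_dvd_coprime hab hp (hp.dvd_of_dvd_pow h3) p1)
    obtain ⟨β, γ, rfl, hγ⟩ := sq_split_pos b _ k d hd5 hb hc e2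
    have hβ2 : ¬ (2:ℤ) ∣ β := fun h => hb2 (dvd_pow h (by norm_num))
    have hca : IsCoprime a β := hab.of_isCoprime_of_dvd_right (Dvd.intro _ (pow_two β).symm)
    rcases hd with rfl | rfl
    · have := classI _ β γ a le_rfl hβ2 hca (by linarith)
      rw [hτ, this]; simp
    · exfalso
      have key : ∀ a b g e : ZMod 8, b ^ 6 - 2 * a ^ 3 = 5 * g ^ 2 → a ^ 2 + b ^ 4 = 5 * e ^ 2 →
        4 * b ≠ 0 → False := by decide +kernel
      refine key a β γ f ?_ ?_ ?_
      · have : β ^ 6 - 2 * a ^ 3 = 5 * γ ^ 2 := by rw [← hγ]; ring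
        exact_mod_cast congrArg (Int.cast : ℤ → ZMod 8) this
      · have : a ^ 2 + β ^ 4 = 5 * f ^ 2 := by rw [← e1]; ring
        exact_mod_cast congrArg (Int.cast : ℤ → ZMod 8) this
      · intro h
        have : ((4 * β : ℤ) : ZMod 8) = 0 := by exact_mod_cast h
        have := (ZMod.intCast_zmod_eq_zero_iff_dvd _ 8).1 this
        omega

end Cub


namespace Cub

/-- Codes of the squares modulo 16. -/
def sqs : List ℕ := [
  0, 1, 4, 9, 32, 65, 73, 128, 129, 137, 172, 193, 201, 256, 264, 289, 292, 297, 300, 324, 332,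
  353, 361, 384, 392, 417, 420, 425, 428, 452, 460, 481, 489, 545, 553, 609, 617, 673, 681,
  737, 745, 773, 781, 837, 845, 901, 909, 965, 973, 1024, 1025, 1033, 1060, 1064, 1089, 1097,
  1152, 1153, 1156, 1161, 1217, 1225, 1313, 1321, 1376, 1377, 1384, 1385, 1441, 1449, 1504,
  1505, 1512, 1513, 1569, 1577, 1633, 1641, 1697, 1705, 1761, 1769, 1797, 1805, 1861, 1869,
  1925, 1933, 1989, 1997, 2049, 2057, 2080, 2113, 2121, 2177, 2180, 2185, 2220, 2241, 2249,
  2304, 2312, 2337, 2340, 2345, 2348, 2372, 2380, 2401, 2409, 2432, 2440, 2465, 2468, 2473,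
  2476, 2500, 2508, 2529, 2537, 2593, 2601, 2657, 2665, 2721, 2729, 2785, 2793, 2821, 2829,
  2885, 2893, 2949, 2957, 3013, 3021, 3073, 3076, 3081, 3108, 3112, 3137, 3145, 3201, 3209,
  3265, 3273, 3361, 3369, 3424, 3425, 3432, 3433, 3489, 3497, 3552, 3553, 3560, 3561, 3617,
  3625, 3681, 3689, 3745, 3753, 3809, 3817, 3845, 3853, 3909, 3917, 3973, 3981, 4037, 4045]

/-- The twelve quartic covers to be excluded. -/
def cls : List (Cub ℤ × Cub ℤ) := [
  (⟨-1, 1, 0⟩, ⟨15, 5, 10⟩), (⟨-3, -1, 3⟩, ⟨5, 5, 5⟩), (⟨1, 1, -1⟩, ⟨9, 3, 1⟩),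
  (⟨-5, 5, 0⟩, ⟨3, 1, 2⟩), (⟨-1, 0, 0⟩, ⟨-5, -10, 5⟩), (⟨-1, -2, 1⟩, ⟨-5, 0, 0⟩),
  (⟨-1, 0, -1⟩, ⟨7, -6, -2⟩), (⟨-5, 0, 0⟩, ⟨-1, -2, 1⟩), (⟨1, -1, 0⟩, ⟨-15, -5, -10⟩),
  (⟨3, 1, -3⟩, ⟨-5, -5, -5⟩), (⟨-1, -1, 1⟩, ⟨-9, -3, -1⟩), (⟨5, -5, 0⟩, ⟨-3, -1, -2⟩)]

/-- Code of a residue modulo 16. -/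
def cd (x : Cub ℤ) : ℕ := (x.a % 16).toNat + 16 * (x.b % 16).toNat + 256 * (x.c % 16).toNat

lemma cd_add (x k : Cub ℤ) : cd (x + 16 * k) = cd x := by
  have h1 : (x + 16 * k).a = x.a + 16 * k.a := by simp
  have h2 : (x + 16 * k).b = x.b + 16 * k.b := by simp
  have h3 : (x + 16 * k).c = x.c + 16 * k.c := by simp
  simp only [cd, h1, h2, h3, Int.add_mul_emod_self_left]

lemma sq_code0 : ∀ a ∈ List.range 8, ∀ b ∈ List.range 8, ∀ c ∈ List.range 8,
    sqs.contains (cd ((⟨a, b, c⟩ : Cub ℤ) * ⟨a, b, c⟩)) = true := by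
  decide +kernel

lemma split_mod (m : ℕ) (hm : 0 < m) (x : Cub ℤ) : ∃ a ∈ List.range m, ∃ b ∈ List.range m,
    ∃ c ∈ List.range m, ∃ y : Cub ℤ, x = ⟨(a : ℕ), (b : ℕ), (c : ℕ)⟩ + (m : Cub ℤ) * y := by
  have h : ∀ z : ℤ, ∃ a ∈ List.range m, z = (a : ℕ) + m * (z / m) := by
    intro z
    have h1 := Int.emod_nonneg z (by omega : (m : ℤ) ≠ 0)
    have h2 := Int.emod_lt_of_pos z (by omega : 0 < (m : ℤ))
    refine ⟨(z % m).toNat, by simp; omega, ?_⟩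
    rw [Int.toNat_of_nonneg h1]
    exact (Int.emod_add_mul_ediv z m).symm
  obtain ⟨a, ha, ha'⟩ := h x.a
  obtain ⟨b, hb, hb'⟩ := h x.b
  obtain ⟨c, hc, hc'⟩ := h x.c
  refine ⟨a, ha, b, hb, c, hc, ⟨x.a / m, x.b / m, x.c / m⟩, ?_⟩
  ext
  · simpa using ha'
  · simpa using hb'
  · simpa using hc'

lemma sq_code (n : Cub ℤ) : sqs.contains (cd (n * n)) = true := by
  obtain ⟨a, ha, b, hb, c, hc, y, rfl⟩ := split_mod 8 (by norm_num) n
  have := sq_code0 a ha b hb c hc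
  rw [← cd_add _ ((⟨(a : ℕ), (b : ℕ), (c : ℕ)⟩ : Cub ℤ) * y + 4 * y * y)] at this
  rw [← this]
  congr 2
  push_cast
  ring

/-- The quartic. -/
def qt (A D W : Cub ℤ) : Cub ℤ := A - 2 * (rr * (W * W)) + D * ((W * W) * (W * W))

lemma quart1 : ∀ P ∈ cls, ∀ a ∈ List.range 4, ∀ b ∈ List.range 4, ∀ c ∈ List.range 4,
    sqs.contains (cd (qt P.1 P.2 ⟨(a : ℕ), (b : ℕ), (c : ℕ)⟩)) = false := by
  decide +kernel

lemma quart2 : ∀ P ∈ cls, ∀ a ∈ [0, 2], ∀ b ∈ List.range 4, ∀ c ∈ List.range 4,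
    sqs.contains (cd (qt P.2 P.1 ⟨(a : ℕ), (b : ℕ), (c : ℕ)⟩)) = false := by
  decide +kernel

lemma qt_add (A D W Y : Cub ℤ) : ∃ k, qt A D (W + (4 : ℕ) * Y) = qt A D W + 16 * k :=
  ⟨- rr * (W * Y + 2 * Y * Y) + D * (W * W * (W * Y + 2 * Y * Y) +
    4 * (W * Y + 2 * Y * Y) * (W * Y + 2 * Y * Y)), by simp only [qt]; push_cast; ring⟩

lemma quart1' (P : Cub ℤ × Cub ℤ) (hP : P ∈ cls) (W n k : Cub ℤ)
    (h : n * n = qt P.1 P.2 W + 16 * k) : False := by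
  obtain ⟨a, ha, b, hb, c, hc, y, rfl⟩ := split_mod 4 (by norm_num) W
  obtain ⟨l, hl⟩ := qt_add P.1 P.2 ⟨(a : ℕ), (b : ℕ), (c : ℕ)⟩ y
  have h1 := quart1 P hP a ha b hb c hc
  have h2 := sq_code n
  rw [h, hl, cd_add, cd_add, h1] at h2
  exact absurd h2 (by simp)

lemma quart2' (P : Cub ℤ × Cub ℤ) (hP : P ∈ cls) (W n k : Cub ℤ) (hW : (2 : ℤ) ∣ W.a)
    (h : n * n = qt P.2 P.1 W + 16 * k) : False := by
  obtain ⟨a, ha, b, hb, c, hc, y, rfl⟩ := split_mod 4 (by norm_num) W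
  obtain ⟨l, hl⟩ := qt_add P.2 P.1 ⟨(a : ℕ), (b : ℕ), (c : ℕ)⟩ y
  have ha' : a ∈ [0, 2] := by
    simp at hW ha ⊢
    omega
  have h1 := quart2 P hP a ha' b hb c hc
  have h2 := sq_code n
  rw [h, hl, cd_add, cd_add, h1] at h2
  exact absurd h2 (by simp)

/-- elements with odd first coordinate are invertible modulo 16 -/
lemma inv16 (u : Cub ℤ) (hu : ¬ (2 : ℤ) ∣ u.a) : ∃ v k, u * v = 1 + 16 * k := by
  have hN : N u % 2 = 1 := by
    have e : N u = u.a ^ 3 + 2 * (u.b ^ 3 + 2 * u.c ^ 3 - 3 * u.a * u.b * u.c) := by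
      simp only [N]; ring
    have : u.a % 2 = 1 := by omega
    rw [e, Int.add_mul_emod_self_left, pow_succ, pow_two, Int.mul_emod, Int.mul_emod u.a u.a, this]
    rfl
  have hc : IsCoprime (N u) ((2 : ℤ) ^ 4) := by
    apply IsCoprime.pow_right
    refine ⟨1, -(N u / 2), by omega⟩
  obtain ⟨m, l, hml⟩ := hc
  refine ⟨C m * adj u, C (-l), ?_⟩
  rw [mul_left_comm, mul_adj]
  ext
  · simp [C]; linarith
  · simp [C]
  · simp [C]

lemma quart_none (P : Cub ℤ × Cub ℤ) (hP : P ∈ cls) (u w n : Cub ℤ) (huw : ¬ ((2 : ℤ) ∣ u.a ∧ (2 : ℤ) ∣ w.a))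
    (h : n * n = P.1 * ((u * u) * (u * u)) - 2 * (rr * ((u * u) * (w * w))) + P.2 * ((w * w) * (w * w))) :
    False := by
  have key : ∀ (A D u w u' k : Cub ℤ), u * u' = 1 + 16 * k →
      n * n = A * ((u * u) * (u * u)) - 2 * (rr * ((u * u) * (w * w))) + D * ((w * w) * (w * w)) →
      ∃ l, (n * (u' * u')) * (n * (u' * u')) = qt A D (w * u') + 16 * l := by
    intro A D u w u' k e h
    have e2 : (u * u') * (u * u') = 1 + 16 * (2 * k + 16 * k * k) := by rw [e]; ring
    set K := 2 * k + 16 * k * k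
    refine ⟨A * (2 * K + 16 * K * K) - 2 * rr * ((w * u') * (w * u')) * K, ?_⟩
    calc (n * (u' * u')) * (n * (u' * u')) = (n * n) * ((u' * u') * (u' * u')) := by ring
      _ = A * (((u * u') * (u * u')) * ((u * u') * (u * u'))) -
          2 * rr * (w * u' * (w * u')) * ((u * u') * (u * u'))
          + D * ((w * u' * (w * u')) * (w * u' * (w * u'))) := by rw [h]; ring
      _ = _ := by rw [e2, qt]; ring
  by_cases hu : (2 : ℤ) ∣ u.a
  · have hw : ¬ (2 : ℤ) ∣ w.a := fun h => huw ⟨hu, h⟩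
    obtain ⟨w', k, e⟩ := inv16 w hw
    obtain ⟨l, hl⟩ := key P.2 P.1 w u w' k e (by rw [h]; ring)
    refine quart2' P hP _ _ _ ?_ hl
    simp only [mul_a]
    exact dvd_add (hu.mul_right _) (Dvd.intro _ rfl)
  · obtain ⟨u', k, e⟩ := inv16 u hu
    obtain ⟨l, hl⟩ := key P.1 P.2 u w u' k e h
    exact quart1' P hP _ _ _ hl

end Cub


namespace Cub

lemma io_ne {x : Cub ℤ} (h : x ≠ 0) : io x ≠ 0 := fun h0 => h (io_inj (by simpa using h0))

lemma exists_frac (x : Cub ℚ) : ∃ p q : Cub ℤ, q ≠ 0 ∧ IsCoprime p q ∧ x * io q = io p := by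
  classical
  obtain ⟨m, z, hm, hz⟩ := exists_int x
  have hm' : (m : Cub ℤ) ≠ 0 := fun h => hm (by simpa using congrArg Cub.a h)
  have e : x * io (m : Cub ℤ) = io z := by rw [map_intCast]; exact hz
  have hg0 : EuclideanDomain.gcd z (m : Cub ℤ) ≠ 0 := fun h => hm' (EuclideanDomain.gcd_eq_zero_iff.1 h).2
  have hgab := EuclideanDomain.gcd_eq_gcd_ab z (m : Cub ℤ)
  have e1 := EuclideanDomain.mul_div_cancel' hg0 (EuclideanDomain.gcd_dvd_left z (m : Cub ℤ))
  have e2 := EuclideanDomain.mul_div_cancel' hg0 (EuclideanDomain.gcd_dvd_right z (m : Cub ℤ))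
  set g := EuclideanDomain.gcd z (m : Cub ℤ)
  set p := z / g
  set q := (m : Cub ℤ) / g
  have hc : IsCoprime p q := by
    refine ⟨EuclideanDomain.gcdA z (m : Cub ℤ), EuclideanDomain.gcdB z (m : Cub ℤ), ?_⟩
    apply mul_left_cancel₀ hg0
    linear_combination (EuclideanDomain.gcdA z (m : Cub ℤ)) * e1 +
      (EuclideanDomain.gcdB z (m : Cub ℤ)) * e2 - hgab
  refine ⟨p, q, ?_, hc, ?_⟩
  · rintro h
    rw [h, mul_zero] at e2
    exact hm' e2.symm
  · apply mul_left_cancel₀ (io_ne hg0)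
    rw [← map_mul, e1, ← e, ← e2, map_mul]
    ring

lemma exists_root (n : Cub ℚ) (m : Cub ℤ) (h : n ^ 2 = io m) : ∃ k, n = io k := by
  obtain ⟨p, q, hq, hc, e⟩ := exists_frac n
  have e1 : p ^ 2 = m * q ^ 2 := by
    apply io_inj
    simp only [map_mul, map_pow]
    rw [← e, ← h]; ring
  have h1 : IsUnit q := by
    have h2 : q ∣ p ^ 2 := ⟨m * q, by rw [e1]; ring⟩
    exact (hc.symm.pow_right (n := 2)).isUnit_of_dvd' dvd_rfl h2
  obtain ⟨r, hr⟩ := h1.exists_right_inv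
  refine ⟨p * r, ?_⟩
  rw [map_mul, ← e, mul_assoc, ← map_mul, hr, map_one, mul_one]

lemma neg_sq_absurd (z w : Cub ℚ) (hw : w ≠ 0) (h : z ^ 2 = - w ^ 2) : False := by
  have h1 := congrArg N h
  rw [N_neg, N_pow, N_pow] at h1
  have h2 := N_rat_ne hw
  have : 0 < N w ^ 2 := by positivity
  nlinarith [sq_nonneg (N z)]

/-- `π = 1 + θ²` in the field. -/
def ppi : Cub ℚ := ⟨1, 0, 1⟩
/-- `ρ = 5 / π` in the field. -/
def rho : Cub ℚ := ⟨1, 2, -1⟩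
lemma io_pp : io pp = ppi := by ext <;> simp [pp, ppi]
lemma io_rr : io rr = rho := by ext <;> simp [rr, rho]
lemma rho_mul : rho * (1 + th ^ 2) = 5 := by rw [pow_two]; ext <;> norm_num [rho]
lemma ppi_eq : ppi = 1 + th ^ 2 := by rw [pow_two]; ext <;> simp [ppi]
lemma rho_ne : rho ≠ 0 := fun h => by simpa [rho] using congrArg Cub.a h
lemma th_ne : (th : Cub ℚ) ≠ 0 := fun h => by simpa using congrArg Cub.b h
lemma th3q : (th : Cub ℚ) ^ 3 = 2 := th3

lemma quad_ne (x : Cub ℚ) : x ^ 2 - 2 * rho * x + 5 * rho ≠ 0 := by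
  intro h
  refine neg_sq_absurd (x - rho) (rho * th) (mul_ne_zero rho_ne th_ne) ?_
  linear_combination h + rho * rho_mul

lemma cls_mem : ∀ s : Cub ℤ, (s = 1 ∨ s = -1) → ∀ i < 2, ∀ j < 2, ∀ k < 2, ¬ (s = 1 ∧ i = 0) →
    ∃ D, (s * ep ^ i * (pp ^ j * rr ^ k), D) ∈ cls ∧ s * ep ^ i * (pp ^ j * rr ^ k) * D = 5 * rr := by
  have key : ∀ A A' D : Cub ℤ, (A', D) ∈ cls → A = A' → A' * D = 5 * rr → ∃ D, (A, D) ∈ cls ∧ A * D = 5 * rr := by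
    rintro A A' D h rfl h'; exact ⟨D, h, h'⟩
  have r1 : (5 : Cub ℤ) * rr = ⟨5, 10, -5⟩ := by ext <;> simp [rr]
  rintro s hs i hi j hj k hk h
  rw [r1] at *
  have fin : ∀ A : Cub ℤ, (cls.any fun P => decide (A.a = P.1.a ∧ A.b = P.1.b ∧ A.c = P.1.c) && decide ((P.1 * P.2).a = 5 ∧ (P.1 * P.2).b = 10 ∧ (P.1 * P.2).c = -5)) = true →
      ∃ D, (A, D) ∈ cls ∧ A * D = ⟨5, 10, -5⟩ := by
    intro A hA
    rw [List.any_eq_true] at hA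
    obtain ⟨⟨B, D⟩, hm, hB⟩ := hA
    simp only [Bool.and_eq_true, decide_eq_true_eq] at hB
    have : A = B := by ext; exacts [hB.1.1, hB.1.2.1, hB.1.2.2]
    subst this
    exact ⟨D, hm, by ext; exacts [hB.2.1, hB.2.2.1, hB.2.2.2]⟩
  apply fin
  rcases hs with rfl | rfl <;> interval_cases i <;> interval_cases j <;> interval_cases k <;>
    first
    | exact absurd ⟨rfl, rfl⟩ h
    | (simp only [pow_zero, pow_one, mul_one, one_mul]; decide +kernel)

lemma lemmaA (x y : Cub ℚ) (hx : x ≠ 0) (h : y ^ 2 = x * (x ^ 2 - 2 * rho * x + 5 * rho)) :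
    ∃ j < 2, ∃ k < 2, ∃ v : Cub ℚ, x = ppi ^ j * rho ^ k * v ^ 2 := by
  obtain ⟨p, q, hq, hc, e⟩ := exists_frac x
  have hq' := io_ne hq
  have hy : y ≠ 0 := by
    rintro rfl
    have := mul_ne_zero hx (quad_ne x)
    exact this (by rw [← h]; ring)
  have e1 : (y * io q ^ 2) ^ 2 = io ((p * q) * (p ^ 2 - 2 * rr * (p * q) + 5 * rr * q ^ 2)) := by
    simp only [map_mul, map_add, map_sub, map_pow, map_ofNat, io_rr, ← e]
    linear_combination io q ^ 4 * h
  obtain ⟨n, hn⟩ := exists_root _ _ e1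
  have hn0 : n ≠ 0 := by
    rintro rfl
    rw [map_zero] at hn
    exact mul_ne_zero hy (pow_ne_zero 2 hq') hn
  have e2 : (p * q) * (p ^ 2 - 2 * rr * (p * q) + 5 * rr * q ^ 2) = n ^ 2 := by
    apply io_inj
    rw [← e1, hn, map_pow]
  obtain ⟨u, h0, j, hj, k, hk, hu, e3⟩ := factor_sq pp rr pp_prime rr_prime _ _ n hn0 e2 (by
    intro r hr h1 h2
    have hnd : r ∣ p → r ∣ q → False := fun a b => hr.not_isUnit (hc.isUnit_of_dvd' a b)
    have h3 : r ∣ p ^ 2 + 5 * rr * q ^ 2 := by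
      have := dvd_add h2 (h1.mul_left (2 * rr))
      convert this using 1; ring
    rcases hr.dvd_or_dvd h1 with hp | hp
    · have h4 : r ∣ 5 * rr * q ^ 2 := (dvd_add_right (hp.mul_left p |>.trans (by rw [pow_two]))).1 h3
      have h5 : r ∣ 5 * rr := (hr.dvd_or_dvd h4).resolve_right fun h => hnd hp (hr.dvd_of_dvd_pow h)
      rw [← pp_rr] at h5
      rcases hr.dvd_or_dvd h5 with h5 | h5
      · rcases hr.dvd_or_dvd h5 with h5 | h5
        · exact Or.inl ((hr.associated_of_dvd pp_prime h5).symm)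
        · exact Or.inr ((hr.associated_of_dvd rr_prime h5).symm)
      · exact Or.inr ((hr.associated_of_dvd rr_prime h5).symm)
    · have h4 : r ∣ p ^ 2 := (dvd_add_left (Dvd.dvd.mul_left (dvd_pow hp two_ne_zero) _)).1 h3
      exact (hnd (hr.dvd_of_dvd_pow h4) hp).elim)
  obtain ⟨s, hs, i, hi, w, e4⟩ := units_all u hu
  have e5 : x = io (s * ep ^ i * (pp ^ j * rr ^ k)) * (io (h0 * w) / io q) ^ 2 := by
    have : x = io (p * q) / io q ^ 2 := by
      rw [map_mul, ← e]; field_simp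
    rw [this, e3, e4]
    simp only [map_mul, map_pow]
    field_simp
  by_cases hsi : s = 1 ∧ i = 0
  · obtain ⟨rfl, rfl⟩ := hsi
    refine ⟨j, hj, k, hk, io (h0 * w) / io q, ?_⟩
    rw [e5]
    simp only [map_mul, map_pow, io_pp, io_rr, pow_zero, mul_one, map_one, one_mul]
  exfalso
  obtain ⟨D, hD, hAD⟩ := cls_mem s hs i hi j hj k hk hsi
  set A := s * ep ^ i * (pp ^ j * rr ^ k)
  set v := io (h0 * w) / io q
  have hv : v ≠ 0 := by rintro h; apply hx; rw [e5, h]; ring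
  have hA : io A ≠ 0 := by rintro h; apply hx; rw [e5, h]; ring
  obtain ⟨a, b, hb, hab, e6⟩ := exists_frac v
  have hb' := io_ne hb
  have hAD' : io A * io D = 5 * rho := by rw [← map_mul, hAD, map_mul, map_ofNat, io_rr]
  have e7 : (y / (v * io A) * io b ^ 2) ^ 2 =
      io (A * ((a * a) * (a * a)) - 2 * (rr * ((a * a) * (b * b))) + D * ((b * b) * (b * b))) := by
    simp only [map_mul, map_add, map_sub, map_pow, map_ofNat, io_rr, ← e6]
    field_simp
    rw [h, e5]
    linear_combination (-io A * v^2) * hAD'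
  obtain ⟨m, hm⟩ := exists_root _ _ e7
  refine quart_none (A, D) hD a b m ?_ ?_
  · rintro ⟨⟨a1, h1⟩, b1, h2⟩
    obtain ⟨c, d, hcd⟩ := hab
    have := congrArg Cub.a hcd
    simp only [add_a, mul_a, one_a, h1, h2] at this
    have h3 : (2 : ℤ) ∣ 1 := ⟨c.a * a1 + (c.b * a.c + c.c * a.b) + (d.a * b1) + (d.b * b.c + d.c * b.b), by
      rw [← this]; ring⟩
    norm_num at h3
  · apply io_inj
    rw [← e7, hm, map_mul]; ring

end Cub


namespace Cub

lemma M_congr (x y : Cub ℤ) (h : rr ∣ x - y) : M x ≡ M y [ZMOD 5] := by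
  obtain ⟨⟨u, hu⟩, v, hv⟩ := (dvd_rr_iff _).1 h
  simp only [sub_a, sub_b, sub_c] at hu hv
  have h1 : x.a + x.c = y.a + y.c + 5 * u := by linarith
  have h2 : x.b + 2 * x.c = y.b + 2 * y.c + 5 * v := by linarith
  apply Int.ModEq.symm
  rw [Int.modEq_iff_dvd]
  simp only [M, h1, h2]
  exact ⟨2 * (y.a + y.c) * u + 5 * u ^ 2 + 2 * ((y.a + y.c) * v + u * (y.b + 2 * y.c) + 5 * u * v)
    - 2 * (y.b + 2 * y.c) * v - 5 * v ^ 2, by ring⟩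

lemma nonres (S κ T : Cub ℤ) (hκ : M κ % 5 = 2 ∨ M κ % 5 = 3) (h : rr ∣ S ^ 2 - κ * T ^ 2) :
    rr ∣ S ∧ rr ∣ T := by
  have h1 := M_congr _ _ h
  have h2 : M (S ^ 2) ≡ M S * M S [ZMOD 5] := by rw [pow_two]; exact M_mul _ _
  have h3 : M (κ * T ^ 2) ≡ M κ * (M T * M T) [ZMOD 5] := by
    rw [pow_two]
    exact (M_mul _ _).trans ((M_mul _ _).mul_left _)
  have h4 : M S * M S ≡ M κ * (M T * M T) [ZMOD 5] := h2.symm.trans (h1.trans h3)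
  have hT : rr ∣ T := by
    apply M_dvd
    have key : ∀ s k t : ZMod 5, s * s = k * (t * t) → (k = 2 ∨ k = 3) → t = 0 := by decide
    refine (ZMod.intCast_zmod_eq_zero_iff_dvd _ 5).1 ?_
    refine key (M S) (M κ) (M T) ?_ ?_
    · have := (ZMod.intCast_eq_intCast_iff _ _ 5).2 h4
      exact_mod_cast this
    · rcases hκ with h | h
      · left
        have : M κ ≡ 2 [ZMOD 5] := h
        exact_mod_cast (ZMod.intCast_eq_intCast_iff _ _ 5).2 this
      · right
        have : M κ ≡ 3 [ZMOD 5] := h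
        exact_mod_cast (ZMod.intCast_eq_intCast_iff _ _ 5).2 this
  refine ⟨?_, hT⟩
  have h5 : rr ∣ S ^ 2 := by
    have := dvd_add h ((dvd_pow hT two_ne_zero).mul_left κ)
    rwa [sub_add_cancel] at this
  exact rr_prime.dvd_of_dvd_pow h5

lemma rr_not_th : ¬ rr ∣ (th : Cub ℤ) := by
  rw [dvd_rr_iff]; simp

lemma caseB0 (s u w m : Cub ℤ) (hs : s = 1 ∨ s = -1) (hc : IsCoprime u w)
    (h : m ^ 2 = s * ep * u ^ 4 + th ^ 2 * rr * u ^ 2 * w ^ 2 - s * ei * rr ^ 2 * w ^ 4) : False := by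
  obtain ⟨⟨m', rfl⟩, hu2⟩ := nonres m (s * ep) (u ^ 2) (by
    rcases hs with rfl | rfl <;> simp [M, ep]) ⟨th ^ 2 * u ^ 2 * w ^ 2 - s * ei * rr * w ^ 4, by rw [h]; ring⟩
  have hu := rr_prime.dvd_of_dvd_pow hu2
  have hu' := hu
  obtain ⟨u', rfl⟩ := hu
  have e : m' ^ 2 = s * ep * rr ^ 2 * u' ^ 4 + th ^ 2 * rr * u' ^ 2 * w ^ 2 - s * ei * w ^ 4 := by
    apply mul_left_cancel₀ (pow_ne_zero 2 rr_prime.ne_zero)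
    linear_combination h
  obtain ⟨-, hw2⟩ := nonres m' (- s * ei) (w ^ 2) (by
    rcases hs with rfl | rfl <;> simp [M, ei]) ⟨s * ep * rr * u' ^ 4 + th ^ 2 * u' ^ 2 * w ^ 2, by rw [e]; ring⟩
  have hw := rr_prime.dvd_of_dvd_pow hw2
  exact rr_prime.not_isUnit (hc.isUnit_of_dvd' hu' hw)

lemma caseB1 (d d' u w m : Cub ℤ) (hd : d * d' = 1) (hc : IsCoprime u w)
    (h : m ^ 2 = d * rr * u ^ 4 + th ^ 2 * rr * u ^ 2 * w ^ 2 - d' * rr * w ^ 4) : False := by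
  have hm : rr ∣ m := rr_prime.dvd_of_dvd_pow (n := 2) ⟨d * u ^ 4 + th ^ 2 * u ^ 2 * w ^ 2 - d' * w ^ 4, by
    rw [h]; ring⟩
  obtain ⟨m', rfl⟩ := hm
  have e : rr * m' ^ 2 = d * u ^ 4 + th ^ 2 * u ^ 2 * w ^ 2 - d' * w ^ 4 := by
    apply mul_left_cancel₀ rr_prime.ne_zero
    linear_combination h
  have h3 : (th : Cub ℤ) ^ 3 = 2 := th3
  have hp : pp = 1 + (th : Cub ℤ) ^ 2 := by rw [pow_two]; ext <;> simp [pp]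
  obtain ⟨hS, hT⟩ := nonres (2 * d * u ^ 2 + th ^ 2 * w ^ 2) pp (th ^ 2 * w ^ 2) (by
    simp [M, pp]) ⟨4 * d * m' ^ 2, by
      rw [hp]; linear_combination -(4 * d) * e + 4 * w ^ 4 * hd - w ^ 4 * (th ^ 3 + 2) * h3⟩
  have hw : rr ∣ w := by
    rcases rr_prime.dvd_or_dvd hT with h | h
    · exact (rr_not_th (rr_prime.dvd_of_dvd_pow h)).elim
    · exact rr_prime.dvd_of_dvd_pow h
  have h1 : rr ∣ 2 * d * u ^ 2 := (dvd_add_left hT).1 hS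
  have h2 : rr ∣ 2 * u ^ 2 := by
    have := h1.mul_left d'
    rwa [show d' * (2 * d * u ^ 2) = 2 * u ^ 2 by linear_combination 2 * u ^ 2 * hd] at this
  have hu : rr ∣ u := by
    rcases rr_prime.dvd_or_dvd h2 with h | h
    · rw [← h3] at h
      exact (rr_not_th (rr_prime.dvd_of_dvd_pow h)).elim
    · exact rr_prime.dvd_of_dvd_pow h
  exact rr_prime.not_isUnit (hc.isUnit_of_dvd' hu hw)

lemma ppi_not_sq (z : Cub ℚ) (h : z ^ 2 = ppi) : False := by
  rw [← io_pp] at h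
  obtain ⟨k, rfl⟩ := exists_root _ _ h
  rw [← map_pow] at h
  have h1 := congrArg N (io_inj h)
  rw [N_pow, N_pp] at h1
  have h2 : N k ≤ 2 := by nlinarith
  have h3 : -2 ≤ N k := by nlinarith
  interval_cases N k <;> omega

lemma lemmaB (x y : Cub ℚ) (hx : x ≠ 0) (h : y ^ 2 = x * (x ^ 2 + th ^ 2 * rho * x - rho ^ 2)) :
    ∃ v : Cub ℚ, x = v ^ 2 ∨ x = - v ^ 2 := by
  obtain ⟨p, q, hq, hc, e⟩ := exists_frac x
  have hq' := io_ne hq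
  have hy : y ≠ 0 := by
    rintro rfl
    have h0 : x ^ 2 + th ^ 2 * rho * x - rho ^ 2 = 0 := by
      by_contra h1
      exact mul_ne_zero hx h1 (by rw [← h]; ring)
    apply ppi_not_sq ((2 * x + th ^ 2 * rho) / (rho * th ^ 2))
    have h1 := rho_ne
    have h2 := th_ne
    rw [ppi_eq]
    field_simp
    linear_combination 4 * h0 - rho ^ 2 * (th ^ 3 + 2) * th3q
  have e1 : (y * io q ^ 2) ^ 2 = io ((p * q) * (p ^ 2 + th ^ 2 * rr * (p * q) - rr ^ 2 * q ^ 2)) := by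
    simp only [map_mul, map_add, map_sub, map_pow, io_rr, io_th, ← e]
    linear_combination io q ^ 4 * h
  obtain ⟨n, hn⟩ := exists_root _ _ e1
  have hn0 : n ≠ 0 := by
    rintro rfl
    rw [map_zero] at hn
    exact mul_ne_zero hy (pow_ne_zero 2 hq') hn
  have e2 : (p * q) * (p ^ 2 + th ^ 2 * rr * (p * q) - rr ^ 2 * q ^ 2) = n ^ 2 := by
    apply io_inj
    rw [← e1, hn, map_pow]
  obtain ⟨u, h0, j, hj, k, hk, hu, e3⟩ := factor_sq rr rr rr_prime rr_prime _ _ n hn0 e2 (by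
    intro r hr h1 h2
    have hnd : r ∣ p → r ∣ q → False := fun a b => hr.not_isUnit (hc.isUnit_of_dvd' a b)
    have h3 : r ∣ p ^ 2 - rr ^ 2 * q ^ 2 := by
      have := dvd_sub h2 (h1.mul_left (th ^ 2 * rr))
      convert this using 1; ring
    left
    rcases hr.dvd_or_dvd h1 with hp | hp
    · have h4 : r ∣ rr ^ 2 * q ^ 2 := (dvd_sub_right (dvd_pow hp two_ne_zero)).1 h3
      have h5 : r ∣ rr ^ 2 := (hr.dvd_or_dvd h4).resolve_right fun h => hnd hp (hr.dvd_of_dvd_pow h)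
      exact (hr.associated_of_dvd rr_prime (hr.dvd_of_dvd_pow h5)).symm
    · have h4 : r ∣ p ^ 2 := (dvd_sub_left (Dvd.dvd.mul_left (dvd_pow hp two_ne_zero) _)).1 h3
      exact (hnd (hr.dvd_of_dvd_pow h4) hp).elim)
  obtain ⟨s, hs, i, hi, w, e4⟩ := units_all u hu
  have e3' : ∃ l < 2, ∃ h1, p * q = s * ep ^ i * rr ^ l * h1 ^ 2 := by
    rw [e3, e4]
    interval_cases j <;> interval_cases k
    · exact ⟨0, by norm_num, w * h0, by ring⟩
    · exact ⟨1, by norm_num, w * h0, by ring⟩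
    · exact ⟨1, by norm_num, w * h0, by ring⟩
    · exact ⟨0, by norm_num, rr * w * h0, by ring⟩
  obtain ⟨l, hl, h1, e3'⟩ := e3'
  have e5 : x = io (s * ep ^ i * rr ^ l) * (io h1 / io q) ^ 2 := by
    have : x = io (p * q) / io q ^ 2 := by
      rw [map_mul, ← e]; field_simp
    rw [this, e3']
    simp only [map_mul, map_pow]
    field_simp
  set v := io h1 / io q
  have hv : v ≠ 0 := by rintro h; apply hx; rw [e5, h]; ring
  obtain ⟨a, b, hb, hab, e6⟩ := exists_frac v
  have hb' := io_ne hb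
  have key : ∀ d d' : Cub ℤ, d * d' = rr ^ 2 → x = io d * v ^ 2 →
      ∃ m, m ^ 2 = d * a ^ 4 + th ^ 2 * rr * a ^ 2 * b ^ 2 - d' * b ^ 4 := by
    intro d d' hdd e5
    have hd : io d ≠ 0 := by rintro h; apply hx; rw [e5, h]; ring
    have hdd' : io d * io d' = rho ^ 2 := by rw [← map_mul, hdd, map_pow, io_rr]
    have e7 : (y / (v * io d) * io b ^ 2) ^ 2 =
        io (d * a ^ 4 + th ^ 2 * rr * a ^ 2 * b ^ 2 - d' * b ^ 4) := by
      simp only [map_mul, map_add, map_sub, map_pow, io_rr, io_th, ← e6]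
      field_simp
      rw [h, e5]
      linear_combination (io d * v^2) * hdd'
    obtain ⟨m, hm⟩ := exists_root _ _ e7
    refine ⟨m, ?_⟩
    apply io_inj
    rw [← e7, hm, map_pow]
  have hss : s * s = 1 := by rcases hs with rfl | rfl <;> ring
  have hei := ep_ei
  interval_cases l
  · interval_cases i
    · refine ⟨v, ?_⟩
      rcases hs with rfl | rfl
      · left; rw [e5]; simp
      · right; rw [e5]; simp
    · exfalso
      obtain ⟨m, hm⟩ := key _ (s * ei * rr ^ 2) (by linear_combination rr ^ 2 * hss * ep * ei + rr ^ 2 * hei) e5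
      exact caseB0 s a b m hs hab (by rw [hm]; ring)
  · exfalso
    obtain ⟨m, hm⟩ := key _ (s * ei ^ i * rr) (by
      have : ep ^ i * ei ^ i = 1 := by rw [← mul_pow, hei, one_pow]
      linear_combination rr ^ 2 * hss * ep ^ i * ei ^ i + rr ^ 2 * this) e5
    refine caseB1 (s * ep ^ i) (s * ei ^ i) a b m ?_ hab (by rw [hm]; ring)
    have : ep ^ i * ei ^ i = 1 := by rw [← mul_pow, hei, one_pow]
    linear_combination hss * ep ^ i * ei ^ i + this

end Cub


namespace Cub

lemma odd_mul {p q : Cub ℤ} (hp : p.a % 2 = 1) (hq : q.a % 2 = 1) : (p * q).a % 2 = 1 := by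
  simp only [mul_a, Int.add_mul_emod_self_left]
  rw [Int.mul_emod, hp, hq]; rfl

lemma odd_ne {q : Cub ℤ} (hq : q.a % 2 = 1) : io q ≠ 0 := by
  apply io_ne
  rintro rfl
  simp at hq

/-- The valuation ring above 2: fractions whose denominator has odd first coordinate. -/
def O : Subring (Cub ℚ) where
  carrier := {x | ∃ p q : Cub ℤ, q.a % 2 = 1 ∧ x * io q = io p}
  zero_mem' := ⟨0, 1, by simp, by simp⟩
  one_mem' := ⟨1, 1, by simp, by simp⟩
  add_mem' := by
    rintro x y ⟨p, q, hq, e⟩ ⟨p', q', hq', e'⟩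
    refine ⟨p * q' + p' * q, q * q', odd_mul hq hq', ?_⟩
    simp only [map_mul, map_add, ← e, ← e']; ring
  mul_mem' := by
    rintro x y ⟨p, q, hq, e⟩ ⟨p', q', hq', e'⟩
    refine ⟨p * p', q * q', odd_mul hq hq', ?_⟩
    simp only [map_mul, ← e, ← e']; ring
  neg_mem' := by
    rintro x ⟨p, q, hq, e⟩
    refine ⟨-p, q, hq, ?_⟩
    rw [map_neg, ← e]; ring

lemma mem_O {x : Cub ℚ} : x ∈ O ↔ ∃ p q : Cub ℤ, q.a % 2 = 1 ∧ x * io q = io p := Iff.rfl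

lemma io_mem (p : Cub ℤ) : io p ∈ O := ⟨p, 1, by simp, by simp⟩

/-- the uniformizer -/
def tO : O := ⟨th, by rw [← io_th]; exact io_mem _⟩
/-- ρ in the valuation ring -/
def rO : O := ⟨rho, by rw [← io_rr]; exact io_mem _⟩
@[simp] lemma coe_tO : ((tO : O) : Cub ℚ) = th := rfl
@[simp] lemma coe_rO : ((rO : O) : Cub ℚ) = rho := rfl
@[simp, norm_cast] lemma coe_ofNat (n : ℕ) [n.AtLeastTwo] : ((ofNat(n) : O) : Cub ℚ) = ofNat(n) := rfl
lemma tO3 : tO ^ 3 = 2 := Subtype.ext (by push_cast; exact th3q)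
lemma rO_mul : rO * (1 + tO ^ 2) = 5 := Subtype.ext (by push_cast; exact rho_mul)
lemma rO_eq : rO = 1 + 2 * tO - tO ^ 2 := Subtype.ext (by
  push_cast; rw [pow_two]; simp only [coe_rO, coe_tO]; ext <;> simp [rho])

lemma even_mul_th (p : Cub ℤ) (h : p.a % 2 = 0) : ∃ p', p = th * p' :=
  ⟨⟨p.b, p.c, p.a / 2⟩, by ext <;> simp; omega⟩

/-- dichotomy: an element of the valuation ring is in the maximal ideal or `≡ 1`. -/
lemma O_dich (z : O) : (∃ z', z = tO * z') ∨ ∃ z', z = 1 + tO * z' := by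
  obtain ⟨z, hz0⟩ := z
  obtain ⟨p, q, hq, e⟩ := mem_O.1 hz0
  have hq' := odd_ne hq
  have hz : z = io p / io q := by rw [← e]; field_simp
  rcases Int.emod_two_eq_zero_or_one p.a with h | h
  · left
    obtain ⟨p', rfl⟩ := even_mul_th p h
    refine ⟨⟨io p' / io q, p', q, hq, by field_simp⟩, Subtype.ext ?_⟩
    push_cast
    rw [hz]
    simp [mul_div_assoc]
  · right
    obtain ⟨p', hp'⟩ := even_mul_th (p - q) (by simp; omega)
    refine ⟨⟨io p' / io q, p', q, hq, by field_simp⟩, Subtype.ext ?_⟩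
    have : p = q + th * p' := by rw [← hp']; ring
    push_cast
    rw [hz, this]
    simp
    field_simp

lemma O_unit (z : O) : ∃ z', (1 + tO * z) * z' = 1 := by
  obtain ⟨z, hz0⟩ := z
  obtain ⟨p, q, hq, e⟩ := mem_O.1 hz0
  have hq' := odd_ne hq
  have h1 : (q + th * p).a % 2 = 1 := by simpa using hq
  have h2 := odd_ne h1
  refine ⟨⟨io q / io (q + th * p), q, q + th * p, h1, by field_simp⟩, Subtype.ext ?_⟩
  push_cast
  rw [mul_div_assoc', div_eq_one_iff_eq h2]
  simp only [map_add, map_mul, io_th, coe_tO]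
  linear_combination th * e

lemma tO_not_unit (z : O) (h : tO * z = 1) : False := by
  obtain ⟨z, hz0⟩ := z
  obtain ⟨p, q, hq, e⟩ := mem_O.1 hz0
  have h1 := congrArg Subtype.val h
  push_cast at h1
  have h2 : th * p = q := by
    apply io_inj
    rw [map_mul, io_th, ← e]
    simp only [coe_tO] at h1
    linear_combination io q * h1
  have := congrArg Cub.a h2
  simp at this
  omega

/-- valuation ring dichotomy for field elements. -/
lemma K_dich (x : Cub ℚ) : (∃ z : O, x = z) ∨ ∃ z : O, x * (th * (z : Cub ℚ)) = 1 := by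
  obtain ⟨p, q, hq, hc, e⟩ := exists_frac x
  have hq' := io_ne hq
  rcases Int.emod_two_eq_zero_or_one q.a with h | h
  · right
    have hp : p.a % 2 = 1 := by
      obtain ⟨c, d, hcd⟩ := hc
      obtain ⟨q', rfl⟩ := even_mul_th q h
      by_contra hp
      obtain ⟨p', rfl⟩ := even_mul_th p (by omega)
      have := congrArg Cub.a hcd
      simp only [add_a, mul_a, th_a, th_b, th_c, one_a] at this
      ring_nf at this
      omega
    obtain ⟨q', rfl⟩ := even_mul_th q h
    have hp' := odd_ne hp
    refine ⟨⟨io q' / io p, q', p, hp, by field_simp⟩, ?_⟩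
    simp only [map_mul, io_th] at e
    show x * (th * (io q' / io p)) = 1
    field_simp
    linear_combination e
  · left
    exact ⟨⟨x, p, q, h, e⟩, rfl⟩

lemma O_den (z : O) : ∃ (m : ℤ) (p : Cub ℤ), m % 2 = 1 ∧ (z : Cub ℚ) * (m : Cub ℚ) = io p := by
  obtain ⟨z, hz0⟩ := z
  obtain ⟨p, q, hq, e⟩ := mem_O.1 hz0
  refine ⟨N q, p * adj q, ?_, ?_⟩
  · have e : N q = q.a ^ 3 + 2 * (q.b ^ 3 + 2 * q.c ^ 3 - 3 * q.a * q.b * q.c) := by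
      simp only [N]; ring
    rw [e, Int.add_mul_emod_self_left, pow_succ, pow_two, Int.mul_emod, Int.mul_emod q.a q.a, hq]
    rfl
  · have h : io q * io (adj q) = (N q : ℤ) := by
      rw [← map_mul, mul_adj]
      ext <;> simp [C]
    rw [map_mul, ← e, ← h]
    ring

lemma O_c (z : O) : (1 : ℚ) + 2 * (z : Cub ℚ).c ≠ 0 := by
  obtain ⟨m, p, hm, e⟩ := O_den z
  intro h
  have := congrArg Cub.c e
  simp at this
  have h1 : (m : ℚ) + 2 * p.c = 0 := by rw [← this]; linear_combination (m : ℚ) * h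
  have h2 : m + 2 * p.c = 0 := by exact_mod_cast h1
  omega

lemma O_arch (z : O) (hz : z ≠ 0) : ∃ n : ℕ, ¬ (2 : O) ^ n ∣ z := by
  obtain ⟨m, p, hm, e⟩ := O_den z
  have hm0 : m ≠ 0 := by rintro rfl; simp at hm
  have hp : p ≠ 0 := by
    rintro rfl
    rw [map_zero] at e
    have : (m : Cub ℚ) ≠ 0 := by exact_mod_cast hm0
    exact hz (Subtype.ext ((mul_eq_zero.1 e).resolve_right this))
  have hN := N_int_ne hp
  refine ⟨(N p).natAbs, ?_⟩
  rintro ⟨y, rfl⟩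
  obtain ⟨m', p', hm', e'⟩ := O_den y
  have h1 : (m' : Cub ℤ) * p = 2 ^ (N p).natAbs * ((m : Cub ℤ) * p') := by
    apply io_inj
    simp only [map_mul, map_pow, map_ofNat, map_intCast, ← e, ← e']
    push_cast
    ring
  set k := (N p).natAbs with hk
  have h2 := congrArg N h1
  rw [N_mul, N_mul, N_pow] at h2
  have h3 : N (m' : Cub ℤ) = m' ^ 3 := by simp [N]
  have h4 : N (2 : Cub ℤ) = 8 := by simp [N]
  rw [h3, h4] at h2
  have h5 : (2 : ℤ) ^ k ∣ N p := by
    have hc : IsCoprime ((2 : ℤ) ^ k) (m' ^ 3) := by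
      apply IsCoprime.pow
      exact ⟨-(m' / 2), 1, by omega⟩
    apply hc.dvd_of_dvd_mul_left
    rw [h2, show (8 : ℤ) = 2 * 4 by norm_num, mul_pow, mul_assoc]
    exact Dvd.intro _ rfl
  have h6 := Int.natAbs_dvd_natAbs.2 h5
  rw [← hk, Int.natAbs_pow] at h6
  have h7 := Nat.le_of_dvd (by omega) h6
  have h8 : k < 2 ^ k := Nat.lt_two_pow_self
  simp at h7
  omega

end Cub


namespace Cub
open WeierstrassCurve

/-- The elliptic curve `y² = x (x² - 2ρx + 5ρ)` over `ℚ(θ)`. -/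
noncomputable def E : Affine (Cub ℚ) := ⟨0, -2 * rho, 0, 5 * rho, 0⟩

/-- being on the curve -/
def On (x y : Cub ℚ) : Prop := y ^ 2 = x * (x ^ 2 - 2 * rho * x + 5 * rho)

lemma five_rho_ne : (5 : Cub ℚ) * rho ≠ 0 := mul_ne_zero (by norm_num) rho_ne

lemma On.x_zero {x y : Cub ℚ} (h : On x y) (hy : y = 0) : x = 0 := by
  unfold On at h
  rw [hy] at h
  by_contra hx
  exact mul_ne_zero hx (quad_ne x) (by rw [← h]; ring)

lemma On.ns {x y : Cub ℚ} (h : On x y) : E.Nonsingular x y := by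
  rw [Affine.nonsingular_iff', Affine.equation_iff']
  have h' := h
  unfold On at h
  refine ⟨?_, ?_⟩
  · simp only [E]
    linear_combination h
  · by_cases hy : y = 0
    · left
      have := h'.x_zero hy
      subst this
      simp only [E]
      have := five_rho_ne
      rw [hy]
      simpa using this
    · right
      simp only [E]
      simpa using hy

/-- points -/
noncomputable def pt (x y : Cub ℚ) (h : On x y) : E.Point := .some x y h.ns

lemma some_congr {x y x' y' : Cub ℚ} (h : E.Nonsingular x y) (h' : E.Nonsingular x' y') (hx : x = x')
    (hy : y = y') : (Affine.Point.some x y h : E.Point) = .some x' y' h' := by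
  subst hx; subst hy; rfl

lemma ns_on {x y : Cub ℚ} (h : E.Nonsingular x y) : On x y := by
  have := h.1
  rw [Affine.equation_iff'] at this
  simp only [E] at this
  unfold On
  linear_combination this

lemma pt_cases (R : E.Point) : R = 0 ∨ ∃ x y h, R = pt x y h := by
  rcases R with _ | ⟨x, y, h⟩
  · left; rfl
  · right; exact ⟨x, y, ns_on h, rfl⟩

lemma negY_E (x y : Cub ℚ) : E.negY x y = -y := by simp [Affine.negY, E]

lemma On.neg {x y : Cub ℚ} (h : On x y) : On x (-y) := by unfold On at *; rw [← h]; ring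

lemma pt_congr {x y x' y' : Cub ℚ} (h : On x y) (h' : On x' y') (hx : x = x') (hy : y = y') :
    pt x y h = pt x' y' h' := by subst hx; subst hy; rfl

lemma pt_inj {x y x' y' : Cub ℚ} {h : On x y} {h' : On x' y'} (e : pt x y h = pt x' y' h') :
    x = x' ∧ y = y' := by
  simpa [pt] using e

lemma pt_ne_zero {x y : Cub ℚ} (h : On x y) : pt x y h ≠ 0 := by
  exact Affine.Point.some_ne_zero h.ns

lemma neg_pt {x y : Cub ℚ} (h : On x y) : - pt x y h = pt x (-y) h.neg := by
  unfold pt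
  rw [Affine.Point.neg_some]
  simp only [negY_E]

lemma pt_same {x y y' : Cub ℚ} (h : On x y) (h' : On x y') :
    pt x y h = pt x y' h' ∨ pt x y h = - pt x y' h' := by
  have : (y - y') * (y + y') = 0 := by
    unfold On at h h'
    linear_combination h - h'
  rcases mul_eq_zero.1 this with e | e
  · left; exact pt_congr _ _ rfl (sub_eq_zero.1 e)
  · right; rw [neg_pt]; exact pt_congr _ _ rfl (eq_neg_of_add_eq_zero_left e)

lemma add_line {x₁ y₁ x₂ y₂ : Cub ℚ} (h₁ : On x₁ y₁) (h₂ : On x₂ y₂) (hne : ¬ (x₁ = x₂ ∧ y₁ = - y₂)) :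
    ∃ l n x₃, ∃ h₃ : On x₃ (-(l * x₃ + n)), pt x₁ y₁ h₁ + pt x₂ y₂ h₂ = pt x₃ (-(l * x₃ + n)) h₃ ∧
      y₁ = l * x₁ + n ∧ y₂ = l * x₂ + n ∧ x₁ + x₂ + x₃ = l ^ 2 + 2 * rho ∧
      x₁ * x₂ + x₁ * x₃ + x₂ * x₃ = 5 * rho - 2 * l * n ∧ x₁ * x₂ * x₃ = n ^ 2 ∧
      (x₁ = x₂ → l * (2 * y₁) = 3 * x₁ ^ 2 - 4 * rho * x₁ + 5 * rho) := by
  set l := E.slope x₁ x₂ y₁ y₂ with hl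
  have hadd : pt x₁ y₁ h₁ + pt x₂ y₂ h₂ = .some _ _
      (Affine.nonsingular_add h₁.ns h₂.ns (by rw [negY_E]; exact hne)) :=
    Affine.Point.add_some (by rw [negY_E]; exact hne)
  have key : ∃ n, y₁ = l * x₁ + n ∧ y₂ = l * x₂ + n ∧ ∀ x₃, x₁ + x₂ + x₃ = l ^ 2 + 2 * rho →
      (x₁ * x₂ + x₁ * x₃ + x₂ * x₃ = 5 * rho - 2 * l * n ∧ x₁ * x₂ * x₃ = n ^ 2 ∧
      (x₁ = x₂ → l * (2 * y₁) = 3 * x₁ ^ 2 - 4 * rho * x₁ + 5 * rho)) := by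
    refine ⟨y₁ - l * x₁, by ring, ?_⟩
    unfold On at h₁ h₂
    by_cases hx : x₁ = x₂
    · have hy : y₁ ≠ - y₂ := fun h => hne ⟨hx, h⟩
      subst hx
      have hyy : y₁ = y₂ := by
        have : (y₁ - y₂) * (y₁ + y₂) = 0 := by linear_combination h₁ - h₂
        rcases mul_eq_zero.1 this with e | e
        · exact sub_eq_zero.1 e
        · exact (hy (eq_neg_of_add_eq_zero_left e)).elim
      subst hyy
      have h2y : y₁ - E.negY x₁ y₁ ≠ 0 := by
        rw [negY_E]
        intro h
        exact hy (by linear_combination h)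
      have hl' : l * (2 * y₁) = 3 * x₁ ^ 2 - 4 * rho * x₁ + 5 * rho := by
        rw [hl, Affine.slope_of_Y_ne rfl (by rw [negY_E]; exact hy)]
        rw [div_mul_eq_mul_div, div_eq_iff h2y, negY_E]
        simp only [E]
        ring
      refine ⟨by ring, fun x₃ e => ⟨?_, ?_, fun _ => hl'⟩⟩
      · have : x₃ = l ^ 2 + 2 * rho - x₁ - x₁ := by linear_combination e
        subst this
        linear_combination hl'
      · have : x₃ = l ^ 2 + 2 * rho - x₁ - x₁ := by linear_combination e
        subst this
        linear_combination x₁ * hl' - h₁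
    · have hx' := sub_ne_zero.2 hx
      have hl' : l * (x₁ - x₂) = y₁ - y₂ := by
        rw [hl, Affine.slope_of_X_ne hx, div_mul_cancel₀ _ hx']
      have hy2 : y₂ = l * x₂ + (y₁ - l * x₁) := by linear_combination hl'
      refine ⟨hy2, fun x₃ e => ?_⟩
      have : x₃ = l ^ 2 + 2 * rho - x₁ - x₂ := by linear_combination e
      have e2 : x₁ * x₂ + x₁ * x₃ + x₂ * x₃ = 5 * rho - 2 * l * (y₁ - l * x₁) := by
        apply mul_left_cancel₀ hx'
        subst this
        rw [hy2] at h₂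
        linear_combination h₁ - h₂
      refine ⟨e2, ?_, fun h => (hx h).elim⟩
      linear_combination x₁ * e2 - x₁ ^ 2 * e - h₁
  obtain ⟨n, e1, e2, key⟩ := key
  have hX : E.addX x₁ x₂ l = l ^ 2 + 2 * rho - x₁ - x₂ := by simp [Affine.addX, E]
  have hY : E.addY x₁ x₂ y₁ l = -(l * (l ^ 2 + 2 * rho - x₁ - x₂) + n) := by
    simp only [Affine.addY, Affine.negAddY, negY_E, hX]
    rw [e1]; ring
  have hns := Affine.nonsingular_add h₁.ns h₂.ns (by rw [negY_E]; exact hne)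
  rw [← hl, hX, hY] at hns
  have hon := ns_on hns
  clear_value l
  refine ⟨l, n, l ^ 2 + 2 * rho - x₁ - x₂, hon, ?_, e1, e2, by ring, key _ (by ring)⟩
  rw [hadd]
  exact some_congr _ _ (by rw [← hl, hX]) (by rw [← hl, hY])

end Cub


namespace Cub

lemma rho_eq : rho = 1 + 2 * th - th ^ 2 := by
  rw [pow_two]; ext <;> simp [rho]

lemma onT : On 0 0 := by unfold On; ring
lemma onP : On (5 * th / 2) (5 * rho / 2) := by
  unfold On
  rw [rho_eq]
  linear_combination (-25 / 4 * th - 25 / 8) * th3q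

/-- the 2-torsion point -/
noncomputable def T : E.Point := pt 0 0 onT
/-- the generator -/
noncomputable def P : E.Point := pt _ _ onP

lemma TT : T + T = 0 := by
  have : -T = T := by
    unfold T
    rw [neg_pt]
    exact pt_congr _ _ rfl (by ring)
  nth_rw 1 [← this]
  exact neg_add_cancel T

lemma add_T {x y : Cub ℚ} (h : On x y) (hx : x ≠ 0) : ∃ x' y', ∃ h' : On x' y',
    pt x y h + T = pt x' y' h' ∧ x * x' = 5 * rho := by
  obtain ⟨l, n, x3, h3, e, e1, e2, e3, e4, e5, -⟩ := add_line h onT (fun h => hx h.1)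
  have hn : n = 0 := by linear_combination -e2
  exact ⟨x3, _, h3, e, by linear_combination e4 - 2 * l * hn⟩

lemma halve0 {v y n g : Cub ℚ} (h : On (v ^ 2) y) (hv : v ≠ 0) (hn : y = v * n)
    (hg : 2 * v ^ 2 - 2 * rho + 2 * n = g ^ 2) (hg0 : g ≠ 0) : ∃ S : E.Point, pt (v ^ 2) y h = S + S := by
  have hn2 : n ^ 2 = v ^ 4 - 2 * rho * v ^ 2 + 5 * rho := by
    apply mul_left_cancel₀ (pow_ne_zero 2 hv)
    have h' := h
    unfold On at h'
    rw [hn] at h'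
    linear_combination h'
  set x := v ^ 2 + n + v * g with hx
  have hq : g ^ 2 * x = x ^ 2 - 2 * rho * x + 5 * rho := by
    rw [hx]
    linear_combination (v ^ 2 + n + v * g - v^2) * -hg + hn2
  have hx0 : x ≠ 0 := by
    intro h0
    rw [h0] at hq
    exact five_rho_ne (by linear_combination -hq)
  have hon : On x (g * x) := by
    unfold On; linear_combination x * hq
  have hy0 : g * x ≠ 0 := mul_ne_zero hg0 hx0
  obtain ⟨l, m, x3, h3, e, e1, e2, e3, e4, e5, e6⟩ := add_line hon hon (by
    rintro ⟨-, h0⟩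
    apply hy0
    have : 2 * (g * x) = 0 := by linear_combination h0
    exact (mul_eq_zero.1 this).resolve_left two_ne_zero)
  have e6 := e6 rfl
  have hx3 : x3 = v ^ 2 := by
    have hl : l = g + v := by
      apply mul_right_cancel₀ (mul_ne_zero two_ne_zero hy0)
      rw [e6]
      linear_combination -hq + x * hg + 2 * x * hx
    rw [hl] at e3
    linear_combination e3 - hg - 2 * hx
  subst hx3
  rcases pt_same h h3 with h' | h'
  · exact ⟨_, h'.trans e.symm⟩
  · refine ⟨- pt x (g * x) hon, ?_⟩
    rw [h', ← e, neg_add]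

lemma halve {v y : Cub ℚ} (h : On (v ^ 2) y) (hv : v ≠ 0) : ∃ S : E.Point, pt (v ^ 2) y h = S + S := by
  have hth := th_ne
  have hr := rho_ne
  set n := y / v with hn
  have hy : y = v * n := by rw [hn]; field_simp
  have hn2 : n ^ 2 = v ^ 4 - 2 * rho * v ^ 2 + 5 * rho := by
    apply mul_left_cancel₀ (pow_ne_zero 2 hv)
    have h' := h
    unfold On at h'
    rw [hy] at h'
    linear_combination h'
  set X := 2 * v ^ 2 - 2 * rho + 2 * n with hX
  set X' := 2 * v ^ 2 - 2 * rho - 2 * n with hX'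
  have hprod : X * X' = - (2 * rho * th) ^ 2 := by
    rw [hX, hX']
    linear_combination (-4) * hn2 + 4 * rho * rho_mul
  have hne : X * X' ≠ 0 := by
    rw [hprod]
    exact neg_ne_zero.2 (pow_ne_zero 2 (mul_ne_zero (mul_ne_zero two_ne_zero hr) hth))
  have hX0 : X ≠ 0 := left_ne_zero_of_mul hne
  have hX0' : X' ≠ 0 := right_ne_zero_of_mul hne
  have hE : (2 * v * X) ^ 2 = X * (X ^ 2 + 4 * rho * X - 4 * rho ^ 2 * th ^ 2) := by
    have : X * (4 * v ^ 2) = X ^ 2 + 4 * rho * X - 4 * rho ^ 2 * th ^ 2 := by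
      rw [hX]; linear_combination (-4) * hn2 + 4 * rho * rho_mul
    linear_combination X * this
  obtain ⟨g, hg⟩ := lemmaB (X / th ^ 4) (2 * v * X / 4) (div_ne_zero hX0 (pow_ne_zero 4 hth)) (by
    have h12 : (th : Cub ℚ) ^ 12 = 16 := by
      rw [show (th : Cub ℚ) ^ 12 = (th ^ 3) ^ 4 by ring, th3q]; norm_num
    have h6 : (th : Cub ℚ) ^ 6 = 4 := by
      rw [show (th : Cub ℚ) ^ 6 = (th ^ 3) ^ 2 by ring, th3q]; norm_num
    obtain ⟨Y, hY⟩ : ∃ Y, X = Y * th ^ 4 := ⟨X / th ^ 4, by field_simp⟩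
    have hY' : X / th ^ 4 = Y := by rw [hY]; field_simp
    rw [hY']
    rw [hY] at hE ⊢
    linear_combination hE / 16 + Y ^ 3 / 16 * h12 + rho * Y ^ 2 * th ^ 2 / 4 * h6 - rho ^ 2 * Y / 4 * h6)
  rcases hg with hg | hg
  · refine halve0 h hv hy (g := g * th ^ 2) ?_ ?_
    · rw [div_eq_iff (pow_ne_zero 4 hth)] at hg
      rw [← hX, hg]; ring
    · rintro h0
      apply hX0
      rw [div_eq_iff (pow_ne_zero 4 hth)] at hg
      rw [hg]
      linear_combination g * th ^ 2 * h0
  · have hg0 : g ≠ 0 := by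
      rintro rfl
      rw [div_eq_iff (pow_ne_zero 4 hth)] at hg
      exact hX0 (by rw [hg]; ring)
    have h' : On ((-v) ^ 2) y := by rw [neg_sq]; exact h
    have e : pt (v ^ 2) y h = pt ((-v) ^ 2) y h' := pt_congr _ _ (by ring) rfl
    rw [e]
    refine halve0 h' (neg_ne_zero.2 hv) (n := -n) (by rw [hy]; ring) (g := 2 * rho * th / (g * th ^ 2)) ?_
      (div_ne_zero (mul_ne_zero (mul_ne_zero two_ne_zero hr) hth) (mul_ne_zero hg0 (pow_ne_zero 2 hth)))
    rw [div_eq_iff (pow_ne_zero 4 hth)] at hg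
    rw [div_pow, eq_div_iff (pow_ne_zero 2 (mul_ne_zero hg0 (pow_ne_zero 2 hth)))]
    linear_combination (-1) * hprod + X' * hg - (g * th ^ 2) ^ 2 * hX'

/-- being in the subgroup generated by `T`, `P` and the doubles -/
def Dec (R : E.Point) : Prop := ∃ S : E.Point, R = S + S ∨ R = T + (S + S) ∨ R = P + (S + S) ∨
  R = T + (P + (S + S))

lemma Dec.of_T {R : E.Point} (h : Dec (R + T)) : Dec R := by
  have hT := TT
  obtain ⟨S, h | h | h | h⟩ := h
  · exact ⟨S, Or.inr (Or.inl (by linear_combination (norm := abel) h - hT))⟩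
  · exact ⟨S, Or.inl (by linear_combination (norm := abel) h)⟩
  · exact ⟨S, Or.inr (Or.inr (Or.inr (by linear_combination (norm := abel) h - hT)))⟩
  · exact ⟨S, Or.inr (Or.inr (Or.inl (by linear_combination (norm := abel) h)))⟩

lemma Dec.of_P {R : E.Point} (h : Dec (R + P)) : Dec R := by
  obtain ⟨S, h | h | h | h⟩ := h
  · exact ⟨S - P, Or.inr (Or.inr (Or.inl (by linear_combination (norm := abel) h)))⟩
  · exact ⟨S - P, Or.inr (Or.inr (Or.inr (by linear_combination (norm := abel) h)))⟩
  · exact ⟨S, Or.inl (by linear_combination (norm := abel) h)⟩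
  · exact ⟨S, Or.inr (Or.inl (by linear_combination (norm := abel) h))⟩

lemma dec_zero : Dec 0 := ⟨0, Or.inl (by abel)⟩
lemma dec_T : Dec T := ⟨0, Or.inr (Or.inl (by abel))⟩
lemma dec_P : Dec P := ⟨0, Or.inr (Or.inr (Or.inl (by abel)))⟩
lemma dec_nP : Dec (-P) := ⟨-P, Or.inr (Or.inr (Or.inl (by abel)))⟩

lemma dec_sq {x y : Cub ℚ} (h : On x y) (v : Cub ℚ) (hv : x = v ^ 2) (hx : x ≠ 0) : Dec (pt x y h) := by
  subst hv
  obtain ⟨S, hS⟩ := halve h (fun h0 => hx (by rw [h0]; ring))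
  exact ⟨S, Or.inl hS⟩

lemma ppi_mul : ppi * rho = 5 := by rw [ppi_eq]; linear_combination rho_mul
lemma ppi_ne : ppi ≠ 0 := fun h => by simpa [ppi] using congrArg Cub.a h

lemma dec_pi {x y : Cub ℚ} (h : On x y) (j : ℕ) (hj : j < 2) (v : Cub ℚ) (hv : x = ppi ^ j * v ^ 2) (hx : x ≠ 0) :
    Dec (pt x y h) := by
  interval_cases j
  · exact dec_sq h v (by rw [hv]; ring) hx
  · apply Dec.of_T
    obtain ⟨x', y', h', e, e'⟩ := add_T h hx
    rw [e]
    have hv0 : v ≠ 0 := fun h0 => hx (by rw [hv, h0]; ring)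
    refine dec_sq h' (rho / v) ?_ ?_
    · rw [div_pow, eq_div_iff (pow_ne_zero 2 hv0)]
      apply mul_left_cancel₀ ppi_ne
      linear_combination e' - x' * hv - rho * ppi_mul
    · rintro rfl
      exact five_rho_ne (by rw [← e']; ring)

lemma dec_all (R : E.Point) : Dec R := by
  rcases pt_cases R with rfl | ⟨x, y, h, rfl⟩
  · exact dec_zero
  by_cases hx : x = 0
  · subst hx
    rcases pt_same h onT with e | e
    · rw [e]; exact dec_T
    · have : - pt 0 0 onT = T := by
        have := TT
        unfold T at *
        exact neg_eq_of_add_eq_zero_left this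
      rw [e, this]; exact dec_T
  obtain ⟨j, hj, k, hk, v, hv⟩ := lemmaA x y hx h
  interval_cases k
  · exact dec_pi h j hj v (by rw [hv]; ring) hx
  have hth := th_ne
  have hr := rho_ne
  have hp := ppi_ne
  have hv0 : v ≠ 0 := fun h0 => hx (by rw [hv, h0]; ring)
  by_cases hxP : x = 5 * th / 2
  · subst hxP
    rcases pt_same h onP with e | e
    · rw [e]; exact dec_P
    · rw [e]; exact dec_nP
  apply Dec.of_P
  obtain ⟨l, n, x3, h3, e, e1, e2, e3, e4, e5, -⟩ := add_line h onP (fun h => hxP h.1)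
  unfold P
  rw [e]
  by_cases hx3 : x3 = 0
  · have : pt x3 (-(l * x3 + n)) h3 = T := by
      refine pt_congr _ _ hx3 ?_
      have h4 := h3
      unfold On at h4
      rw [hx3] at h4
      have h5 : (-(l * 0 + n)) ^ 2 = 0 := by rw [h4]; ring
      rw [hx3]
      exact pow_eq_zero_iff two_ne_zero |>.1 h5
    rw [this]; exact dec_T
  have key : x3 * (ppi ^ (j + 1) * (rho * v) ^ 2) = (n * th) ^ 2 := by
    have := ppi_mul
    linear_combination th ^ 2 * e5 - 5 / 2 * x * x3 * th3q + ppi ^ j * rho * v ^ 2 * x3 * this - 5 * x3 * hv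
  interval_cases j
  · refine dec_pi h3 1 (by norm_num) (n * th / (rho * v * ppi)) ?_ hx3
    field_simp
    linear_combination key
  · refine dec_pi h3 0 (by norm_num) (n * th / (rho * v * ppi)) ?_ hx3
    field_simp
    linear_combination key

end Cub


namespace Cub

/-- `R` lies in the kernel of reduction, with formal parameters `t = x/y` and `w = 1/y` -/
def IsE1 (R : E.Point) (t w : O) : Prop := (R = 0 ∧ t = 0 ∧ w = 0) ∨
  ∃ x y, ∃ h : On x y, R = pt x y h ∧ y ≠ 0 ∧ x = (t : Cub ℚ) * y ∧ (w : Cub ℚ) * y = 1 ∧ tO ∣ t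

lemma unit2 (z : O) : ∃ z', (1 + 2 * z) * (1 + 2 * z') = 1 := by
  obtain ⟨u, hu⟩ := O_unit (tO ^ 2 * z)
  refine ⟨-z * u, ?_⟩
  have h3 := tO3
  linear_combination (-2 * z) * hu + (-2 * z ^ 2 * u) * (-h3) 

lemma IsE1.dvd {R : E.Point} {t w : O} (h : IsE1 R t w) : tO ∣ t := by
  rcases h with ⟨-, rfl, -⟩ | ⟨x, y, h, -, -, -, -, hd⟩
  · exact dvd_zero _
  · exact hd

lemma IsE1.eqn {R : E.Point} {t w : O} (h : IsE1 R t w) :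
    w * (1 + 2 * rO * t ^ 2 - 5 * rO * t * w) = t ^ 3 := by
  rcases h with ⟨-, rfl, rfl⟩ | ⟨x, y, h, -, hy, hx, hw, hd⟩
  · ring
  · apply Subtype.coe_injective
    push_cast
    simp only [coe_rO]
    apply mul_right_cancel₀ (pow_ne_zero 3 hy)
    unfold On at h
    rw [hx] at h
    generalize (t : Cub ℚ) = t at *
    generalize (w : Cub ℚ) = w at *
    linear_combination h + (y ^ 2 + 2 * rho * t ^ 2 * y ^ 2 - 5 * rho * t * y * (w * y + 1)) * hw

lemma IsE1.w_eq {R : E.Point} {t w : O} (h : IsE1 R t w) : ∃ u, w = t ^ 3 * (1 + 2 * u) := by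
  have e := h.eqn
  obtain ⟨s, rfl⟩ := h.dvd
  obtain ⟨u, hu⟩ := O_unit (2 * rO * s * (tO * s) - 5 * rO * s * w)
  have h3 := tO3
  have hw : w = 2 * s ^ 3 * u := by
    linear_combination (-w) * hu + u * e + s ^ 3 * u * h3
  obtain ⟨u', hu'⟩ := unit2 (rO * (tO * s) ^ 2 - 5 * rO * (tO * s) * (s ^ 3 * u))
  refine ⟨u', ?_⟩
  linear_combination (-w) * hu' + (1 + 2 * u') * e + (-w * (1 + 2 * u') * 5 * rO * tO * s) * (-hw)

lemma IsE1.core {R₁ R₂ : E.Point} {t₁ w₁ t₂ w₂ : O} (h₁ : IsE1 R₁ t₁ w₁) (h₂ : IsE1 R₂ t₂ w₂)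
    (hR₁ : R₁ ≠ 0) (hR₂ : R₂ ≠ 0) (hR : R₁ + R₂ ≠ 0) : ∃ L ν U t₃ w₃ : O,
    (1 + 2 * rO * t₂ ^ 2 - 5 * rO * t₂ * (w₁ + w₂)) * L =
      t₁ ^ 2 + t₁ * t₂ + t₂ ^ 2 - 2 * rO * (t₁ + t₂) * w₁ + 5 * rO * w₁ ^ 2 ∧ ν = w₁ - L * t₁ ∧
    t₃ = t₁ + t₂ - 2 * rO * ν * (1 - 5 * L) * U ∧ IsE1 (R₁ + R₂) t₃ w₃ := by
  obtain ⟨s₁, hs₁⟩ := h₁.dvd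
  obtain ⟨s₂, hs₂⟩ := h₂.dvd
  obtain ⟨u₁, hu₁⟩ := h₁.w_eq
  obtain ⟨u₂, hu₂⟩ := h₂.w_eq
  have q₁ := h₁.eqn
  have q₂ := h₂.eqn
  obtain ⟨A', hA'⟩ : ∃ A', (1 + 2 * rO * t₂ ^ 2 - 5 * rO * t₂ * (w₁ + w₂)) * A' = 1 := by
    obtain ⟨u, hu⟩ := O_unit (2 * rO * s₂ * t₂ - 5 * rO * s₂ * (w₁ + w₂))
    refine ⟨u, ?_⟩
    linear_combination hu + (2 * rO * t₂ * u - 5 * rO * (w₁ + w₂) * u) * hs₂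
  set B := t₁ ^ 2 + t₁ * t₂ + t₂ ^ 2 - 2 * rO * (t₁ + t₂) * w₁ + 5 * rO * w₁ ^ 2 with hB
  set A := 1 + 2 * rO * t₂ ^ 2 - 5 * rO * t₂ * (w₁ + w₂) with hA
  set L := B * A' with hL
  have hAL : A * L = B := by rw [hL]; linear_combination B * hA'
  obtain ⟨U', hU'⟩ : ∃ U', (1 - 2 * rO * L + 5 * rO * L ^ 2) * U' = 1 := by
    have hB' : B = tO * (s₁ * t₁ + s₁ * t₂ + s₂ * t₂ - 2 * rO * (s₁ + s₂) * w₁ +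
        5 * rO * w₁ * s₁ * t₁ ^ 2 * (1 + 2 * u₁)) := by
      rw [hB]
      linear_combination (t₁ + t₂ - 2 * rO * w₁ + 5 * rO * w₁ * t₁ ^ 2 * (1 + 2 * u₁)) * hs₁ +
        (t₂ - 2 * rO * w₁) * hs₂ + 5 * rO * w₁ * hu₁
    obtain ⟨u, hu⟩ := O_unit ((s₁ * t₁ + s₁ * t₂ + s₂ * t₂ - 2 * rO * (s₁ + s₂) * w₁ +
        5 * rO * w₁ * s₁ * t₁ ^ 2 * (1 + 2 * u₁)) * A' * (-2 * rO + 5 * rO * L))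
    refine ⟨u, ?_⟩
    linear_combination hu + A' * (-2 * rO + 5 * rO * L) * u * hB'
  refine ⟨L, w₁ - L * t₁, U', t₁ + t₂ - 2 * rO * (w₁ - L * t₁) * (1 - 5 * L) * U',
    L * (t₁ + t₂ - 2 * rO * (w₁ - L * t₁) * (1 - 5 * L) * U') - (w₁ - L * t₁), hAL, rfl, rfl, ?_⟩
  have hdiff : (w₁ - w₂) * A = (t₁ - t₂) * B := by
    rw [hA, hB]
    linear_combination q₁ - q₂
  rcases h₁ with ⟨h0, -⟩ | ⟨x₁, y₁, g₁, e₁, hy₁, hx₁, hw₁, -⟩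
  · exact absurd h0 hR₁
  rcases h₂ with ⟨h0, -⟩ | ⟨x₂, y₂, g₂, e₂, hy₂, hx₂, hw₂, -⟩
  · exact absurd h0 hR₂
  have hne : ¬ (x₁ = x₂ ∧ y₁ = - y₂) := by
    rintro ⟨rfl, h0⟩
    apply hR
    rw [e₁, e₂]
    have : pt x₁ y₁ g₁ = - pt x₁ y₂ g₂ := by
      rw [neg_pt]; exact pt_congr _ _ rfl h0
    rw [this, neg_add_cancel]
  obtain ⟨l, n, x₃, h₃, e, k₁, k₂, k₃, k₄, k₅, k₆⟩ := add_line g₁ g₂ hne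
  have f₁ : l * t₁ + n * w₁ = 1 := by
    apply mul_right_cancel₀ hy₁
    linear_combination -k₁ - l * hx₁ + n * hw₁
  have f₂ : l * t₂ + n * w₂ = 1 := by
    apply mul_right_cancel₀ hy₂
    linear_combination -k₂ - l * hx₂ + n * hw₂
  have hALc := congrArg (Subtype.val) hAL
  have hdc := congrArg (Subtype.val) hdiff
  have hAc := congrArg (Subtype.val) hA'
  have hAd := congrArg (Subtype.val) hA
  have hBd := congrArg (Subtype.val) hB
  have hUc := congrArg (Subtype.val) hU'
  push_cast at hALc hdc hAc hUc hAd hBd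
  simp only [coe_rO] at hALc hdc hAc hUc hAd hBd
  have hlL : l = - n * (L : Cub ℚ) := by
    by_cases ht : t₁ = t₂
    · have hw : w₁ = w₂ := by
        have : (w₁ - w₂) * A = 0 := by rw [hdiff, ht]; ring
        linear_combination (-(w₁ - w₂)) * hA' + A' * this
      have hy : y₁ = y₂ := by
        apply mul_left_cancel₀ (left_ne_zero_of_mul_eq_one hw₁)
        rw [hw₁, hw, hw₂]
      have hx : x₁ = x₂ := by rw [hx₁, hx₂, ht, hy]
      have k₇ := k₆ hx
      subst ht hw hy hx
      have : l * (A : Cub ℚ) + n * (B : Cub ℚ) = 0 := by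
        apply mul_right_cancel₀ (pow_ne_zero 2 hy₁)
        rw [hAd, hBd]
        have g := g₁
        unfold On at g
        have e1 : (t₁ : Cub ℚ) * y₁ = x₁ := hx₁.symm
        have c1 : (1 + 2 * rho * (t₁ : Cub ℚ) ^ 2 - 5 * rho * t₁ * (w₁ + w₁)) * y₁ ^ 2 =
          y₁ ^ 2 + 2 * rho * x₁ ^ 2 - 10 * rho * x₁ := by
          rw [hx₁]; linear_combination (-10 * rho * t₁ * y₁) * hw₁
        have c2 : ((t₁ : Cub ℚ) ^ 2 + t₁ * t₁ + t₁ ^ 2 - 2 * rho * (t₁ + t₁) * w₁ + 5 * rho * w₁ ^ 2) * y₁ ^ 2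
          = 3 * x₁ ^ 2 - 4 * rho * x₁ + 5 * rho := by
          rw [hx₁]; linear_combination (-4 * rho * t₁ * y₁ + 5 * rho * (w₁ * y₁ + 1)) * hw₁
        linear_combination l * c1 + n * c2 - (3 * x₁ ^ 2 - 4 * rho * x₁ + 5 * rho) * k₁ + y₁ * (-k₇) + 3 * l * g
      linear_combination (-l) * hAc + A' * this + (-A' * n) * (-hALc) - n * L * hAc
    · have hc : (t₁ : Cub ℚ) - t₂ ≠ 0 := by
        intro h0
        exact ht (Subtype.coe_injective (by linear_combination h0))
      apply mul_right_cancel₀ hc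
      linear_combination f₁ - f₂ - n * A' * hdc + n * (w₁ - w₂) * hAc + n * (t₁ - t₂) * A' * hALc - n * (t₁ - t₂) * L * hAc
  have hn : n * ((w₁ : Cub ℚ) - L * t₁) = 1 := by linear_combination f₁ - t₁ * hlL
  have hn0 : n ≠ 0 := left_ne_zero_of_mul_eq_one hn
  have hU0 := left_ne_zero_of_mul_eq_one hUc
  have hprod : y₁ * y₂ * (l * x₃ + n) = n ^ 3 * (1 - 2 * rho * L + 5 * rho * L ^ 2) := by
    have : y₁ * y₂ * (l * x₃ + n) = n ^ 3 + 2 * rho * l * n ^ 2 + 5 * rho * l ^ 2 * n := by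
      rw [k₁, k₂]
      linear_combination l ^ 3 * k₅ + l ^ 2 * n * k₄ + l * n ^ 2 * k₃
    rw [this, hlL]; ring
  have hy₃ : l * x₃ + n ≠ 0 := by
    refine right_ne_zero_of_mul (a := y₁ * y₂) ?_
    rw [hprod]
    exact mul_ne_zero (pow_ne_zero 3 hn0) hU0
  have hsum : x₁ * y₂ * (l * x₃ + n) + y₁ * x₂ * (l * x₃ + n) + y₁ * y₂ * x₃ = 10 * rho * l * n + 2 * rho * n ^ 2 := by
    rw [k₁, k₂]
    linear_combination 3 * l ^ 2 * k₅ + 2 * l * n * k₄ + n ^ 2 * k₃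
  have ht₃ : x₃ = - ((t₁ : Cub ℚ) + t₂ - 2 * rho * (w₁ - L * t₁) * (1 - 5 * L) * U') * (l * x₃ + n) := by
    apply mul_left_cancel₀ (mul_ne_zero hy₁ hy₂)
    have : 2 * rho * ((w₁ : Cub ℚ) - L * t₁) * (1 - 5 * L) * U' * (y₁ * y₂ * (l * x₃ + n)) =
        10 * rho * l * n + 2 * rho * n ^ 2 := by
      rw [hprod, hlL]
      linear_combination 2 * rho * ((w₁ : Cub ℚ) - L * t₁) * (1 - 5 * L) * n ^ 3 * hUc + 2 * rho * n ^ 2 * (1 - 5 * L) * hn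
    linear_combination hsum - this - y₂ * (l * x₃ + n) * hx₁ - y₁ * (l * x₃ + n) * hx₂
  right
  refine ⟨x₃, _, h₃, by rw [e₁, e₂, e], neg_ne_zero.2 hy₃, ?_, ?_, ?_⟩
  · push_cast
    simp only [coe_rO]
    linear_combination ht₃
  · push_cast
    simp only [coe_rO]
    have : n * (((w₁ : Cub ℚ) - L * t₁) * (l * x₃ + n) + L * x₃) = n * 1 := by
      linear_combination (l * x₃ + n) * hn + x₃ * hlL
    have := mul_left_cancel₀ hn0 this
    linear_combination this - L * ht₃
  · refine ⟨s₁ + s₂ - 2 * rO * (s₁ * t₁ ^ 2 * (1 + 2 * u₁) - L * s₁) * (1 - 5 * L) * U', ?_⟩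
    linear_combination (1 - 2 * rO * (-L) * (1 - 5 * L) * U' - 2 * rO * t₁ ^ 2 * (1 + 2 * u₁) * (1 - 5 * L) * U') * hs₁ + hs₂ - 2 * rO * (1 - 5 * L) * U' * hu₁

end Cub


namespace Cub

lemma IsE1.unique {R : E.Point} {t w t' w' : O} (h : IsE1 R t w) (h' : IsE1 R t' w') : t = t' := by
  rcases h with ⟨h0, rfl, rfl⟩ | ⟨x, y, h, e, hy, hx, hw, hd⟩
  · rcases h' with ⟨-, rfl, rfl⟩ | ⟨x', y', h', e', -⟩
    · rfl
    · exact absurd (e'.symm.trans h0) (pt_ne_zero _)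
  · rcases h' with ⟨h0, -⟩ | ⟨x', y', h', e', hy', hx', hw', -⟩
    · exact absurd (e.symm.trans h0) (pt_ne_zero _)
    · obtain ⟨rfl, rfl⟩ := pt_inj (e.symm.trans e')
      apply Subtype.coe_injective
      apply mul_right_cancel₀ hy
      rw [← hx, ← hx']

lemma IsE1.neg {R : E.Point} {t w : O} (h : IsE1 R t w) : IsE1 (-R) (-t) (-w) := by
  rcases h with ⟨rfl, rfl, rfl⟩ | ⟨x, y, h, e, hy, hx, hw, hd⟩
  · left; simp
  · right
    refine ⟨x, -y, h.neg, by rw [e, neg_pt], neg_ne_zero.2 hy, ?_, ?_, (dvd_neg).2 hd⟩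
    · push_cast; rw [hx]; ring
    · push_cast; rw [← hw]; ring

lemma IsE1.t_zero {R : E.Point} {t w : O} (h : IsE1 R t w) (hR : R = 0) : t = 0 :=
  h.unique (Or.inl ⟨hR, rfl, rfl⟩)

lemma IsE1.t_ne {R : E.Point} {t w : O} (h : IsE1 R t w) (hR : R ≠ 0) : t ≠ 0 := by
  rcases h with ⟨rfl, rfl, rfl⟩ | ⟨x, y, h, e, hy, hx, hw, hd⟩
  · exact absurd rfl hR
  · rintro rfl
    apply hy
    have hx0 : x = 0 := by rw [hx]; push_cast; ring
    unfold On at h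
    rw [hx0] at h
    exact pow_eq_zero_iff two_ne_zero |>.1 (h.trans (by ring))

lemma IsE1.add {R₁ R₂ : E.Point} {t₁ w₁ t₂ w₂ : O} (h₁ : IsE1 R₁ t₁ w₁) (h₂ : IsE1 R₂ t₂ w₂) :
    ∃ z w₃, IsE1 (R₁ + R₂) (t₁ + t₂ + 4 * z) w₃ := by
  by_cases hR₁ : R₁ = 0
  · have := h₁.t_zero hR₁
    subst this hR₁
    exact ⟨0, w₂, by simpa using h₂⟩
  by_cases hR₂ : R₂ = 0
  · have := h₂.t_zero hR₂
    subst this hR₂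
    exact ⟨0, w₁, by simpa using h₁⟩
  by_cases hR : R₁ + R₂ = 0
  · have : R₂ = - R₁ := (neg_eq_of_add_eq_zero_right hR).symm
    subst this
    have := h₂.unique h₁.neg
    subst this
    exact ⟨0, 0, Or.inl ⟨hR, by ring, rfl⟩⟩
  obtain ⟨L, ν, U, t₃, w₃, e, eν, et, h⟩ := h₁.core h₂ hR₁ hR₂ hR
  obtain ⟨s₁, hs₁⟩ := h₁.dvd
  obtain ⟨s₂, hs₂⟩ := h₂.dvd
  obtain ⟨u₁, hu₁⟩ := h₁.w_eq
  obtain ⟨u₂, hu₂⟩ := h₂.w_eq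
  have h3 := tO3
  have hw₁ : w₁ = 2 * (s₁ ^ 3 * (1 + 2 * u₁)) := by
    rw [hu₁, hs₁]; linear_combination s₁ ^ 3 * (1 + 2 * u₁) * h3
  have hw₂ : w₂ = 2 * (s₂ ^ 3 * (1 + 2 * u₂)) := by
    rw [hu₂, hs₂]; linear_combination s₂ ^ 3 * (1 + 2 * u₂) * h3
  generalize s₁ ^ 3 * (1 + 2 * u₁) = W₁ at hw₁
  generalize s₂ ^ 3 * (1 + 2 * u₂) = W₂ at hw₂
  have hL : ∃ m, L = tO ^ 2 * m := by
    refine ⟨s₁ ^ 2 + s₁ * s₂ + s₂ ^ 2 - 2 * rO * (s₁ + s₂) * tO ^ 2 * W₁ + 5 * rO * tO * w₁ * W₁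
      - tO * (rO * t₂ ^ 2 - 5 * rO * t₂ * (W₁ + W₂)) * L, ?_⟩
    subst hs₁ hs₂
    rw [hw₁, hw₂] at e
    rw [hw₁]
    linear_combination e + (2 * rO * tO * (s₁ + s₂) * W₁ - 10 * rO * W₁ ^ 2 + (rO * (tO * s₂) ^ 2 - 5 * rO * tO * s₂ * (W₁ + W₂)) * L) * h3
  obtain ⟨m, hm⟩ := hL
  have hν : ν = 2 * (W₁ - m * s₁) := by
    rw [eν, hw₁, hm, hs₁]
    linear_combination (-m * s₁) * h3
  refine ⟨- rO * (W₁ - m * s₁) * (1 - 5 * L) * U, w₃, ?_⟩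
  convert h using 1
  rw [et, hν]; ring

lemma IsE1.dbl {R : E.Point} {t w : O} (h : IsE1 R t w) :
    ∃ z w₃, IsE1 (R + R) (2 * t * (1 + 2 * z)) w₃ := by
  by_cases hR : R = 0
  · have := h.t_zero hR
    subst this hR
    exact ⟨0, 0, Or.inl ⟨by simp, by ring, rfl⟩⟩
  by_cases hRR : R + R = 0
  · exfalso
    have hn : -R = R := neg_eq_of_add_eq_zero_left hRR
    rcases h with ⟨h0, -⟩ | ⟨x, y, h, e, hy, hx, hw, hd⟩
    · exact hR h0
    · rw [e, neg_pt] at hn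
      have := (pt_inj hn).2
      apply hy
      have : 2 * y = 0 := by linear_combination -this
      exact (mul_eq_zero.1 this).resolve_left two_ne_zero
  obtain ⟨L, ν, U, t₃, w₃, e, eν, et, h'⟩ := h.core h hR hR hRR
  obtain ⟨s, hs⟩ := h.dvd
  obtain ⟨u, hu⟩ := h.w_eq
  have h3 := tO3
  have hν : ∃ z, ν = 2 * t * z := by
    have hw : t * w = 2 * (tO * s ^ 4 * (1 + 2 * u)) := by
      rw [hu, hs]; linear_combination tO * s ^ 4 * (1 + 2 * u) * h3
    generalize tO * s ^ 4 * (1 + 2 * u) = W at hw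
    refine ⟨-t ^ 2 + u * t ^ 2 + 2 * rO * t * w - 5 * rO * t * W * t * (1 + 2 * u)
       + (rO * t ^ 2 - 10 * rO * W) * L, ?_⟩
    rw [eν]
    linear_combination hu + (-t) * e + (-10 * rO * t * L - 5 * rO * t ^ 3 * (1 + 2 * u)) * hw
      + (-5 * rO * t * w) * hu
  obtain ⟨z, hz⟩ := hν
  refine ⟨- rO * z * (1 - 5 * L) * U, w₃, ?_⟩
  convert h' using 1
  rw [et, hz]; ring

/-- units congruent to one -/
def U1 (x : Cub ℚ) : Prop := ∃ z : O, x = 1 + th * (z : Cub ℚ)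

lemma U1.mul {x y : Cub ℚ} (hx : U1 x) (hy : U1 y) : U1 (x * y) := by
  obtain ⟨z, rfl⟩ := hx
  obtain ⟨w, rfl⟩ := hy
  exact ⟨z + w + tO * z * w, by push_cast; rw [coe_tO]; ring⟩

lemma U1.inv {x : Cub ℚ} (hx : U1 x) : ∃ y, U1 y ∧ x * y = 1 := by
  obtain ⟨z, rfl⟩ := hx
  obtain ⟨z', h⟩ := O_unit z
  have hc := congrArg Subtype.val h
  push_cast at hc
  rw [coe_tO] at hc
  exact ⟨z', ⟨-z * z', by push_cast; linear_combination hc⟩, hc⟩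

lemma U1.of_mul {x y : Cub ℚ} (hx : U1 x) (h : U1 (x * y)) : U1 y := by
  obtain ⟨x', h1, h2⟩ := hx.inv
  have := h.mul h1
  rwa [show x * y * x' = y by linear_combination y * h2] at this

lemma U1.not_dvd {z : O} (h : U1 (th * (z : Cub ℚ))) : False := by
  obtain ⟨y, ⟨w, hw⟩, h2⟩ := h.inv
  apply tO_not_unit (z * (1 + tO * w))
  apply Subtype.coe_injective
  push_cast
  rw [coe_tO, ← hw, ← h2]; ring

lemma U1.of_sq {v : Cub ℚ} (h : U1 (v ^ 2)) : U1 v := by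
  rcases K_dich v with ⟨z, hz⟩ | ⟨z, hz⟩
  · rcases O_dich z with ⟨z', hz'⟩ | ⟨z', hz'⟩
    · exfalso
      have : v = th * (z' : Cub ℚ) := by rw [hz, hz']; push_cast; rw [coe_tO]
      rw [this] at h
      have e : (th * (z' : Cub ℚ)) ^ 2 = th * ((tO * z' ^ 2 : O) : Cub ℚ) := by
        push_cast; rw [coe_tO]; ring
      rw [e] at h
      exact h.not_dvd
    · exact ⟨z', by rw [hz, hz']; push_cast; rw [coe_tO]⟩
  · exfalso
    obtain ⟨y, ⟨w, hw⟩, h2⟩ := h.inv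
    have h4 : th * (th * (z : Cub ℚ) ^ 2) = y := by
      linear_combination (-(th * (th * (z : Cub ℚ) ^ 2))) * h2 + y * (v * (th * z) + 1) * hz
    have h5 : U1 (th * ((tO * z ^ 2 : O) : Cub ℚ)) := by
      refine ⟨w, ?_⟩
      push_cast
      rw [coe_tO, h4, hw]
    exact h5.not_dvd

lemma th_of_sq {v : Cub ℚ} {m : O} (h : v ^ 2 = th * (m : Cub ℚ)) : ∃ z : O, v = th * (z : Cub ℚ) := by
  rcases K_dich v with ⟨z, hz⟩ | ⟨z, hz⟩
  · rcases O_dich z with ⟨z', hz'⟩ | ⟨z', hz'⟩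
    · exact ⟨z', by rw [hz, hz']; push_cast; rw [coe_tO]⟩
    · exfalso
      have h1 : U1 v := ⟨z', by rw [hz, hz']; push_cast; rw [coe_tO]⟩
      have := h1.mul h1
      rw [← pow_two, h] at this
      exact this.not_dvd
  · exfalso
    apply tO_not_unit (tO ^ 2 * z ^ 2 * m)
    apply Subtype.coe_injective
    push_cast
    rw [coe_tO]
    linear_combination (-th ^ 2 * (z : Cub ℚ) ^ 2) * h + (v * (th * z) + 1) * hz

lemma e1_of_neg {x y : Cub ℚ} (h : On x y) (g : O) (hg : x * (th * (g : Cub ℚ)) = 1) :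
    ∃ t w, IsE1 (pt x y h) t w := by
  have hx : x ≠ 0 := left_ne_zero_of_mul_eq_one hg
  have hy : y ≠ 0 := fun h0 => hx (h.x_zero h0)
  obtain ⟨u, hu⟩ := O_unit (-2 * rO * g + 5 * rO * g * (tO * g))
  have hc := congrArg Subtype.val hu
  push_cast at hc
  rw [coe_tO, coe_rO] at hc
  have hsq : (x / y) ^ 2 = th * ((g * u : O) : Cub ℚ) := by
    have h' := h
    unfold On at h'
    rw [div_pow, div_eq_iff (pow_ne_zero 2 hy), h']
    push_cast
    generalize (g : Cub ℚ) = g at *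
    generalize (u : Cub ℚ) = u at *
    have : (x ^ 2 - 2 * rho * x + 5 * rho) = x ^ 2 * (1 - 2 * rho * (th * g) + 5 * rho * (th * g) ^ 2) := by
      linear_combination (2 * rho * x - 5 * rho * (x * (th * g) + 1)) * hg
    rw [this]
    linear_combination (-x ^ 2) * hc - (x ^ 2 * (1 - 2 * rho * (th * g) + 5 * rho * (th * g) ^ 2) * u) * hg
  obtain ⟨z, hz⟩ := th_of_sq hsq
  refine ⟨tO * z, tO * z * (tO * g), Or.inr ⟨x, y, h, rfl, hy, ?_, ?_, dvd_mul_right _ _⟩⟩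
  · push_cast
    rw [coe_tO, ← hz]; field_simp
  · push_cast
    rw [coe_tO, ← hz]
    have : x / y * (th * (g : Cub ℚ)) * y = x * (th * (g : Cub ℚ)) := by field_simp
    rw [this, hg]

end Cub


namespace Cub

/-- units congruent to one modulo `θ²` -/
def U2 (x : Cub ℚ) : Prop := ∃ z : O, x = 1 + th ^ 2 * (z : Cub ℚ)

lemma U2.mul {x y : Cub ℚ} (hx : U2 x) (hy : U2 y) : U2 (x * y) := by
  obtain ⟨z, rfl⟩ := hx
  obtain ⟨w, rfl⟩ := hy
  exact ⟨z + w + tO ^ 2 * z * w, by push_cast; rw [coe_tO]; ring⟩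

lemma U2.u1 {x : Cub ℚ} (hx : U2 x) : U1 x := by
  obtain ⟨z, rfl⟩ := hx
  exact ⟨tO * z, by push_cast; rw [coe_tO]; ring⟩

lemma U2_one : U2 1 := ⟨0, by push_cast; ring⟩
lemma U2.pow {x : Cub ℚ} (hx : U2 x) (n : ℕ) : U2 (x ^ n) := by
  induction n with
  | zero => simpa using U2_one
  | succ n ih => rw [pow_succ]; exact ih.mul hx

lemma U1.sq {x : Cub ℚ} (hx : U1 x) : U2 (x ^ 2) := by
  obtain ⟨z, rfl⟩ := hx
  refine ⟨tO ^ 2 * z + z ^ 2, ?_⟩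
  push_cast
  rw [coe_tO]
  linear_combination (-th * (z : Cub ℚ)) * th3q

lemma rho_eq' : rho = 1 + th ^ 2 * (th ^ 2 - 1) := by
  rw [rho_eq]; linear_combination (-th) * th3q

lemma U2_rho : U2 rho := ⟨tO ^ 2 - 1, by push_cast; rw [coe_tO]; exact rho_eq'⟩
lemma U2_ppi : U2 ppi := ⟨1, by push_cast; rw [ppi_eq]; ring⟩

lemma five_inv : ∃ f : O, (5 : Cub ℚ) * f = 1 := by
  obtain ⟨f, hf⟩ := unit2 2
  refine ⟨1 + 2 * f, ?_⟩
  have := congrArg Subtype.val hf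
  push_cast at this ⊢
  linear_combination this

lemma dbl_unit {x y : Cub ℚ} (h : On x y) (hx : U1 x) : ∃ t w, IsE1 (pt x y h + pt x y h) t w := by
  have hx0 : x ≠ 0 := by
    rintro rfl
    obtain ⟨y, -, h2⟩ := hx.inv
    simp at h2
  have hy0 : y ≠ 0 := fun h0 => hx0 (h.x_zero h0)
  obtain ⟨j, -, k, -, v, hv⟩ := lemmaA x y hx0 h
  have hj := (U2_ppi.pow j).mul (U2_rho.pow k)
  have hv1 : U1 v := by
    apply U1.of_sq
    apply hj.u1.of_mul
    rw [← hv]; exact hx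
  have hx2 : U2 x := by rw [hv]; exact hj.mul hv1.sq
  obtain ⟨z, hz⟩ := hx2
  have hth := th_ne
  -- the `y`-coordinate
  have hy : U1 ((y / th) ^ 2) := by
    have : (y / th) ^ 2 = x * (rho ^ 2 * 1 + th ^ 2 * (((z - tO ^ 2 + 1) ^ 2 : O) : Cub ℚ)) := by
      rw [div_pow, div_eq_iff (pow_ne_zero 2 hth)]
      have h' := h
      unfold On at h'
      rw [h']
      push_cast
      rw [coe_tO]
      have e1 : x - rho = th ^ 2 * ((z : Cub ℚ) - th ^ 2 + 1) := by
        rw [hz, rho_eq']; ring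
      have e2 : x ^ 2 - 2 * rho * x + 5 * rho = (th ^ 2 * ((z : Cub ℚ) - th ^ 2 + 1)) ^ 2 + rho ^ 2 * th ^ 2 := by
        rw [← e1]; linear_combination (-rho) * rho_mul
      rw [e2]; ring
    rw [this]
    refine hx.mul ?_
    obtain ⟨m, hm⟩ := (U2_rho.pow 2).u1
    rw [hm]
    refine ⟨m + tO * (z - tO ^ 2 + 1) ^ 2, ?_⟩
    push_cast
    rw [coe_tO]
    ring
  obtain ⟨η, hη, hη2⟩ := hy.inv
  obtain ⟨l, n, x₃, h₃, e, k₁, -, k₃, k₄, k₅, k₆⟩ := add_line h h (by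
    rintro ⟨-, h0⟩
    apply hy0
    have : 2 * y = 0 := by linear_combination h0
    exact (mul_eq_zero.1 this).resolve_left two_ne_zero)
  have k₆ := k₆ rfl
  rw [e]
  have hx3 : x₃ * (4 * y ^ 2) = (x ^ 2 - 5 * rho) ^ 2 := by
    apply mul_left_cancel₀ (pow_ne_zero 2 hx0)
    have h' := h
    unfold On at h'
    have : 2 * y * n = - x * (x ^ 2 - 5 * rho) := by
      linear_combination (-2 * y) * k₁ - x * k₆ + 2 * h'
    linear_combination 4 * y ^ 2 * k₅ + (2 * y * n - x * (x ^ 2 - 5 * rho)) * this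
  have hκ : ∃ κ, U1 κ ∧ x ^ 2 - 5 * rho = th ^ 2 * κ := by
    refine ⟨1 + th * ((tO * z ^ 2 + tO ^ 2 * z + 2 * tO ^ 2 - 5 * tO - tO ^ 3 : O) : Cub ℚ), ⟨_, rfl⟩, ?_⟩
    push_cast
    rw [coe_tO, hz, rho_eq']
    linear_combination (-th ^ 2 * (z : Cub ℚ) + th ^ 3 + 2 - 2 * th ^ 2) * th3q
  obtain ⟨κ, hκ1, hκ2⟩ := hκ
  obtain ⟨κ', ⟨m', hm'⟩, hκκ⟩ := hκ1.inv
  obtain ⟨m, hm⟩ := hy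
  apply e1_of_neg h₃ (tO ^ 3 * (1 + tO * m) * (1 + tO * m') ^ 2)
  push_cast
  rw [coe_tO, ← hm, ← hm']
  rw [hκ2] at hx3
  have h4 : x₃ * th ^ 4 * (y / th) ^ 2 = κ ^ 2 := by
    apply mul_right_cancel₀ (pow_ne_zero 4 hth)
    have h6 : (th : Cub ℚ) ^ 6 = 4 := by
      rw [show (th : Cub ℚ) ^ 6 = (th ^ 3) ^ 2 by ring, th3q]; norm_num
    have : x₃ * th ^ 4 * (y / th) ^ 2 * th ^ 4 = x₃ * th ^ 6 * y ^ 2 := by field_simp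
    rw [this, h6]
    linear_combination hx3
  linear_combination κ' ^ 2 * h4 + (κ * κ' + 1) * hκκ

lemma dbl_E1 (S : E.Point) : ∃ t w, IsE1 (S + S) t w := by
  rcases pt_cases S with rfl | ⟨x, y, h, rfl⟩
  · exact ⟨0, 0, Or.inl ⟨by simp, rfl, rfl⟩⟩
  by_cases hx : x = 0
  · have hS : pt x y h = T := by
      unfold T
      refine pt_congr _ _ hx ?_
      unfold On at h
      rw [hx] at h
      exact pow_eq_zero_iff two_ne_zero |>.1 (h.trans (by ring))
    rw [hS, TT]
    exact ⟨0, 0, Or.inl ⟨rfl, rfl, rfl⟩⟩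
  rcases K_dich x with ⟨z, hz⟩ | ⟨z, hz⟩
  · rcases O_dich z with ⟨z', hz'⟩ | ⟨z', hz'⟩
    · obtain ⟨x', y', h', e, e'⟩ := add_T h hx
      have : pt x y h + pt x y h = pt x' y' h' + pt x' y' h' := by
        rw [← e]
        linear_combination (norm := abel) -TT
      rw [this]
      obtain ⟨f, hf⟩ := five_inv
      obtain ⟨t, w, hE⟩ := e1_of_neg h' (z' * (1 + tO ^ 2) * f ^ 2) (by
        push_cast
        rw [coe_tO]
        have hx' : x = th * (z' : Cub ℚ) := by rw [hz, hz']; push_cast; rw [coe_tO]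
        rw [hx'] at e'
        linear_combination (1 + th ^ 2) * (f : Cub ℚ) ^ 2 * e' + 5 * (f : Cub ℚ) ^ 2 * rho_mul + (5 * (f : Cub ℚ) + 1) * hf)
      obtain ⟨z, w₃, h2⟩ := hE.dbl
      exact ⟨_, _, h2⟩
    · apply dbl_unit
      exact ⟨z', by rw [hz, hz']; push_cast; rw [coe_tO]⟩
  · obtain ⟨t, w, hE⟩ := e1_of_neg h z hz
    obtain ⟨z, w₃, h2⟩ := hE.dbl
    exact ⟨_, _, h2⟩

lemma P_E1 : ∃ (z w : O), IsE1 P (tO * (1 + tO ^ 2 + 2 * z)) w := by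
  obtain ⟨f, hf⟩ := five_inv
  have hr := rho_ne
  have hth := th_ne
  refine ⟨- 2 * (1 + tO ^ 2) * f, 2 * (1 + tO ^ 2) * f ^ 2, Or.inr ⟨_, _, onP, rfl, ?_, ?_, ?_, dvd_mul_right _ _⟩⟩
  · exact div_ne_zero five_rho_ne two_ne_zero
  · push_cast
    rw [coe_tO]
    linear_combination (-5 * th / 2 * (1 - 4 * (f : Cub ℚ))) * rho_mul + 10 * th * hf
  · push_cast
    rw [coe_tO]
    linear_combination (5 * (f : Cub ℚ) ^ 2) * rho_mul + (5 * (f : Cub ℚ) + 1) * hf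

lemma T_not_E1 {t w : O} (h : IsE1 T t w) : False := by
  rcases h with ⟨h0, -⟩ | ⟨x, y, h, e, hy, -⟩
  · exact pt_ne_zero _ h0
  · unfold T at e
    exact hy (pt_inj e).2.symm

lemma half_E1 (S : E.Point) : ∃ t w, IsE1 S t w ∨ IsE1 (S + T) t w := by
  obtain ⟨S', h⟩ := dec_all S
  obtain ⟨t, w, h'⟩ := dbl_E1 S'
  obtain ⟨z, wP, hP⟩ := P_E1
  obtain ⟨z', w', hPS⟩ := hP.add h'
  rcases h with h | h | h | h
  · exact ⟨t, w, Or.inl (by rw [h]; exact h')⟩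
  · refine ⟨t, w, Or.inr ?_⟩
    have : S + T = S' + S' := by linear_combination (norm := abel) h + TT
    rw [this]; exact h'
  · exact ⟨_, _, Or.inl (by rw [h]; exact hPS)⟩
  · refine ⟨tO * (1 + tO ^ 2 + 2 * z) + t + 4 * z', w', Or.inr ?_⟩
    have : S + T = P + (S' + S') := by linear_combination (norm := abel) h + TT
    rw [this]; exact hPS

lemma half_E1' (S : E.Point) : ∃ S' t w, S + S = S' + S' ∧ IsE1 S' t w := by
  obtain ⟨t, w, h | h⟩ := half_E1 S
  · exact ⟨S, t, w, rfl, h⟩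
  · exact ⟨S + T, t, w, by linear_combination (norm := abel) -TT, h⟩

lemma claimC_aux (n : ℕ) : ∀ (R : E.Point) (t w : O), IsE1 R t w → R ≠ 0 → ¬ (2 : O) ^ n ∣ t →
    ∃ (k : ℕ) (z : O), t = 2 ^ k * (tO * (1 + tO ^ 2 + 2 * z)) := by
  induction n with
  | zero =>
    intro R t w _ _ h
    exact absurd (by simp) h
  | succ n ih =>
    intro R t w h hR hn
    obtain ⟨S₀, hS₀⟩ := dec_all R
    obtain ⟨S, s, ws, eS, hS⟩ := half_E1' S₀
    rw [eS] at hS₀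
    obtain ⟨z, w', h2⟩ := hS.dbl
    obtain ⟨zP, wP, hP⟩ := P_E1
    obtain ⟨z', w'', hPS⟩ := hP.add h2
    rcases hS₀ with e | e | e | e
    · have ht := h.unique (e ▸ h2)
      obtain ⟨k, y, hy⟩ := ih S s ws hS (by rintro rfl; apply hR; rw [e]; simp) (by
        rintro ⟨c, hc⟩
        apply hn
        refine ⟨c * (1 + 2 * z), ?_⟩
        rw [ht, hc]; ring)
      refine ⟨k + 1, y + z * (1 + tO ^ 2 + 2 * y), ?_⟩
      rw [ht, hy]; ring
    · exfalso
      obtain ⟨_, _, h5⟩ := h.add h2.neg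
      have : R + -(S + S) = T := by rw [e]; abel
      rw [this] at h5
      exact T_not_E1 h5
    · have ht := h.unique (e ▸ hPS)
      obtain ⟨s', hs'⟩ := hS.dvd
      refine ⟨0, zP + s' * (1 + 2 * z) + tO ^ 2 * z', ?_⟩
      rw [ht, hs']
      linear_combination (-2 * z') * tO3
    · exfalso
      obtain ⟨_, _, h5⟩ := h.add hPS.neg
      have : R + -(P + (S + S)) = T := by rw [e]; abel
      rw [this] at h5
      exact T_not_E1 h5

lemma claimC {R : E.Point} {t w : O} (h : IsE1 R t w) (hR : R ≠ 0) :
    ∃ (k : ℕ) (z : O), t = 2 ^ k * (tO * (1 + tO ^ 2 + 2 * z)) := by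
  obtain ⟨n, hn⟩ := O_arch t (h.t_ne hR)
  exact claimC_aux n R t w h hR hn

end Cub


namespace Cub

lemma near_P {x y : Cub ℚ} {g : O} (h : On x y) (hx : x = 5 * th / 2 - 4 * th * rho * (g : Cub ℚ)) :
    ∃ o : O, On x (5 * rho / 2 + 2 * (o : Cub ℚ)) := by
  obtain ⟨m, hm⟩ : ∃ m : O, (y - 5 * rho / 2) * (y - 5 * rho / 2 + 5 * rho) = 2 * (m : Cub ℚ) := by
    refine ⟨-75 * rO * g + 60 * rO ^ 2 * g ^ 2 * 2 - 64 * rO ^ 3 * g ^ 3 + 20 * rO ^ 2 * tO ^ 2 * g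
      - 16 * rO ^ 3 * tO ^ 2 * g ^ 2 - 10 * tO * rO ^ 2 * g, ?_⟩
    have h1 := h
    have h2 := onP
    unfold On at h1 h2
    rw [hx] at h1
    push_cast
    rw [coe_tO, coe_rO]
    generalize (g : Cub ℚ) = g at *
    linear_combination h1 - h2 + (-75 * rho * g + 120 * rho ^ 2 * g ^ 2 - 64 * rho ^ 3 * g ^ 3) * th3q
  have h5 : U1 (5 * rho) := by
    refine (U2.u1 ?_).mul U2_rho.u1
    refine ⟨2 * tO, ?_⟩
    push_cast
    rw [coe_tO]; linear_combination (-2) * th3q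
  have key : ∀ a b : O, U1 (b : Cub ℚ) → (a : Cub ℚ) * b = 2 * m → ∃ o : O, (a : Cub ℚ) = 2 * o := by
    intro a b hb hab
    obtain ⟨b', ⟨c, hc⟩, hbb⟩ := hb.inv
    refine ⟨m * (1 + tO * c), ?_⟩
    push_cast
    rw [coe_tO, ← hc]
    linear_combination b' * hab - a * hbb
  rcases K_dich (y - 5 * rho / 2) with ⟨z, hz⟩ | ⟨z, hz⟩
  · rw [hz] at hm
    rcases O_dich z with ⟨z', hz'⟩ | ⟨z', hz'⟩
    · obtain ⟨o, ho⟩ := key z (z + 5 * rO) (by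
        obtain ⟨f, hf⟩ := h5
        refine ⟨z' + f, ?_⟩
        rw [hz']
        push_cast
        rw [coe_tO, coe_rO, hf]; ring) (by push_cast; rw [coe_rO]; exact hm)
      refine ⟨o, ?_⟩
      rw [← ho, ← hz]
      convert h using 1
      ring
    · obtain ⟨o, ho⟩ := key (z + 5 * rO) z ⟨z', by rw [hz']; push_cast; rw [coe_tO]⟩
        (by push_cast; rw [coe_rO, mul_comm]; exact hm)
      refine ⟨-o, ?_⟩
      push_cast at ho ⊢
      rw [coe_rO, ← hz] at ho
      convert h.neg using 1
      linear_combination ho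
  · exfalso
    obtain ⟨f, hf⟩ := h5
    apply tO_not_unit (2 * m * tO * z ^ 2 - z * (1 + tO * f))
    apply Subtype.coe_injective
    push_cast
    rw [coe_tO]
    linear_combination (-(th * (z : Cub ℚ)) ^ 2) * hm +
      ((y - 5 * rho / 2) * (th * (z : Cub ℚ)) + 1 + 5 * rho * th * (z : Cub ℚ)) * hz + th * (z : Cub ℚ) * hf

lemma q_contra {g c z : O} {q : ℚ} {k : ℕ} (hq : (g : Cub ℚ) = (q : Cub ℚ))
    (h : 4 * tO * g * (1 + 2 * c) = 2 ^ k * (tO * (1 + tO ^ 2 + 2 * z))) : False := by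
  obtain ⟨c', hc'⟩ := unit2 c
  have h1 := congrArg Subtype.val h
  have h2 := congrArg Subtype.val hc'
  push_cast at h1 h2
  rw [coe_tO, hq] at h1
  have hth := th_ne
  have h3 : ((4 * q / 2 ^ k : ℚ) : Cub ℚ) = 1 + th ^ 2 + 2 * ((z + c' * (1 + tO ^ 2 + 2 * z) : O) : Cub ℚ) := by
    push_cast
    rw [coe_tO, div_eq_iff (pow_ne_zero k two_ne_zero)]
    apply mul_left_cancel₀ hth
    linear_combination (1 + 2 * (c' : Cub ℚ)) * h1 - 4 * th * (q : Cub ℚ) * h2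
  generalize z + c' * (1 + tO ^ 2 + 2 * z) = Z at h3
  apply O_c Z
  have := congrArg Cub.c h3
  rw [ratCast_c, pow_two] at this
  have e : (2 : Cub ℚ) * (Z : Cub ℚ) = Z + Z := by ring
  rw [e] at this
  simp at this
  linarith

lemma final_local {x y : Cub ℚ} {g : O} {q : ℚ} (hq : (g : Cub ℚ) = (q : Cub ℚ)) (h₀ : On x y)
    (hx : x = 5 * th / 2 - 4 * th * rho * (g : Cub ℚ)) : q = 0 := by
  by_contra hq0
  have hg0 : (g : Cub ℚ) ≠ 0 := by
    rw [hq]; exact_mod_cast hq0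
  have hr := rho_ne
  have hth := th_ne
  obtain ⟨o, h⟩ := near_P h₀ hx
  obtain ⟨f, hf⟩ := five_inv
  have hne : x ≠ 5 * th / 2 := by
    intro h0
    rw [h0] at hx
    have : 4 * th * rho * (g : Cub ℚ) = 0 := by linear_combination hx
    exact mul_ne_zero (mul_ne_zero (mul_ne_zero (by norm_num) hth) hr) hg0 this
  obtain ⟨l, n, x₃, h₃, e, k₁, k₂, k₃, k₄, k₅, -⟩ := add_line h onP.neg (fun h => hne h.1)
  -- slope
  obtain ⟨μ, hμ⟩ := unit2 (2 + o * (1 + tO ^ 2) * f)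
  have hμc := congrArg Subtype.val hμ
  push_cast at hμc
  rw [coe_tO] at hμc
  set m : O := -4 * tO * g * (1 + 2 * μ) with hm
  have hmc : (m : Cub ℚ) = -4 * th * (g : Cub ℚ) * (1 + 2 * (μ : Cub ℚ)) := by rw [hm]; push_cast; rw [coe_tO]
  have hl : l * (4 * th * (g : Cub ℚ)) = -(5 + 2 * (o : Cub ℚ) * (1 + th ^ 2) * (f : Cub ℚ)) := by
    apply mul_left_cancel₀ hr
    linear_combination k₁ - k₂ + l * hx + 2 * (o : Cub ℚ) * f * rho_mul + 2 * (o : Cub ℚ) * hf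
  have hlm : l * (m : Cub ℚ) = 1 := by
    rw [hmc]
    linear_combination (-(1 + 2 * (μ : Cub ℚ))) * hl + hμc
  have hl0 : l ≠ 0 := left_ne_zero_of_mul_eq_one hlm
  set a : O := 8 * tO ^ 2 * g ^ 2 * (1 + 2 * μ) ^ 2 * (2 * rO - 5 * tO + 4 * tO * rO * g) with ha
  set b : O := 8 * tO ^ 2 * g ^ 2 * (1 + 2 * μ) ^ 2 * (2 * rO + 4 * tO * rO * g) - 60 * g ^ 2 * (1 + 2 * μ) ^ 2 * 2
    + 80 * g ^ 3 * (1 + 2 * μ) ^ 3 * 2 * rO  with hb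
  have hac : 2 * (a : Cub ℚ) = (m : Cub ℚ) ^ 2 * (2 * rho - (5 * th - 4 * th * rho * (g : Cub ℚ))) := by
    rw [hmc, ha]; push_cast; rw [coe_tO, coe_rO]; ring
  have hbc : 2 * (b : Cub ℚ) = (m : Cub ℚ) ^ 2 * (2 * rho - (15 * th / 2 - 4 * th * rho * (g : Cub ℚ))) - (m : Cub ℚ) ^ 3 * (5 * rho / 2) := by
    rw [hmc, hb]; push_cast; rw [coe_tO, coe_rO]
    generalize (g : Cub ℚ) = g
    generalize (μ : Cub ℚ) = μ
    linear_combination (120 * g ^ 2 * (1 + 2 * μ) ^ 2 - 160 * rho * g ^ 3 * (1 + 2 * μ) ^ 3) * th3q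
  have hx3 : x₃ = l ^ 2 * (1 + 2 * a) := by
    rw [hac]
    linear_combination k₃ - hx - (l * m + 1) * (2 * rho - (5 * th - 4 * th * rho * (g : Cub ℚ))) * hlm
  have hy3 : l * x₃ + n = l ^ 3 * (1 + 2 * b) := by
    rw [hbc]
    have h1 : n = - (5 * rho / 2) - l * (5 * th / 2) := by linear_combination -k₂
    rw [h1, hx3, hac]
    have h2 : l ^ 2 * (m : Cub ℚ) ^ 2 = 1 := by rw [← mul_pow, hlm]; ring
    have h3 : l ^ 3 * (m : Cub ℚ) ^ 3 = 1 := by rw [← mul_pow, hlm]; ring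
    linear_combination l * (5 * th / 2) * h2 + 5 * rho / 2 * h3
  obtain ⟨b', hb'⟩ := unit2 b
  have hbb := congrArg Subtype.val hb'
  push_cast at hbb
  have hE : IsE1 (pt x₃ (-(l * x₃ + n)) h₃) (4 * tO * g * ((1 + 2 * μ) * (1 + 2 * a) * (1 + 2 * b')))
      (- m ^ 3 * (1 + 2 * b')) := by
    right
    refine ⟨_, _, h₃, rfl, ?_, ?_, ?_, ?_⟩
    · rw [hy3]
      exact neg_ne_zero.2 (mul_ne_zero (pow_ne_zero 3 hl0) (left_ne_zero_of_mul_eq_one hbb))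
    · push_cast
      rw [hy3, hx3, coe_tO]
      have : 4 * th * (g : Cub ℚ) * ((1 + 2 * (μ : Cub ℚ)) * (1 + 2 * (a : Cub ℚ)) * (1 + 2 * (b' : Cub ℚ))) =
          - (m : Cub ℚ) * (1 + 2 * (a : Cub ℚ)) * (1 + 2 * (b' : Cub ℚ)) := by
        rw [hmc]; ring
      rw [this]
      linear_combination (-l ^ 2 * (1 + 2 * (a : Cub ℚ))) * (hbb + (1 + 2 * (b : Cub ℚ)) * (1 + 2 * b') * hlm)
    · push_cast
      rw [hy3]
      have h3 : l ^ 3 * (m : Cub ℚ) ^ 3 = 1 := by rw [← mul_pow, hlm]; ring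
      linear_combination hbb + (1 + 2 * (b : Cub ℚ)) * (1 + 2 * b') * h3
    · exact ⟨4 * g * ((1 + 2 * μ) * (1 + 2 * a) * (1 + 2 * b')), by ring⟩
  obtain ⟨k, z, hk⟩ := claimC hE (pt_ne_zero _)
  refine q_contra (c := μ + a + b' + 2 * (μ * a + μ * b' + a * b') + 4 * μ * a * b') (z := z) (k := k) hq ?_
  rw [← hk]; ring

lemma on_Q {A B W F : Cub ℚ} (hB : B ≠ 0) (hw : th ^ 2 * B ^ 2 - A = (1 + th ^ 2) * W ^ 2)
    (he : A ^ 2 + 4 * B ^ 4 = 5 * F ^ 2) :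
    On (rho * (th ^ 2 * B ^ 2 - A) / (th ^ 2 * B ^ 2)) (5 * rho * W * F / (2 * B ^ 3)) := by
  have hth := th_ne
  have h6 : (th : Cub ℚ) ^ 6 = 4 := by
    rw [show (th : Cub ℚ) ^ 6 = (th ^ 3) ^ 2 by ring, th3q]; norm_num
  have hd : th ^ 2 * B ^ 2 ≠ 0 := mul_ne_zero (pow_ne_zero 2 hth) (pow_ne_zero 2 hB)
  unfold On
  obtain ⟨X, hX⟩ : ∃ X, X = rho * (th ^ 2 * B ^ 2 - A) / (th ^ 2 * B ^ 2) := ⟨_, rfl⟩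
  rw [← hX]
  rw [eq_div_iff hd] at hX
  have h1 : X * (th ^ 2 * B ^ 2) = 5 * W ^ 2 := by
    rw [hX, hw]; linear_combination W ^ 2 * rho_mul
  have h2 : (X ^ 2 - 2 * rho * X + 5 * rho) * (th ^ 2 * B ^ 2) ^ 2 = 5 * rho ^ 2 * F ^ 2 := by
    have h3 : (X - rho) * (th ^ 2 * B ^ 2) = - rho * A := by linear_combination hX
    have h4 : X ^ 2 - 2 * rho * X + 5 * rho = (X - rho) ^ 2 + rho ^ 2 * th ^ 2 := by
      linear_combination (-rho) * rho_mul
    rw [h4]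
    linear_combination ((X - rho) * (th ^ 2 * B ^ 2) - rho * A) * h3 + rho ^ 2 * B ^ 4 * h6 + rho ^ 2 * he
  rw [div_pow, div_eq_iff (pow_ne_zero 2 (mul_ne_zero two_ne_zero (pow_ne_zero 3 hB)))]
  linear_combination (-5 * rho ^ 2 * F ^ 2) * h1 - X * (th ^ 2 * B ^ 2) * h2 + X * (X ^ 2 - 2 * rho * X + 5 * rho) * B ^ 6 * h6

lemma x_Q {A B k : Cub ℚ} (hB : B ≠ 0) (hA : A = 8 * k - B ^ 2) :
    rho * (th ^ 2 * B ^ 2 - A) / (th ^ 2 * B ^ 2) = 5 * th / 2 - 4 * th * rho * (k / B ^ 2) := by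
  rw [div_eq_iff (mul_ne_zero (pow_ne_zero 2 th_ne) (pow_ne_zero 2 hB)), hA]
  have h1 : k / B ^ 2 * B ^ 2 = k := by field_simp
  generalize k / B ^ 2 = u at h1
  rw [← h1]
  linear_combination B ^ 2 * rho_mul + (4 * rho * u - 5 / 2) * B ^ 2 * th3q

lemma tau_final (τ z : ℚ) (h : z ^ 2 = (τ ^ 2 + 1) * (1 - 2 * τ ^ 3)) : τ = 0 ∨ τ = -1 / 2 := by
  rcases tau_reduce τ z h with h0 | ⟨a, β, e, w, hτ, hβ, ha, he, hw⟩
  · exact Or.inl h0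
  right
  have hβ8 : β ^ 2 % 8 = 1 := by
    have : β % 8 = 1 ∨ β % 8 = 3 ∨ β % 8 = 5 ∨ β % 8 = 7 := by omega
    rcases this with h | h | h | h <;> simp [pow_two, Int.mul_emod, h]
  obtain ⟨k, hk⟩ : ∃ k : ℤ, a = 8 * k - β ^ 2 := ⟨(a + β ^ 2) / 8, by omega⟩
  have hβ0 : (β : ℚ) ≠ 0 := by
    have : β ≠ 0 := by rintro rfl; simp at hβ
    exact_mod_cast this
  have hβK : (β : Cub ℚ) ≠ 0 := by
    have : ((β : ℚ) : Cub ℚ) ≠ 0 := by exact_mod_cast hβ0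
    simpa using this
  have hth := th_ne
  have hr := rho_ne
  have hw' : th ^ 2 * (β : Cub ℚ) ^ 2 - (a : Cub ℚ) = (1 + th ^ 2) * (io w) ^ 2 := by
    have h1 := congrArg io hw
    rw [map_mul, map_pow, io_pp, ppi_eq] at h1
    rw [← h1]
    ext <;> simp [pow_two]
  have he' : (a : Cub ℚ) ^ 2 + 4 * (β : Cub ℚ) ^ 4 = 5 * (e : Cub ℚ) ^ 2 := by exact_mod_cast congrArg (Int.cast : ℤ → Cub ℚ) he
  have hg : (k : Cub ℚ) / (β : Cub ℚ) ^ 2 ∈ O := by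
    refine mem_O.2 ⟨(k : Cub ℤ), (β : Cub ℤ) ^ 2, ?_, ?_⟩
    · have : ((β : Cub ℤ) ^ 2).a = β ^ 2 := by simp [pow_two]
      rw [this]; omega
    · rw [map_pow, map_intCast, map_intCast]; field_simp
  have hon : On (rho * (th ^ 2 * (β : Cub ℚ) ^ 2 - (a : Cub ℚ)) / (th ^ 2 * (β : Cub ℚ) ^ 2)) (5 * rho * io w * (e : Cub ℚ) / (2 * (β : Cub ℚ) ^ 3)) := by
    exact on_Q hβK hw' he'
  have := final_local (g := ⟨_, hg⟩) (q := k / β ^ 2) (by push_cast; rfl) hon (by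
    have hkc : (a : Cub ℚ) = 8 * k - β ^ 2 := by exact_mod_cast congrArg (Int.cast : ℤ → Cub ℚ) hk
    exact x_Q hβK hkc)
  have hk0 : (k : ℚ) = 0 := by
    rcases div_eq_zero_iff.1 this with h | h
    · exact h
    · exact absurd h (pow_ne_zero 2 hβ0)
  have : (a : ℚ) = - β ^ 2 := by rw [hk]; push_cast; rw [hk0]; ring
  rw [hτ, this]
  field_simp

end Cub


lemma no_root (c : ℚ) : c ^ 3 + 6 * c ^ 2 - 24 ≠ 0 := by
  intro h
  have hd : (c.den : ℚ) ≠ 0 := by exact_mod_cast c.den_nz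
  have hc : c * c.den = c.num := Rat.mul_den_eq_num c
  have h1 : (c.num : ℚ) ^ 3 + 6 * (c.num : ℚ) ^ 2 * c.den - 24 * (c.den : ℚ) ^ 3 = 0 := by
    rw [← hc]; linear_combination (c.den : ℚ) ^ 3 * h
  have h2 : c.num ^ 3 + 6 * c.num ^ 2 * (c.den : ℤ) - 24 * (c.den : ℤ) ^ 3 = 0 := by exact_mod_cast h1
  have hp : Prime (3 : ℤ) := Int.prime_three
  have h3 : (3 : ℤ) ∣ c.num := by
    apply hp.dvd_of_dvd_pow (n := 3)
    exact ⟨8 * (c.den : ℤ) ^ 3 - 2 * c.num ^ 2 * c.den, by linear_combination h2⟩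
  obtain ⟨m, hm⟩ := h3
  have h4 : (3 : ℤ) ∣ c.den := by
    apply hp.dvd_of_dvd_pow (n := 3)
    rw [hm] at h2
    have : 9 * m ^ 3 + 18 * m ^ 2 * (c.den : ℤ) = 8 * (c.den : ℤ) ^ 3 := by linarith
    exact ⟨3 * (c.den : ℤ) ^ 3 - 3 * m ^ 3 - 6 * m ^ 2 * c.den, by linear_combination this⟩
  have h5 := c.reduced
  have h6 : 3 ∣ c.num.natAbs := by
    rw [hm, Int.natAbs_mul]; exact dvd_mul_right _ _
  have h7 : 3 ∣ c.den := by exact_mod_cast h4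
  have := Nat.dvd_gcd h6 h7
  rw [Nat.Coprime] at h5
  rw [h5] at this
  norm_num at this

theorem curve_B4_aux (c e x : ℚ) (hX : x ^ 2 = 9 * c ^ 2 - 12 * c + 12 * e + 24)
    (hF : 3 * c ^ 2 * (e ^ 2 - 4) + 4 * ((e + 2 + c) ^ 3 - 12 * (e + 2 + c) + 20) = 0) :
    c = -17 / 3 ∧ x ^ 2 = 400 := by
  obtain ⟨p, hp⟩ : ∃ p, p = e * c + 4 + 2 * c + 4 * e := ⟨_, rfl⟩
  obtain ⟨q, hq⟩ : ∃ q, q = c ^ 2 + 2 * c + 2 * e - 4 := ⟨_, rfl⟩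
  have hconic : p ^ 2 + 2 * (e ^ 2 + 4 * e + 2 * c) * q = 0 := by
    rw [hp, hq]; linear_combination hF
  have hq0 : q ≠ 0 := by
    intro h0
    rw [h0] at hconic hq
    have hp0 : p = 0 := pow_eq_zero_iff two_ne_zero |>.1 (by linear_combination hconic)
    rw [hp0] at hp
    apply no_root c
    linear_combination 2 * hp - (c + 4) * hq
  obtain ⟨τ, hτ⟩ : ∃ τ, τ = p / q := ⟨_, rfl⟩
  have hpq : p = τ * q := by rw [hτ]; field_simp
  have r1 : 3 * c * τ ^ 2 = 2 * (τ ^ 3 - 2) := by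
    apply mul_right_cancel₀ (pow_ne_zero 3 hq0)
    have : 3 * c * p ^ 2 * q - 2 * p ^ 3 + 4 * q ^ 3 = 0 := by
      rw [hp, hq]; linear_combination (-24 + 6 * c ^ 2 + c ^ 3) * hF
    rw [hpq] at this
    linear_combination this
  have r2 : 3 * e * τ + 4 + 6 * τ + 6 * τ ^ 2 + τ ^ 3 = 0 := by
    apply mul_right_cancel₀ (pow_ne_zero 3 hq0)
    have : 3 * e * p * q ^ 2 + 4 * q ^ 3 + 6 * p * q ^ 2 + 6 * p ^ 2 * q + p ^ 3 = 0 := by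
      rw [hp, hq]; linear_combination (-12 + 6 * c + 6 * c ^ 2 + c ^ 3 + 12 * e + 3 * e * c) * hF
    rw [hpq] at this
    linear_combination this
  have hτ0 : τ ≠ 0 := by
    rintro rfl
    norm_num at r1
  have hz : (x * τ ^ 2 / 4) ^ 2 = (τ ^ 2 + 1) * (1 - 2 * τ ^ 3) := by
    linear_combination τ ^ 4 / 16 * hX + (3 * c * τ ^ 2 + 2 * (τ ^ 3 - 2) - 4 * τ ^ 2) / 16 * r1 + τ ^ 3 / 4 * r2
  rcases Cub.tau_final τ _ hz with h0 | h0
  · exact absurd h0 hτ0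
  · rw [h0] at r1 hz
    constructor
    · linarith
    · linarith

/-- The rational points of the curve `ℬ₄ : x⁶ − p(t)x⁴ + q(t)x² + r(t) = 0`, where
`p(t) = 2(4t − 9)(4t + 3)`, `q(t) = 256t⁴ − 1792t³ − 2592t² − 432t − 1431` and
`r(t) = 16(16t² − 8t + 5)(64t³ + 144t² + 108t + 135)`, are exactly `(−5, ±20)`. -/
theorem curve_B4_points (t x : ℚ) :
    x ^ 6 - (2 * (4 * t - 9) * (4 * t + 3)) * x ^ 4 +
      (256 * t ^ 4 - 1792 * t ^ 3 - 2592 * t ^ 2 - 432 * t - 1431) * x ^ 2 +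
      16 * (16 * t ^ 2 - 8 * t + 5) * (64 * t ^ 3 + 144 * t ^ 2 + 108 * t + 135) = 0 ↔
    (t = -5 ∧ x = 20) ∨ (t = -5 ∧ x = -20) := by
  constructor
  · intro h
    obtain ⟨hc, hx⟩ := curve_B4_aux ((4 * t + 3) / 3) ((x ^ 2 - (4 * t + 3) ^ 2 + 4 * (4 * t + 3)) / 12 - 2) x
      (by ring) (by linear_combination h / 432)
    have ht : t = -5 := by linarith
    have h2 : (x - 20) * (x + 20) = 0 := by linear_combination hx
    rcases mul_eq_zero.1 h2 with h3 | h3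
    · exact Or.inl ⟨ht, by linarith⟩
    · exact Or.inr ⟨ht, by linarith⟩
  · rintro (⟨rfl, rfl⟩ | ⟨rfl, rfl⟩) <;> norm_num
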